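/- For every integer k ≥ 1, every (theta, triangle, S_{k,k,k})-free graph G has treewidth at most 2·(R(3, 4k−1))^3 − 1, where R(3, 4k−1) is the Ramsey number. -/

import Mathlib

open SimpleGraph

variable {V : Type} [Fintype V] [DecidableEq V]

/-- `p` is a chordless (induced) path in `G`: a path such that the only edges of `G`
between its vertices are the edges of the path. -/
def IsInducedPathW (G : SimpleGraph V) {a b : V} (p : G.Walk a b) : Prop :=
  p.IsPath ∧ ∀ u v : V, u ∈ p.support → v ∈ p.support → G.Adj u v → p.toSubgraph.Adj u v

/-- A hole of length `n` in `G`: an induced (chordless) cycle of length `n ≥ 4`,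
given by an injection of `ZMod n` into `G` whose adjacencies are exactly the consecutive ones. -/
def IsHoleEmb (G : SimpleGraph V) (n : ℕ) (f : ZMod n → V) : Prop :=
  4 ≤ n ∧ Function.Injective f ∧
    ∀ i j : ZMod n, G.Adj (f i) (f j) ↔ (j = i + 1 ∨ i = j + 1)

/-- `G` contains an even hole (induced even cycle of length at least 4). -/
def ContainsEvenHole (G : SimpleGraph V) : Prop :=
  ∃ (n : ℕ) (f : ZMod n → V), IsHoleEmb G n f ∧ Even n

/-- `G` contains a square (hole of length 4). -/
def ContainsSquare (G : SimpleGraph V) : Prop :=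
  ∃ f : ZMod 4 → V, IsHoleEmb G 4 f

/-- `G` contains a theta as an induced subgraph: three internally vertex-disjoint chordless
paths from `a` to `b`, each of length at least 2, with no edges between the paths other than
those incident to `a` or `b` specified by the paths. -/
def ContainsTheta (G : SimpleGraph V) : Prop :=
  ∃ (a b : V) (p₁ p₂ p₃ : G.Walk a b),
    (IsInducedPathW G p₁ ∧ IsInducedPathW G p₂ ∧ IsInducedPathW G p₃) ∧
    (2 ≤ p₁.length ∧ 2 ≤ p₂.length ∧ 2 ≤ p₃.length) ∧
    (∀ w : V, ((w ∈ p₁.support ∧ w ∈ p₂.support) ∨ (w ∈ p₁.support ∧ w ∈ p₃.support) ∨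
          (w ∈ p₂.support ∧ w ∈ p₃.support)) → (w = a ∨ w = b)) ∧
    (∀ u w : V, u ≠ a → u ≠ b → w ≠ a → w ≠ b →
      ((u ∈ p₁.support ∧ w ∈ p₂.support) ∨ (u ∈ p₁.support ∧ w ∈ p₃.support) ∨
       (u ∈ p₂.support ∧ w ∈ p₃.support)) → ¬G.Adj u w)

/-- `G` contains a prism as an induced subgraph. -/
def ContainsPrism (G : SimpleGraph V) : Prop :=
  ∃ (a₁ b₁ a₂ b₂ a₃ b₃ : V) (p₁ : G.Walk a₁ b₁) (p₂ : G.Walk a₂ b₂) (p₃ : G.Walk a₃ b₃),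
    (IsInducedPathW G p₁ ∧ IsInducedPathW G p₂ ∧ IsInducedPathW G p₃) ∧
    (1 ≤ p₁.length ∧ 1 ≤ p₂.length ∧ 1 ≤ p₃.length) ∧
    (G.Adj a₁ a₂ ∧ G.Adj a₂ a₃ ∧ G.Adj a₁ a₃) ∧
    (G.Adj b₁ b₂ ∧ G.Adj b₂ b₃ ∧ G.Adj b₁ b₃) ∧
    (∀ w : V, ¬(w ∈ p₁.support ∧ w ∈ p₂.support) ∧ ¬(w ∈ p₁.support ∧ w ∈ p₃.support) ∧
          ¬(w ∈ p₂.support ∧ w ∈ p₃.support)) ∧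
    (∀ u w : V, u ∈ p₁.support → w ∈ p₂.support → G.Adj u w →
      (u = a₁ ∧ w = a₂) ∨ (u = b₁ ∧ w = b₂)) ∧
    (∀ u w : V, u ∈ p₁.support → w ∈ p₃.support → G.Adj u w →
      (u = a₁ ∧ w = a₃) ∨ (u = b₁ ∧ w = b₃)) ∧
    (∀ u w : V, u ∈ p₂.support → w ∈ p₃.support → G.Adj u w →
      (u = a₂ ∧ w = a₃) ∨ (u = b₂ ∧ w = b₃))

/-- `G` contains a pyramid as an induced subgraph. -/
def ContainsPyramid (G : SimpleGraph V) : Prop :=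
  ∃ (a b₁ b₂ b₃ : V) (p₁ : G.Walk a b₁) (p₂ : G.Walk a b₂) (p₃ : G.Walk a b₃),
    (IsInducedPathW G p₁ ∧ IsInducedPathW G p₂ ∧ IsInducedPathW G p₃) ∧
    (1 ≤ p₁.length ∧ 1 ≤ p₂.length ∧ 1 ≤ p₃.length) ∧
    ((2 ≤ p₁.length ∧ 2 ≤ p₂.length) ∨ (2 ≤ p₁.length ∧ 2 ≤ p₃.length) ∨
     (2 ≤ p₂.length ∧ 2 ≤ p₃.length)) ∧
    (G.Adj b₁ b₂ ∧ G.Adj b₂ b₃ ∧ G.Adj b₁ b₃) ∧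
    (∀ w : V, ((w ∈ p₁.support ∧ w ∈ p₂.support) ∨ (w ∈ p₁.support ∧ w ∈ p₃.support) ∨
          (w ∈ p₂.support ∧ w ∈ p₃.support)) → w = a) ∧
    (∀ u w : V, u ∈ p₁.support → w ∈ p₂.support → u ≠ a → w ≠ a → G.Adj u w →
      u = b₁ ∧ w = b₂) ∧
    (∀ u w : V, u ∈ p₁.support → w ∈ p₃.support → u ≠ a → w ≠ a → G.Adj u w →
      u = b₁ ∧ w = b₃) ∧
    (∀ u w : V, u ∈ p₂.support → w ∈ p₃.support → u ≠ a → w ≠ a → G.Adj u w →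
      u = b₂ ∧ w = b₃)

/-- `G` contains the cube as an induced subgraph: a hole of length 6 together with
two non-adjacent vertices `u, v` outside it, `u` adjacent to the even positions and
`v` adjacent to the odd positions. -/
def ContainsCube (G : SimpleGraph V) : Prop :=
  ∃ (f : ZMod 6 → V) (u v : V), IsHoleEmb G 6 f ∧
    u ∉ Set.range f ∧ v ∉ Set.range f ∧ ¬G.Adj u v ∧
    (∀ m : ZMod 6, G.Adj u (f m) ↔ (m = 0 ∨ m = 2 ∨ m = 4)) ∧
    (∀ m : ZMod 6, G.Adj v (f m) ↔ (m = 1 ∨ m = 3 ∨ m = 5))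

/-- `G` contains an even wheel: a hole plus a vertex outside it having at least 3 and
an even number of neighbors on the hole. -/
def ContainsEvenWheel (G : SimpleGraph V) : Prop :=
  ∃ (n : ℕ) (f : ZMod n → V) (u : V), IsHoleEmb G n f ∧ u ∉ Set.range f ∧
    3 ≤ {m : ZMod n | G.Adj u (f m)}.ncard ∧ Even {m : ZMod n | G.Adj u (f m)}.ncard

/-- `G` contains a butterfly: a wheel `(H,v)` with `N_H(v) = {a,b,c,d}`,
`ab, cd ∈ E(G)` and `bc, da ∉ E(G)`. -/
def ContainsButterfly (G : SimpleGraph V) : Prop :=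
  ∃ (n : ℕ) (f : ZMod n → V) (u : V), IsHoleEmb G n f ∧ u ∉ Set.range f ∧
    ∃ i j : ZMod n, i ≠ j ∧ i ≠ j + 1 ∧ i + 1 ≠ j ∧ i + 1 ≠ j + 1 ∧
      ¬G.Adj (f (i + 1)) (f j) ∧ ¬G.Adj (f (j + 1)) (f i) ∧
      (∀ m : ZMod n, G.Adj u (f m) ↔ (m = i ∨ m = i + 1 ∨ m = j ∨ m = j + 1))

/-- A 2-wheel in `G`: a hole `f` together with two distinct centers `u, v` outside the hole,
each having at least three neighbors on the hole. -/
def Is2WheelCfg (G : SimpleGraph V) (n : ℕ) (f : ZMod n → V) (u v : V) : Prop :=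
  IsHoleEmb G n f ∧ u ≠ v ∧ u ∉ Set.range f ∧ v ∉ Set.range f ∧
  3 ≤ {m : ZMod n | G.Adj u (f m)}.ncard ∧ 3 ≤ {m : ZMod n | G.Adj v (f m)}.ncard

/-- The 2-wheel `(f, {u,v})` is nested: the hole splits at `f i` and `f (i+d)` into two arcs,
with all neighbors of `u` on one arc and all neighbors of `v` on the other. -/
def NestedCfg (G : SimpleGraph V) (n : ℕ) (f : ZMod n → V) (u v : V) : Prop :=
  ∃ (i : ZMod n) (d : ℕ), 1 ≤ d ∧ d < n ∧
    (∀ m : ZMod n, G.Adj u (f m) → ∃ e : ℕ, e ≤ d ∧ m = i + (e : ZMod n)) ∧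
    (∀ m : ZMod n, G.Adj v (f m) → ∃ e : ℕ, e ≤ n - d ∧ m = i + (d : ZMod n) + (e : ZMod n))

/-- The 2-wheel `(f, {u,v})` is the cube. -/
def CubeCfg (G : SimpleGraph V) (n : ℕ) (f : ZMod n → V) (u v : V) : Prop :=
  n = 6 ∧ ∃ i : ZMod n,
    (∀ m : ZMod n, G.Adj u (f m) ↔ (m = i ∨ m = i + 2 ∨ m = i + 4)) ∧
    (∀ m : ZMod n, G.Adj v (f m) ↔ (m = i + 1 ∨ m = i + 3 ∨ m = i + 5))

/-- The 2-wheel `(f, {u,v})` is a cousin wheel: `N_H(u) = {h₁,h₂,h₃}` and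
`N_H(v) = {h₂,h₃,h₄}` for four consecutive vertices of the hole (or with `u, v` swapped). -/
def CousinCfg (G : SimpleGraph V) (n : ℕ) (f : ZMod n → V) (u v : V) : Prop :=
  (∃ i : ZMod n,
    (∀ m : ZMod n, G.Adj u (f m) ↔ (m = i ∨ m = i + 1 ∨ m = i + 2)) ∧
    (∀ m : ZMod n, G.Adj v (f m) ↔ (m = i + 1 ∨ m = i + 2 ∨ m = i + 3))) ∨
  (∃ i : ZMod n,
    (∀ m : ZMod n, G.Adj v (f m) ↔ (m = i ∨ m = i + 1 ∨ m = i + 2)) ∧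
    (∀ m : ZMod n, G.Adj u (f m) ↔ (m = i + 1 ∨ m = i + 2 ∨ m = i + 3)))

/-- A `u`-sector of the hole `f`: a subpath from `f i` to `f (i+d)` (`1 ≤ d < n`)
whose two ends are adjacent to `u` and whose internal vertices are not. -/
def IsSector (G : SimpleGraph V) (n : ℕ) (f : ZMod n → V) (u : V) (i : ZMod n) (d : ℕ) : Prop :=
  1 ≤ d ∧ d < n ∧ G.Adj u (f i) ∧ G.Adj u (f (i + (d : ZMod n))) ∧
    ∀ m : ℕ, 0 < m → m < d → ¬G.Adj u (f (i + (m : ZMod n)))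

/-- The class 𝒞: (theta, prism, pyramid, butterfly)-free graphs in which every 2-wheel
with non-adjacent centers is a nested wheel or a cousin wheel. -/
def InClassC (G : SimpleGraph V) : Prop :=
  ¬ContainsTheta G ∧ ¬ContainsPrism G ∧ ¬ContainsPyramid G ∧ ¬ContainsButterfly G ∧
  ∀ (n : ℕ) (f : ZMod n → V) (u v : V), Is2WheelCfg G n f u v → ¬G.Adj u v →
    (NestedCfg G n f u v ∨ CousinCfg G n f u v)

/-- `G` contains `S_{k,k,k}` as an induced subgraph: a root `r` and three legs of `k` edges
each, with no other adjacencies among these vertices. -/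
def ContainsSpider (G : SimpleGraph V) (k : ℕ) : Prop :=
  ∃ (r : V) (f : Fin 3 → Fin k → V),
    (∀ (j : Fin 3) (m : Fin k), f j m ≠ r) ∧
    (∀ (j₁ : Fin 3) (m₁ : Fin k) (j₂ : Fin 3) (m₂ : Fin k),
      f j₁ m₁ = f j₂ m₂ → j₁ = j₂ ∧ m₁ = m₂) ∧
    (∀ (j : Fin 3) (m : Fin k), G.Adj r (f j m) ↔ (m : ℕ) = 0) ∧
    (∀ (j₁ : Fin 3) (m₁ : Fin k) (j₂ : Fin 3) (m₂ : Fin k),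
      G.Adj (f j₁ m₁) (f j₂ m₂) ↔
        (j₁ = j₂ ∧ ((m₁ : ℕ) + 1 = (m₂ : ℕ) ∨ (m₂ : ℕ) + 1 = (m₁ : ℕ))))

/-- A `k`-span-wheel in `G`: a hole `f` of length `n`, with `x = f 0` and `y = f p`
non-adjacent, the two paths `P_A = f 0, f 1, …, f p` and `P_B = f 0, f (n-1), …, f p`,
and centers `c 0, …, c (k-1)` outside the hole such that `{c i} ∪ {x,y}` is independent,
every center has at least three neighbors on the hole and neighbors in the interiors of
both `P_A` and `P_B`, and the neighbors of the centers appear along both `P_A` and `P_B`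
(from `x` to `y`) in the order of the centers. -/
def IsSpanWheel (G : SimpleGraph V) (k n p : ℕ) (f : ZMod n → V) (c : Fin k → V) : Prop :=
  IsHoleEmb G n f ∧
  2 ≤ p ∧ p ≤ n - 2 ∧
  ¬G.Adj (f 0) (f (p : ZMod n)) ∧
  Function.Injective c ∧
  (∀ i : Fin k, c i ∉ Set.range f) ∧
  (∀ i j : Fin k, i ≠ j → ¬G.Adj (c i) (c j)) ∧
  (∀ i : Fin k, ¬G.Adj (c i) (f 0)) ∧
  (∀ i : Fin k, ¬G.Adj (c i) (f (p : ZMod n))) ∧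
  (∀ i : Fin k, 3 ≤ {m : ZMod n | G.Adj (c i) (f m)}.ncard) ∧
  (∀ i : Fin k, ∃ a : ℕ, 0 < a ∧ a < p ∧ G.Adj (c i) (f (a : ZMod n))) ∧
  (∀ i : Fin k, ∃ b : ℕ, p < b ∧ b < n ∧ G.Adj (c i) (f (b : ZMod n))) ∧
  (∀ i j : Fin k, i < j → ∀ a₁ a₂ : ℕ, a₁ ≤ p → a₂ ≤ p →
    G.Adj (c i) (f (a₁ : ZMod n)) → G.Adj (c j) (f (a₂ : ZMod n)) → a₁ ≤ a₂) ∧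
  (∀ i j : Fin k, i < j → ∀ b₁ b₂ : ℕ, p ≤ b₁ → b₁ ≤ n → p ≤ b₂ → b₂ ≤ n →
    G.Adj (c i) (f (b₁ : ZMod n)) → G.Adj (c j) (f (b₂ : ZMod n)) → b₂ ≤ b₁)

/-- `X` separates `s` from `t` in `G`: neither is in `X` and every walk from `s` to `t`
meets `X`. -/
def Separates (G : SimpleGraph V) (X : Set V) (s t : V) : Prop :=
  s ∉ X ∧ t ∉ X ∧ ∀ p : G.Walk s t, ∃ w ∈ p.support, w ∈ X

/-- `X` is a minimal separator of `G`: for some pair `s, t` it is an inclusion-wise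
minimal `st`-separator. -/
def MinSeparator (G : SimpleGraph V) (X : Set V) : Prop :=
  ∃ s t : V, Separates G X s t ∧ ∀ Y ⊆ X, Separates G Y s t → Y = X

/-- `A` is a connected component of `G ∖ C` that is full to `C`. -/
def IsFullComponent (G : SimpleGraph V) (C A : Set V) : Prop :=
  A.Nonempty ∧ Disjoint A C ∧ (G.induce A).Connected ∧
  (∀ a ∈ A, ∀ w : V, G.Adj a w → w ∈ A ∪ C) ∧
  (∀ x ∈ C, ∃ a ∈ A, G.Adj x a)

/-- A tree decomposition of `G` with tree `T` and bags `B`. -/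
def IsTreeDecomp (G : SimpleGraph V) {ι : Type} (T : SimpleGraph ι) (B : ι → Finset V) : Prop :=
  T.IsTree ∧
  (∀ v : V, ∃ i, v ∈ B i) ∧
  (∀ u v : V, G.Adj u v → ∃ i, u ∈ B i ∧ v ∈ B i) ∧
  (∀ (v : V) (i j : ι), v ∈ B i → v ∈ B j →
    ∀ (p : T.Walk i j), p.IsPath → ∀ x ∈ p.support, v ∈ B x)

/-- The treewidth of a finite graph: the least `w` such that `G` has a tree decomposition
all of whose bags have size at most `w + 1`. -/
noncomputable def treewidth (G : SimpleGraph V) : ℕ :=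
  sInf {w : ℕ | ∃ (m : ℕ) (T : SimpleGraph (Fin m)) (B : Fin m → Finset V),
    IsTreeDecomp G T B ∧ ∀ i, (B i).card ≤ w + 1}

/-- A graph is chordal iff it has no hole. -/
def IsChordal (G : SimpleGraph V) : Prop :=
  ¬∃ (n : ℕ) (f : ZMod n → V), IsHoleEmb G n f

/-- `H` is obtained from `G` by a minimal fill-in (minimal chordal completion). -/
def IsMinimalChordalCompletion (G H : SimpleGraph V) : Prop :=
  G ≤ H ∧ IsChordal H ∧ ∀ H' : SimpleGraph V, G ≤ H' → H' ≤ H → IsChordal H' → H' = H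

/-- `Ω` is a potential maximal clique of `G`: a maximal clique of some minimal chordal
completion of `G`. -/
def IsPMC (G : SimpleGraph V) (Ω : Set V) : Prop :=
  ∃ H : SimpleGraph V, IsMinimalChordalCompletion G H ∧ H.IsClique Ω ∧
    ∀ Ω' : Set V, H.IsClique Ω' → Ω ⊆ Ω' → Ω' = Ω

/-- `n` satisfies the Ramsey property for `(t, k)`: every graph on `n` vertices has a
clique of size `t` or an independent set of size `k`. -/
def RamseyProp (n t k : ℕ) : Prop :=
  ∀ G : SimpleGraph (Fin n),
    (∃ S : Finset (Fin n), G.IsNClique t S) ∨ (∃ S : Finset (Fin n), Gᶜ.IsNClique k S)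

/-- The Ramsey number `R(t, k)`. -/
noncomputable def ramseyNumber (t k : ℕ) : ℕ := sInf {n : ℕ | RamseyProp n t k}

/-!
Let `C` be an independent set of vertices with neighbours in both of two anticomplete connected
sets `A` and `B`, chosen minimal with this property. If `A` were not an induced path, it would
contain tripods ending in triples of `C` that match tripods in `B`, which gives a theta. So `A` and
`B` are induced paths. Together with two vertices of `C` they close up to a hole, to which the other
vertices of `C` are attached as pairwise non-crossing rungs. If `2k < |C|`, some rung is far from
both ends of the hole and is the centre of a spider. As there are no triangles, Ramsey's theorem
then bounds minimal separators by `R = R(3, 4k - 1)`.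

Decomposing along minimal separators reduces the theorem to torsos that are complete. Any two
vertices of an independent set `I` in such a torso are joined through a component outside the torso.
Each of these components is attached to fewer than `R` vertices, so counting triples in `I` gives
`|I| ≤ 3R`. In a triangle-free graph this bounds every bag by `3R(3R + 1)`, which is at most `2R³`
because `5 ≤ R`.
-/

namespace ThetaFree

open Set

/-! ### Connected and anticomplete sets of vertices -/

section ConnectedSets

variable {U : Type*} {G : SimpleGraph U} {A D D' E E' P : Set U} {a b v : U}

/-- `D` induces a connected subgraph of `G`; the empty set is allowed. -/
def PreconnectedOn (G : SimpleGraph U) (D : Set U) : Prop := (G.induce D).Preconnected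

/-- The vertex `v` has a neighbour in `D`. -/
def HasNeighborIn (G : SimpleGraph U) (D : Set U) (v : U) : Prop := ∃ d ∈ D, G.Adj v d

/-- `D` and `E` are disjoint and no edge of `G` joins them. -/
def Anticomplete (G : SimpleGraph U) (D E : Set U) : Prop := ∀ d ∈ D, ∀ e ∈ E, Gᶜ.Adj d e

/-- `D` is a connected set in which both `a` and `b` have a neighbour. -/
structure Connects (G : SimpleGraph U) (D : Set U) (a b : U) : Prop where
  preconnectedOn : PreconnectedOn G D
  left : HasNeighborIn G D a
  right : HasNeighborIn G D b

theorem HasNeighborIn.nonempty (h : HasNeighborIn G D v) : D.Nonempty :=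
  h.imp fun _ hd => hd.1

theorem HasNeighborIn.mono (h : HasNeighborIn G D v) (hDE : D ⊆ E) : HasNeighborIn G E v :=
  h.imp fun _ hd => ⟨hDE hd.1, hd.2⟩

namespace Anticomplete

theorem symm (h : Anticomplete G D E) : Anticomplete G E D :=
  fun e he d hd => (h d hd e he).symm

theorem mono (h : Anticomplete G D E) (hD : D' ⊆ D) (hE : E' ⊆ E) : Anticomplete G D' E' :=
  fun d hd e he => h d (hD hd) e (hE he)

theorem union_left (hD : Anticomplete G D E) (hD' : Anticomplete G D' E) :
    Anticomplete G (D ∪ D') E :=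
  fun d hd => hd.elim (hD d) (hD' d)

theorem union_right (hE : Anticomplete G D E) (hE' : Anticomplete G D E') :
    Anticomplete G D (E ∪ E') :=
  (hE.symm.union_left hE'.symm).symm

theorem empty_left : Anticomplete G ∅ E := fun _ hd => hd.elim

theorem empty_right : Anticomplete G D ∅ := empty_left.symm

theorem insert_insert (hab : Gᶜ.Adj a b) (haE : ∀ e ∈ E, Gᶜ.Adj a e) (hbD : ∀ d ∈ D, Gᶜ.Adj b d)
    (hDE : Anticomplete G D E) : Anticomplete G (insert a D) (insert b E) := by
  rintro d (rfl | hd) e (rfl | he)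
  exacts [hab, haE e he, (hbD d hd).symm, hDE d hd e he]

theorem notMem_of_hasNeighborIn (h : Anticomplete G D E) (hv : HasNeighborIn G E v) : v ∉ D := by
  obtain ⟨e, he, hve⟩ := hv
  exact fun hvD => (h v hvD e he).2 hve

end Anticomplete

theorem compl_adj_of_not_hasNeighborIn (hv : ¬ HasNeighborIn G D v) (hvD : v ∉ D) :
    ∀ d ∈ D, Gᶜ.Adj v d :=
  fun d hd => ⟨fun h => hvD (h ▸ hd), fun h => hv ⟨d, hd, h⟩⟩

theorem PreconnectedOn.subset_of_closed (hD : PreconnectedOn G D) (hDA : (D ∩ A).Nonempty)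
    (hA : ∀ a ∈ A, ∀ d ∈ D, G.Adj a d → d ∈ A) : D ⊆ A := by
  obtain ⟨d, hd, hdA⟩ := hDA
  have closed_walk : ∀ {u v : D}, (G.induce D).Walk u v → (u : U) ∈ A → (v : U) ∈ A := by
    intro u v p
    induction p with
    | nil => exact id
    | cons h _ ih => exact fun hu => ih (hA _ hu _ (Subtype.prop _) h)
  intro e he
  obtain ⟨p⟩ := hD ⟨d, hd⟩ ⟨e, he⟩
  exact closed_walk p hdA

theorem preconnectedOn_of_subset_of_closed
    (h : ∀ A : Set U, (D ∩ A).Nonempty → (∀ a ∈ A, ∀ d ∈ D, G.Adj a d → d ∈ A) → D ⊆ A) :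
    PreconnectedOn G D := by
  intro u v
  let reached : Set U := {w | ∃ hw : w ∈ D, (G.induce D).Reachable u ⟨w, hw⟩}
  have hD : D ⊆ reached := by
    refine h reached ⟨u, u.2, u.2, .refl _⟩ ?_
    rintro a ⟨ha, hua⟩ d hd had
    exact ⟨hd, hua.trans (Adj.reachable (G := G.induce D) (u := ⟨a, ha⟩) (v := ⟨d, hd⟩) had)⟩
  exact (hD v.2).2

namespace PreconnectedOn

protected theorem empty : PreconnectedOn G ∅ := fun u => u.2.elim

protected theorem singleton (v : U) : PreconnectedOn G {v} :=
  fun ⟨_, hx⟩ ⟨_, hy⟩ => by cases hx; cases hy; rfl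

theorem union_of_adj (hD : PreconnectedOn G D) (hE : PreconnectedOn G E)
    (hDE : ∃ d ∈ D, ∃ e ∈ E, G.Adj d e) : PreconnectedOn G (D ∪ E) := by
  obtain ⟨d, hd, e, he, hde⟩ := hDE
  exact (connected_induce_union hD hE hd he hde).preconnected

theorem union_of_inter_nonempty (hD : PreconnectedOn G D) (hE : PreconnectedOn G E)
    (hDE : (D ∩ E).Nonempty) : PreconnectedOn G (D ∪ E) :=
  (induce_union_connected hD hE hDE).preconnected

protected theorem insert (hD : PreconnectedOn G D) (hv : HasNeighborIn G D v) :
    PreconnectedOn G (insert v D) :=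
  (PreconnectedOn.singleton v).union_of_adj hD ⟨v, rfl, hv⟩

theorem of_subset_of_hasNeighborIn (hP : PreconnectedOn G P) (hPE : P ⊆ E)
    (hE : ∀ e ∈ E, e ∈ P ∨ HasNeighborIn G P e) : PreconnectedOn G E := by
  refine preconnectedOn_of_subset_of_closed fun A ⟨e, heE, heA⟩ hA => ?_
  have hPA : P ⊆ A := by
    refine hP.subset_of_closed ?_ fun a ha p hp => hA a ha p (hPE hp)
    rcases hE e heE with heP | ⟨p, hp, hep⟩
    exacts [⟨e, heP, heA⟩, ⟨p, hp, hA e heA p (hPE hp) hep⟩]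
  intro d hd
  rcases hE d hd with hdP | ⟨p, hp, hdp⟩
  exacts [hPA hdP, hA p (hPA hp) d hd hdp.symm]

theorem exists_hasNeighborIn_of_ssubset (hA : PreconnectedOn G A) (hP : P.Nonempty) (hPA : P ⊂ A) :
    ∃ e ∈ A, e ∉ P ∧ HasNeighborIn G P e := by
  by_contra! h
  refine hPA.2 (hA.subset_of_closed (hP.mono fun p hp => ⟨hPA.1 hp, hp⟩) fun p hp e he hpe => ?_)
  by_contra heP
  exact h e he heP ⟨p, hp, hpe.symm⟩

theorem exists_sdiff_singleton_of_ssubset [Finite U] (hA : PreconnectedOn G A)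
    (hP : PreconnectedOn G P) (hP₀ : P.Nonempty) (hPA : P ⊂ A) :
    ∃ e ∈ A, e ∉ P ∧ PreconnectedOn G (A \ {e}) := by
  obtain ⟨Q, ⟨hPQ, hQA, hQ⟩, hmax⟩ :=
    (toFinite {Q : Set U | P ⊆ Q ∧ Q ⊂ A ∧ PreconnectedOn G Q}).exists_maximal
      ⟨P, subset_rfl, hPA, hP⟩
  obtain ⟨e, heA, heQ, he⟩ := hA.exists_hasNeighborIn_of_ssubset (hP₀.mono hPQ) hQA
  have hins : insert e Q = A := by
    by_contra hne
    have hss : insert e Q ⊂ A := (insert_subset heA hQA.1).ssubset_of_ne hne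
    exact heQ (hmax ⟨hPQ.trans (subset_insert e Q), hss, hQ.insert he⟩ (subset_insert e Q)
      (mem_insert e Q))
  refine ⟨e, heA, fun h => heQ (hPQ h), ?_⟩
  rwa [← hins, insert_sdiff_self_of_notMem heQ]

theorem exists_sdiff_singleton [Finite U] (hA : PreconnectedOn G A) (hne : A.Nonempty) :
    ∃ e ∈ A, PreconnectedOn G (A \ {e}) := by
  obtain ⟨a, ha⟩ := hne
  rcases (singleton_subset_iff.2 ha).eq_or_ssubset with rfl | hss
  · exact ⟨a, rfl, by simpa only [sdiff_self] using .empty⟩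
  · obtain ⟨e, he, -, hc⟩ := hA.exists_sdiff_singleton_of_ssubset (.singleton a) ⟨a, rfl⟩ hss
    exact ⟨e, he, hc⟩

end PreconnectedOn

theorem Connects.symm (h : Connects G D a b) : Connects G D b a :=
  ⟨h.preconnectedOn, h.right, h.left⟩

end ConnectedSets

/-! ### Induced paths -/

section InducedPaths

variable {U : Type*} {G : SimpleGraph U} {D : Set U} {f : ℕ → U} {n i j : ℕ}

/-- `f 0, …, f n` is a walk of `G` inside `D`. -/
structure IsWalkIn (G : SimpleGraph U) (D : Set U) (f : ℕ → U) (n : ℕ) : Prop where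
  mem : ∀ i ≤ n, f i ∈ D
  adj : ∀ i < n, G.Adj (f i) (f (i + 1))

/-- `f 0, …, f n` is an induced path of `G`, of length `n`. Indexing paths by `ℕ` makes the vertex
set of the subpath from `f i` to `f j` the image `f '' Icc i j`. -/
def IsInducedPath (G : SimpleGraph U) (f : ℕ → U) (n : ℕ) : Prop :=
  ∀ i j, i < j → j ≤ n → f i ≠ f j ∧ (G.Adj (f i) (f j) ↔ j = i + 1)

theorem PreconnectedOn.exists_isWalkIn {a b : U} (hD : PreconnectedOn G D) (ha : a ∈ D)
    (hb : b ∈ D) : ∃ n f, IsWalkIn G D f n ∧ f 0 = a ∧ f n = b := by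
  obtain ⟨p⟩ := hD ⟨a, ha⟩ ⟨b, hb⟩
  refine ⟨p.length, fun i => p.getVert i, ⟨fun i _ => Subtype.prop _, fun i hi => ?_⟩, ?_, ?_⟩
  · exact p.adj_getVert_succ hi
  · simp only [Walk.getVert_zero]
  · simp only [Walk.getVert_length]

namespace IsWalkIn

theorem take (h : IsWalkIn G D f n) (hi : i ≤ n) : IsWalkIn G D f i :=
  ⟨fun j hj => h.mem j (hj.trans hi), fun j hj => h.adj j (hj.trans_le hi)⟩

theorem drop (h : IsWalkIn G D f n) (hi : i ≤ n) : IsWalkIn G D (fun t => f (i + t)) (n - i) :=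
  ⟨fun t ht => h.mem _ (by omega), fun t ht => h.adj (i + t) (by omega)⟩

theorem shortcut (h : IsWalkIn G D f n) (hij : i < j) (hj : j ≤ n) (hadj : G.Adj (f i) (f j)) :
    IsWalkIn G D (fun t => if t ≤ i then f t else f (t + (j - i - 1))) (n - (j - i - 1)) := by
  refine ⟨fun t ht => ?_, fun t ht => ?_⟩
  · split_ifs <;> exact h.mem _ (by omega)
  · rcases lt_trichotomy t i with hti | rfl | hti
    · simpa only [hti.le, hti, Nat.succ_le_iff, if_true] using h.adj t (by omega)
    · simpa only [le_refl, if_true, Nat.not_succ_le_self, if_false,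
        show t + 1 + (j - t - 1) = j by omega] using hadj
    · simpa only [hti.not_ge, show ¬ t + 1 ≤ i by omega, if_false, Nat.add_right_comm t 1]
        using h.adj (t + (j - i - 1)) (by omega)

end IsWalkIn

theorem PreconnectedOn.exists_isInducedPath (hD : PreconnectedOn G D) (S T : U → Prop)
    (hS : ∃ d ∈ D, S d) (hT : ∃ d ∈ D, T d) :
    ∃ n f, (∀ i ≤ n, f i ∈ D) ∧ IsInducedPath G f n ∧
      (∀ i ≤ n, S (f i) ↔ i = 0) ∧ ∀ i ≤ n, T (f i) ↔ i = n := by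
  classical
  obtain ⟨a, ha, hSa⟩ := hS
  obtain ⟨b, hb, hTb⟩ := hT
  have hwalk : ∃ n f, IsWalkIn G D f n ∧ S (f 0) ∧ T (f n) := by
    obtain ⟨n, f, hf, rfl, rfl⟩ := hD.exists_isWalkIn ha hb
    exact ⟨n, f, hf, hSa, hTb⟩
  obtain ⟨f, hf, hS₀, hTn⟩ := Nat.find_spec hwalk
  have hmin : ∀ m < Nat.find hwalk, ∀ g, IsWalkIn G D g m → S (g 0) → ¬ T (g m) :=
    fun m hm g hg hSg hTg => Nat.find_min hwalk hm ⟨g, hg, hSg, hTg⟩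
  generalize Nat.find hwalk = n at *
  have hTi : ∀ i ≤ n, T (f i) ↔ i = n := fun i hi =>
    ⟨fun hTi => by_contra fun hne => hmin i (by omega) f (hf.take hi) hS₀ hTi, fun h => h ▸ hTn⟩
  have hSi : ∀ i ≤ n, S (f i) ↔ i = 0 := fun i hi =>
    ⟨fun hSi => by_contra fun hne => hmin (n - i) (by omega) _ (hf.drop hi) (by simpa using hSi)
      (by simpa only [Nat.add_sub_cancel' hi] using hTn), fun h => h ▸ hS₀⟩
  have no_chord : ∀ i j, i + 1 < j → j ≤ n → ¬ G.Adj (f i) (f j) := by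
    intro i j hij hj hadj
    refine hmin _ (by omega) _ (hf.shortcut (by omega) hj hadj) (by simpa using hS₀) ?_
    simpa only [show ¬ n - (j - i - 1) ≤ i by omega, if_false,
      show n - (j - i - 1) + (j - i - 1) = n by omega] using hTn
  refine ⟨n, f, hf.mem, fun i j hij hj => ⟨fun heq => ?_, fun hadj => ?_, ?_⟩, hSi, hTi⟩
  · rcases hj.eq_or_lt with rfl | hjn
    · have := (hTi i hij.le).1 (heq ▸ hTn)
      omega
    · exact no_chord i (j + 1) (by omega) hjn (heq ▸ hf.adj j hjn)
  · by_contra hne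
    exact no_chord i j (by omega) hj hadj
  · rintro rfl
    exact hf.adj i hj

theorem preconnectedOn_image_Icc (h : ∀ t, i ≤ t → t < j → G.Adj (f t) (f (t + 1))) :
    PreconnectedOn G (f '' Icc i j) := by
  refine preconnectedOn_of_subset_of_closed ?_
  rintro A ⟨_, ⟨s, ⟨his, hsj⟩, rfl⟩, hsA⟩ hA
  have hiA : f i ∈ A := by
    induction s, his using Nat.le_induction with
    | base => exact hsA
    | succ t hit ih =>
      exact ih (by omega) (hA _ hsA _ (mem_image_of_mem f ⟨hit, by omega⟩) (h t hit hsj).symm)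
  rintro _ ⟨t, ⟨hit, htj⟩, rfl⟩
  induction t, hit using Nat.le_induction with
  | base => exact hiA
  | succ t hit ih =>
    exact hA _ (ih (by omega)) _ (mem_image_of_mem f ⟨by omega, htj⟩) (h t hit htj)

namespace IsInducedPath

theorem adj (h : IsInducedPath G f n) (hi : i < n) : G.Adj (f i) (f (i + 1)) :=
  (h i (i + 1) (by omega) (by omega)).2.2 rfl

theorem preconnectedOn (h : IsInducedPath G f n) (i : ℕ) (hj : j ≤ n) :
    PreconnectedOn G (f '' Icc i j) :=
  preconnectedOn_image_Icc fun _ _ ht => h.adj (by omega)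

theorem injOn (h : IsInducedPath G f n) : InjOn f (Iic n) := by
  intro i hi j hj heq
  rcases lt_trichotomy i j with hij | hij | hij
  · exact absurd heq (h i j hij hj).1
  · exact hij
  · exact absurd heq.symm (h j i hij hi).1

theorem adj_iff (h : IsInducedPath G f n) (hi : i ≤ n) (hj : j ≤ n) :
    G.Adj (f i) (f j) ↔ j = i + 1 ∨ i = j + 1 := by
  rcases lt_trichotomy i j with hij | rfl | hij
  · rw [(h i j hij hj).2]
    omega
  · simp
  · rw [G.adj_comm, (h j i hij hi).2]
    omega

theorem compl_adj (h : IsInducedPath G f n) (hij : i + 1 < j) (hj : j ≤ n) :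
    Gᶜ.Adj (f i) (f j) :=
  ⟨(h i j (by omega) hj).1, fun hadj => by have := (h i j (by omega) hj).2.1 hadj; omega⟩

theorem anticomplete {i' j' : ℕ} (h : IsInducedPath G f n) (hji : j + 1 < i') (hj' : j' ≤ n) :
    Anticomplete G (f '' Icc i j) (f '' Icc i' j') := by
  rintro _ ⟨s, hs, rfl⟩ _ ⟨t, ht, rfl⟩
  exact h.compl_adj (by have := hs.2; have := ht.1; omega) (ht.2.trans hj')

theorem mono {m : ℕ} (h : IsInducedPath G f n) (hm : m ≤ n) : IsInducedPath G f m :=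
  fun i j hij hj => h i j hij (hj.trans hm)

theorem reverse (h : IsInducedPath G f n) : IsInducedPath G (fun t => f (n - t)) n := by
  intro i j hij hj
  refine ⟨fun heq => ?_, ?_⟩
  · have := h.injOn (mem_Iic.2 (by omega)) (mem_Iic.2 (by omega)) heq
    omega
  · rw [h.adj_iff (by omega) (by omega)]
    omega

theorem exists_walk (h : IsInducedPath G f n) :
    ∃ p : G.Walk (f 0) (f n), p.length = n ∧ p.support = (List.range (n + 1)).map f ∧
      ∀ i < n, s(f i, f (i + 1)) ∈ p.edges := by
  induction n with
  | zero => exact ⟨.nil, rfl, by simp, fun i hi => by omega⟩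
  | succ n ih =>
    obtain ⟨p, hlen, hsupp, hedges⟩ := ih (h.mono (by omega))
    refine ⟨p.concat (h.adj (by omega)), by simp [hlen], ?_, fun i hi => ?_⟩
    · rw [Walk.support_concat, hsupp, List.range_succ (n := n + 1)]
      simp
    · rw [Walk.edges_concat]
      rcases (Nat.lt_succ_iff.1 hi).eq_or_lt with rfl | hin
      · simp
      · simp [hedges i hin]

end IsInducedPath

theorem image_reverse_Icc (hi : i ≤ n) (hj : j ≤ n) :
    (fun t => f (n - t)) '' Icc i j = f '' Icc (n - j) (n - i) := by
  ext v
  constructor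
  · rintro ⟨t, ht, rfl⟩
    exact ⟨n - t, ⟨by have := ht.2; omega, by have := ht.1; omega⟩, rfl⟩
  · rintro ⟨t, ht, rfl⟩
    obtain ⟨h₁, h₂⟩ := ht
    refine ⟨n - t, ⟨by omega, by omega⟩, ?_⟩
    dsimp only
    congr 1
    omega

end InducedPaths

section Thetas

variable {U : Type} {G : SimpleGraph U} {a b : U} {D D₁ D₂ D₃ : Set U}

theorem IsInducedPath.exists_isInducedPathW {f : ℕ → U} {n : ℕ} (h : IsInducedPath G f n)
    (ha : f 0 = a) (hb : f n = b) :
    ∃ p : G.Walk a b, IsInducedPathW G p ∧ p.length = n ∧ ∀ w ∈ p.support, ∃ i ≤ n, f i = w := by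
  subst ha hb
  obtain ⟨p, hlen, hsupp, hedges⟩ := h.exists_walk
  have mem_support : ∀ w ∈ p.support, ∃ i ≤ n, f i = w := by
    simp only [hsupp, List.mem_map, List.mem_range, Nat.lt_succ_iff, imp_self, implies_true]
  refine ⟨p, ⟨?_, fun u v hu hv huv => ?_⟩, hlen, mem_support⟩
  · rw [Walk.isPath_def, hsupp]
    exact List.nodup_range.map_on fun i hi j hj => h.injOn
      (Nat.lt_succ_iff.1 (List.mem_range.1 hi)) (Nat.lt_succ_iff.1 (List.mem_range.1 hj))
  · obtain ⟨i, hi, rfl⟩ := mem_support u hu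
    obtain ⟨j, hj, rfl⟩ := mem_support v hv
    rw [Walk.adj_toSubgraph_iff_mem_edges]
    rcases (h.adj_iff hi hj).1 huv with rfl | rfl
    · exact hedges i hj
    · rw [Sym2.eq_swap]
      exact hedges j hi

theorem Connects.exists_isInducedPathW (h : Connects G D a b) (hab : Gᶜ.Adj a b) :
    ∃ p : G.Walk a b, IsInducedPathW G p ∧ 2 ≤ p.length ∧
      ∀ w ∈ p.support, w = a ∨ w = b ∨ w ∈ D := by
  have hconn : PreconnectedOn G (insert a (insert b D)) :=
    (h.preconnectedOn.insert h.right).insert (h.left.mono (subset_insert b D))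
  obtain ⟨n, f, hf, hpath, ha, hb⟩ := hconn.exists_isInducedPath (· = a) (· = b)
    ⟨a, mem_insert _ _, rfl⟩ ⟨b, by simp, rfl⟩
  have ha₀ : f 0 = a := (ha 0 (by omega)).2 rfl
  have hbn : f n = b := (hb n le_rfl).2 rfl
  obtain ⟨p, hp, hlen, hsupp⟩ := hpath.exists_isInducedPathW ha₀ hbn
  refine ⟨p, hp, ?_, fun w hw => ?_⟩
  · by_contra! hlt
    obtain rfl | rfl : n = 0 ∨ n = 1 := by omega
    · exact hab.1 (ha₀.symm.trans hbn)
    · exact hab.2 (ha₀ ▸ hbn ▸ hpath.adj one_pos)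
  · obtain ⟨i, hi, rfl⟩ := hsupp w hw
    exact hf i hi

theorem containsTheta_of_connects (hab : Gᶜ.Adj a b) (h₁ : Connects G D₁ a b)
    (h₂ : Connects G D₂ a b) (h₃ : Connects G D₃ a b) (h₁₂ : Anticomplete G D₁ D₂)
    (h₁₃ : Anticomplete G D₁ D₃) (h₂₃ : Anticomplete G D₂ D₃) : ContainsTheta G := by
  obtain ⟨p₁, hp₁, hlen₁, hs₁⟩ := h₁.exists_isInducedPathW hab
  obtain ⟨p₂, hp₂, hlen₂, hs₂⟩ := h₂.exists_isInducedPathW hab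
  obtain ⟨p₃, hp₃, hlen₃, hs₃⟩ := h₃.exists_isInducedPathW hab
  have eq_end : ∀ {D E : Set U}, Anticomplete G D E → ∀ {w}, (w = a ∨ w = b ∨ w ∈ D) →
      (w = a ∨ w = b ∨ w ∈ E) → w = a ∨ w = b := by
    intro D E h w hD hE
    by_contra! hne
    exact (h w (by tauto) w (by tauto)).1 rfl
  refine ⟨a, b, p₁, p₂, p₃, ⟨hp₁, hp₂, hp₃⟩, ⟨hlen₁, hlen₂, hlen₃⟩, ?_, ?_⟩
  · rintro w (⟨h, h'⟩ | ⟨h, h'⟩ | ⟨h, h'⟩)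
    · exact eq_end h₁₂ (hs₁ w h) (hs₂ w h')
    · exact eq_end h₁₃ (hs₁ w h) (hs₃ w h')
    · exact eq_end h₂₃ (hs₂ w h) (hs₃ w h')
  · rintro u w hua hub hwa hwb (⟨h, h'⟩ | ⟨h, h'⟩ | ⟨h, h'⟩)
    · exact (h₁₂ u (by grind) w (by grind)).2
    · exact (h₁₃ u (by grind) w (by grind)).2
    · exact (h₂₃ u (by grind) w (by grind)).2

end Thetas

theorem not_adj_of_cliqueFree_three {U : Type*} {G : SimpleGraph U} (hG : G.CliqueFree 3)
    {a b c : U} (hab : G.Adj a b) (hbc : G.Adj b c) : ¬ G.Adj a c := by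
  classical
  exact fun hac => hG {a, b, c} (is3Clique_triple_iff.2 ⟨hab, hac, hbc⟩)

/-! ### Tripods -/

section Tripods

variable {U : Type*} {G : SimpleGraph U} {A B D E Dx Dy Dz Ex Ey : Set U} {e p q t x y z : U}

/-- `D` contains the interior of a path from `t` to `p`; it is empty when the path is an edge. -/
def IsLeg (G : SimpleGraph U) (D : Set U) (t p : U) : Prop :=
  D = ∅ ∧ G.Adj t p ∨ Connects G D t p

/-- Three pairwise anticomplete legs inside `A` joining the terminals `x`, `y`, `z` to the centre
`p ∈ A`. -/
structure IsTripodAt (G : SimpleGraph U) (A : Set U) (x y z p : U) (Dx Dy Dz : Set U) :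
    Prop where
  center_mem : p ∈ A
  subset_x : Dx ⊆ A
  subset_y : Dy ⊆ A
  subset_z : Dz ⊆ A
  leg_x : IsLeg G Dx x p
  leg_y : IsLeg G Dy y p
  leg_z : IsLeg G Dz z p
  anti_xy : Anticomplete G (insert x Dx) (insert y Dy)
  anti_xz : Anticomplete G (insert x Dx) (insert z Dz)
  anti_yz : Anticomplete G (insert y Dy) (insert z Dz)

/-- A degenerate tripod, whose centre is the terminal `z`: two anticomplete legs inside `A`
joining `x` and `y` to `z`. -/
structure IsBend (G : SimpleGraph U) (A : Set U) (x y z : U) (Dx Dy : Set U) : Prop where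
  subset_x : Dx ⊆ A
  subset_y : Dy ⊆ A
  connects_x : Connects G Dx x z
  connects_y : Connects G Dy y z
  anti : Anticomplete G (insert x Dx) (insert y Dy)

/-- `p ∈ A` is the centre of a tripod inside `A` with terminals `x`, `y`, `z`. -/
def HasTripodAt (G : SimpleGraph U) (A : Set U) (x y z p : U) : Prop :=
  ∃ Dx Dy Dz, IsTripodAt G A x y z p Dx Dy Dz

/-- There is a bend inside `A` from `x` to `y` centred at `z`. -/
def HasBend (G : SimpleGraph U) (A : Set U) (x y z : U) : Prop := ∃ Dx Dy, IsBend G A x y z Dx Dy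

/-- There is a tripod inside `A` with terminals `x`, `y`, `z`, possibly centred at one of them. -/
def HasTripod (G : SimpleGraph U) (A : Set U) (x y z : U) : Prop :=
  (∃ p, HasTripodAt G A x y z p) ∨ HasBend G A y z x ∨ HasBend G A x z y ∨ HasBend G A x y z

/-- `x`, `y`, `z` are distinct, pairwise non-adjacent, outside `A`, and have neighbours in `A`. -/
structure IsAttachedTriple (G : SimpleGraph U) (A : Set U) (x y z : U) : Prop where
  xy : Gᶜ.Adj x y
  xz : Gᶜ.Adj x z
  yz : Gᶜ.Adj y z
  notMem_x : x ∉ A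
  notMem_y : y ∉ A
  notMem_z : z ∉ A
  nbr_x : HasNeighborIn G A x
  nbr_y : HasNeighborIn G A y
  nbr_z : HasNeighborIn G A z

namespace IsLeg

theorem empty (h : G.Adj t p) : IsLeg G ∅ t p := .inl ⟨rfl, h⟩

theorem preconnectedOn_insert (h : IsLeg G D t p) : PreconnectedOn G (insert t D) := by
  obtain ⟨rfl, -⟩ | h := h
  · rw [insert_empty_eq]
    exact .singleton t
  · exact h.preconnectedOn.insert h.left

theorem hasNeighborIn_insert (h : IsLeg G D t p) : HasNeighborIn G (insert t D) p := by
  obtain ⟨rfl, htp⟩ | h := h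
  · exact ⟨t, mem_insert t ∅, htp.symm⟩
  · exact h.right.mono (subset_insert t D)

theorem connects_of_not_adj (h : IsLeg G D t p) (htp : ¬ G.Adj t p) : Connects G D t p :=
  h.resolve_left fun h' => htp h'.2

theorem connects_insert_union (hD : IsLeg G D t p) (hE : IsLeg G E t q) :
    Connects G (insert t (D ∪ E)) p q := by
  rw [insert_union_distrib]
  exact ⟨hD.preconnectedOn_insert.union_of_inter_nonempty hE.preconnectedOn_insert
      ⟨t, mem_insert t D, mem_insert t E⟩,
    hD.hasNeighborIn_insert.mono subset_union_left,
    hE.hasNeighborIn_insert.mono subset_union_right⟩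

end IsLeg

theorem Anticomplete.insert_union (hD : Anticomplete G (insert x D) B) (hE : Anticomplete G E B) :
    Anticomplete G (insert x (D ∪ E)) B := by
  rw [← Set.insert_union]
  exact hD.union_left hE

theorem Anticomplete.insert_union_insert_union (hAB : Anticomplete G A B) (hDx : Dx ⊆ A)
    (hDy : Dy ⊆ A) (hEx : Ex ⊆ B) (hEy : Ey ⊆ B)
    (hD : Anticomplete G (insert x Dx) (insert y Dy))
    (hE : Anticomplete G (insert x Ex) (insert y Ey)) :
    Anticomplete G (insert x (Dx ∪ Ex)) (insert y (Dy ∪ Ey)) := by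
  refine .insert_insert (hD x (mem_insert _ _) y (mem_insert _ _)) ?_ ?_ ?_
  · rintro e (he | he)
    exacts [hD x (mem_insert _ _) e (.inr he), hE x (mem_insert _ _) e (.inr he)]
  · rintro d (hd | hd)
    exacts [(hD d (.inr hd) y (mem_insert _ _)).symm, (hE d (.inr hd) y (mem_insert _ _)).symm]
  · exact .union_left
      (.union_right (hD.mono (subset_insert _ _) (subset_insert _ _)) (hAB.mono hDx hEy))
      (.union_right (hAB.symm.mono hEx hDy) (hE.mono (subset_insert _ _) (subset_insert _ _)))

theorem HasTripodAt.swap_left : HasTripodAt G A x y z p → HasTripodAt G A y x z p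
  | ⟨Dx, Dy, Dz, h⟩ => ⟨Dy, Dx, Dz, h.center_mem, h.subset_y, h.subset_x, h.subset_z, h.leg_y,
      h.leg_x, h.leg_z, h.anti_xy.symm, h.anti_yz, h.anti_xz⟩

theorem HasTripodAt.swap_right : HasTripodAt G A x y z p → HasTripodAt G A x z y p
  | ⟨Dx, Dy, Dz, h⟩ => ⟨Dx, Dz, Dy, h.center_mem, h.subset_x, h.subset_z, h.subset_y, h.leg_x,
      h.leg_z, h.leg_y, h.anti_xz, h.anti_xy, h.anti_yz.symm⟩

theorem HasTripodAt.mono (hAB : A ⊆ B) : HasTripodAt G A x y z p → HasTripodAt G B x y z p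
  | ⟨Dx, Dy, Dz, h⟩ => ⟨Dx, Dy, Dz, { h with
      center_mem := hAB h.center_mem
      subset_x := h.subset_x.trans hAB
      subset_y := h.subset_y.trans hAB
      subset_z := h.subset_z.trans hAB }⟩

theorem HasBend.symm : HasBend G A x y z → HasBend G A y x z
  | ⟨Dx, Dy, h⟩ => ⟨Dy, Dx, h.subset_y, h.subset_x, h.connects_y, h.connects_x, h.anti.symm⟩

theorem HasBend.mono (hAB : A ⊆ B) : HasBend G A x y z → HasBend G B x y z
  | ⟨Dx, Dy, h⟩ => ⟨Dx, Dy, { h with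
      subset_x := h.subset_x.trans hAB
      subset_y := h.subset_y.trans hAB }⟩

theorem HasTripod.swap_left : HasTripod G A x y z → HasTripod G A y x z
  | .inl ⟨p, h⟩ => .inl ⟨p, h.swap_left⟩
  | .inr (.inl h) => .inr (.inr (.inl h))
  | .inr (.inr (.inl h)) => .inr (.inl h)
  | .inr (.inr (.inr h)) => .inr (.inr (.inr h.symm))

theorem HasTripod.swap_right : HasTripod G A x y z → HasTripod G A x z y
  | .inl ⟨p, h⟩ => .inl ⟨p, h.swap_right⟩
  | .inr (.inl h) => .inr (.inl h.symm)
  | .inr (.inr (.inl h)) => .inr (.inr (.inr h))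
  | .inr (.inr (.inr h)) => .inr (.inr (.inl h))

theorem HasTripod.mono (hAB : A ⊆ B) : HasTripod G A x y z → HasTripod G B x y z
  | .inl ⟨p, h⟩ => .inl ⟨p, h.mono hAB⟩
  | .inr (.inl h) => .inr (.inl (h.mono hAB))
  | .inr (.inr (.inl h)) => .inr (.inr (.inl (h.mono hAB)))
  | .inr (.inr (.inr h)) => .inr (.inr (.inr (h.mono hAB)))

theorem IsAttachedTriple.swap_left (h : IsAttachedTriple G A x y z) : IsAttachedTriple G A y x z :=
  ⟨h.xy.symm, h.yz, h.xz, h.notMem_y, h.notMem_x, h.notMem_z, h.nbr_y, h.nbr_x, h.nbr_z⟩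

theorem IsAttachedTriple.swap_right (h : IsAttachedTriple G A x y z) : IsAttachedTriple G A x z y :=
  ⟨h.xz, h.xy, h.yz.symm, h.notMem_x, h.notMem_z, h.notMem_y, h.nbr_x, h.nbr_z, h.nbr_y⟩

theorem hasTripodAt_of_adj (hpA : p ∈ A) (hxy : Gᶜ.Adj x y) (hxz : Gᶜ.Adj x z) (hyz : Gᶜ.Adj y z)
    (hx : G.Adj x p) (hy : G.Adj y p) (hz : G.Adj z p) : HasTripodAt G A x y z p := by
  have anti {u v : U} (huv : Gᶜ.Adj u v) : Anticomplete G (insert u ∅) (insert v ∅) :=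
    .insert_insert huv (by simp) (by simp) .empty_left
  exact ⟨∅, ∅, ∅, hpA, empty_subset A, empty_subset A, empty_subset A, .empty hx, .empty hy,
    .empty hz, anti hxy, anti hxz, anti hyz⟩

theorem HasTripod.insert_of_adj (h : HasTripod G E x y e) (hze : G.Adj z e)
    (hzE : ∀ d ∈ E, Gᶜ.Adj z d) (hxz : Gᶜ.Adj x z) (hyz : Gᶜ.Adj y z) :
    HasTripod G (insert e E) x y z := by
  have hE : E ⊆ insert e E := subset_insert e E
  have anti_extend {w : U} {D De : Set U} (hwz : Gᶜ.Adj w z) (hD : D ⊆ E)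
      (h : Anticomplete G (insert w D) (insert e De)) :
      Anticomplete G (insert w D) (insert z (insert e De)) := by
    rintro d hd c (rfl | hc)
    · rcases hd with rfl | hd
      exacts [hwz, (hzE d (hD hd)).symm]
    · exact h d hd c hc
  have nbr_z (De : Set U) : HasNeighborIn G (insert e De) z := ⟨e, mem_insert e De, hze⟩
  rcases h with ⟨p, Dx, Dy, De, h⟩ | ⟨Dy, De, h⟩ | ⟨Dx, De, h⟩ | ⟨Dx, Dy, h⟩
  · exact .inl ⟨p, Dx, Dy, insert e De, hE h.center_mem, h.subset_x.trans hE,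
      h.subset_y.trans hE, insert_subset_insert h.subset_z, h.leg_x, h.leg_y,
      .inr ⟨h.leg_z.preconnectedOn_insert, nbr_z De, h.leg_z.hasNeighborIn_insert⟩, h.anti_xy,
      anti_extend hxz h.subset_x h.anti_xz, anti_extend hyz h.subset_y h.anti_yz⟩
  · exact .inr (.inl ⟨Dy, insert e De, h.subset_x.trans hE, insert_subset_insert h.subset_y,
      h.connects_x, ⟨h.connects_y.preconnectedOn.insert h.connects_y.left, nbr_z De,
        h.connects_y.right.mono (subset_insert e De)⟩, anti_extend hyz h.subset_x h.anti⟩)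
  · exact .inr (.inr (.inl ⟨Dx, insert e De, h.subset_x.trans hE,
      insert_subset_insert h.subset_y, h.connects_x,
      ⟨h.connects_y.preconnectedOn.insert h.connects_y.left, nbr_z De,
        h.connects_y.right.mono (subset_insert e De)⟩, anti_extend hxz h.subset_x h.anti⟩))
  · have anti_z {w : U} {D : Set U} (hwz : Gᶜ.Adj w z) (hD : D ⊆ E) :
        Anticomplete G (insert w D) (insert z ∅) :=
      .insert_insert hwz (by simp) (fun d hd => hzE d (hD hd)) .empty_right
    exact .inl ⟨e, Dx, Dy, ∅, mem_insert e E, h.subset_x.trans hE, h.subset_y.trans hE,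
      empty_subset _, .inr h.connects_x, .inr h.connects_y, .empty hze, h.anti,
      anti_z hxz h.subset_x, anti_z hyz h.subset_y⟩

theorem hasTripod_insert_of_adj_of_adj (hG : G.CliqueFree 3) (hE : Connects G E e y) (heE : e ∉ E)
    (hxE : x ∉ E) (hxe : G.Adj x e) (hze : G.Adj z e) (hzE : ∀ d ∈ E, Gᶜ.Adj z d)
    (hye : Gᶜ.Adj y e) (hxy : Gᶜ.Adj x y) (hxz : Gᶜ.Adj x z) (hyz : Gᶜ.Adj y z) :
    HasTripod G (insert e E) x y z := by
  classical
  obtain ⟨n, f, hfE, hpath, hef, hyf⟩ :=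
    hE.preconnectedOn.exists_isInducedPath (G.Adj e) (G.Adj y) hE.left hE.right
  have hsub (i : ℕ) : f '' Icc i n ⊆ E := image_subset_iff.2 fun t ht => hfE t ht.2
  have nbr_y {i : ℕ} (hi : i ≤ n) : HasNeighborIn G (f '' Icc i n) y :=
    ⟨f n, mem_image_of_mem f ⟨hi, le_rfl⟩, (hyf n le_rfl).2 rfl⟩
  by_cases hxf : ∃ i ≤ n, G.Adj x (f i)
  · obtain ⟨i, hi, hxi⟩ := hxf
    have hi₀ : i ≠ 0 := by
      rintro rfl
      exact not_adj_of_cliqueFree_three hG hxe ((hef 0 hi).2 rfl) hxi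
    refine .inr (.inl ⟨f '' Icc i n, {e}, (hsub i).trans (subset_insert e E), by simp,
      ⟨hpath.preconnectedOn _ le_rfl, nbr_y hi, f i, mem_image_of_mem f ⟨le_rfl, hi⟩, hxi⟩,
      ⟨.singleton e, ⟨e, rfl, hze⟩, e, rfl, hxe⟩,
      .insert_insert hyz (by simpa using hye) (fun d hd => hzE d (hsub i hd)) ?_⟩)
    rintro _ ⟨t, ⟨hit, htn⟩, rfl⟩ _ rfl
    refine ⟨fun h => heE (h ▸ hfE t htn), fun h => ?_⟩
    have := (hef t htn).1 h.symm
    omega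
  · have hx : ∀ d ∈ f '' Icc 0 n, Gᶜ.Adj x d := compl_adj_of_not_hasNeighborIn
      (fun ⟨_, ⟨t, ht, rfl⟩, h⟩ => hxf ⟨t, ht.2, h⟩) fun h => hxE (hsub 0 h)
    refine .inl ⟨e, ∅, f '' Icc 0 n, ∅, mem_insert e E, empty_subset _,
      (hsub 0).trans (subset_insert e E), empty_subset _, .empty hxe,
      .inr ⟨hpath.preconnectedOn _ le_rfl, nbr_y n.zero_le, ?_⟩, .empty hze, ?_, ?_, ?_⟩
    · exact ⟨f 0, mem_image_of_mem f ⟨le_rfl, n.zero_le⟩, (hef 0 n.zero_le).2 rfl⟩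
    · exact .insert_insert hxy hx (by simp) .empty_left
    · exact .insert_insert hxz (by simp) (by simp) .empty_left
    · exact .insert_insert hyz (by simp) (fun d hd => hzE d (hsub 0 hd)) .empty_right

theorem IsAttachedTriple.hasTripod_insert_of_not_hasNeighborIn (hG : G.CliqueFree 3)
    (hA : PreconnectedOn G (insert e E)) (hE : PreconnectedOn G E) (heE : e ∉ E)
    (h : IsAttachedTriple G (insert e E) x y z) (hz : ¬ HasNeighborIn G E z)
    (ih : ∀ {x y z}, IsAttachedTriple G E x y z → HasTripod G E x y z) :
    HasTripod G (insert e E) x y z := by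
  have nbr_of_not_adj {v : U} (hv : HasNeighborIn G (insert e E) v) (hve : ¬ G.Adj v e) :
      HasNeighborIn G E v := by
    obtain ⟨d, rfl | hd, hvd⟩ := hv
    exacts [absurd hvd hve, ⟨d, hd, hvd⟩]
  have nbr_e (hne : E.Nonempty) : HasNeighborIn G E e := by
    obtain ⟨v, rfl | hv, hvE, hnbr⟩ :=
      hA.exists_hasNeighborIn_of_ssubset hne (ssubset_insert heE)
    exacts [hnbr, absurd hv hvE]
  have notMem {v : U} (hv : v ∉ insert e E) : v ∉ E := fun hvE => hv (.inr hvE)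
  have compl_adj_e {v : U} (hv : v ∉ insert e E) (hve : ¬ G.Adj v e) : Gᶜ.Adj v e :=
    ⟨fun heq => hv (.inl heq), hve⟩
  have hze : G.Adj z e := by_contra fun hze => hz (nbr_of_not_adj h.nbr_z hze)
  have hzE := compl_adj_of_not_hasNeighborIn hz (notMem h.notMem_z)
  by_cases hxe : G.Adj x e <;> by_cases hye : G.Adj y e
  · exact .inl ⟨e, hasTripodAt_of_adj (mem_insert e E) h.xy h.xz h.yz hxe hye hze⟩
  · have hy := nbr_of_not_adj h.nbr_y hye
    exact hasTripod_insert_of_adj_of_adj hG ⟨hE, nbr_e hy.nonempty, hy⟩ heE (notMem h.notMem_x)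
      hxe hze hzE (compl_adj_e h.notMem_y hye) h.xy h.xz h.yz
  · have hx := nbr_of_not_adj h.nbr_x hxe
    exact (hasTripod_insert_of_adj_of_adj hG ⟨hE, nbr_e hx.nonempty, hx⟩ heE (notMem h.notMem_y)
      hye hze hzE (compl_adj_e h.notMem_x hxe) h.xy.symm h.yz h.xz).swap_left
  · have hx := nbr_of_not_adj h.nbr_x hxe
    have hxye : IsAttachedTriple G E x y e :=
      ⟨h.xy, compl_adj_e h.notMem_x hxe, compl_adj_e h.notMem_y hye, notMem h.notMem_x,
        notMem h.notMem_y, heE, hx, nbr_of_not_adj h.nbr_y hye, nbr_e hx.nonempty⟩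
    exact (ih hxye).insert_of_adj hze hzE h.xz h.yz

theorem IsAttachedTriple.hasTripod [Finite U] (hG : G.CliqueFree 3) (hA : PreconnectedOn G A)
    (h : IsAttachedTriple G A x y z) : HasTripod G A x y z := by
  induction A using WellFoundedLT.induction generalizing x y z with
  | ind A ih =>
    obtain ⟨e, heA, hE⟩ := hA.exists_sdiff_singleton h.nbr_x.nonempty
    have hlt : A \ {e} < A := sdiff_singleton_ssubset.2 heA
    have heE : e ∉ A \ {e} := fun h => h.2 rfl
    obtain ⟨E, rfl, hEeq⟩ : ∃ E, A = insert e E ∧ A \ {e} = E :=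
      ⟨_, (insert_sdiff_self_of_mem heA).symm, rfl⟩
    rw [hEeq] at hE hlt heE
    have ih_E {x y z : U} : IsAttachedTriple G E x y z → HasTripod G E x y z := ih E hlt hE
    by_cases hx : HasNeighborIn G E x
    · by_cases hy : HasNeighborIn G E y
      · by_cases hz : HasNeighborIn G E z
        · exact (ih_E { h with
            notMem_x := fun hxE => h.notMem_x (.inr hxE)
            notMem_y := fun hyE => h.notMem_y (.inr hyE)
            notMem_z := fun hzE => h.notMem_z (.inr hzE)
            nbr_x := hx
            nbr_y := hy
            nbr_z := hz }).mono hlt.1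
        · exact h.hasTripod_insert_of_not_hasNeighborIn hG hA hE heE hz ih_E
      · exact (h.swap_right.hasTripod_insert_of_not_hasNeighborIn hG hA hE heE hy ih_E).swap_right
    · exact (h.swap_left.swap_right.hasTripod_insert_of_not_hasNeighborIn hG hA hE heE hx
        ih_E).swap_right.swap_left

end Tripods

section TripodThetas

variable {U : Type} {G : SimpleGraph U} {A B : Set U} {p q x y z : U}

theorem HasTripodAt.containsTheta (h : HasTripodAt G A x y z p) (h' : HasTripodAt G B x y z q)
    (hAB : Anticomplete G A B) : ContainsTheta G := by
  obtain ⟨Dx, Dy, Dz, h⟩ := h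
  obtain ⟨Ex, Ey, Ez, h'⟩ := h'
  exact containsTheta_of_connects (hAB p h.center_mem q h'.center_mem)
    (h.leg_x.connects_insert_union h'.leg_x) (h.leg_y.connects_insert_union h'.leg_y)
    (h.leg_z.connects_insert_union h'.leg_z)
    (hAB.insert_union_insert_union h.subset_x h.subset_y h'.subset_x h'.subset_y h.anti_xy
      h'.anti_xy)
    (hAB.insert_union_insert_union h.subset_x h.subset_z h'.subset_x h'.subset_z h.anti_xz
      h'.anti_xz)
    (hAB.insert_union_insert_union h.subset_y h.subset_z h'.subset_y h'.subset_z h.anti_yz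
      h'.anti_yz)

theorem HasTripodAt.containsTheta_of_hasBend (h : HasTripodAt G A x y z p) (h' : HasBend G B x y z)
    (hAB : Anticomplete G A B) (hzp : ¬ G.Adj z p) : ContainsTheta G := by
  obtain ⟨Dx, Dy, Dz, h⟩ := h
  obtain ⟨Ex, Ey, h'⟩ := h'
  have hzA : z ∉ A := hAB.notMem_of_hasNeighborIn (h'.connects_x.right.mono h'.subset_x)
  have hpz : Gᶜ.Adj p z := ⟨fun heq => hzA (heq ▸ h.center_mem), fun hpz => hzp hpz.symm⟩
  exact containsTheta_of_connects hpz
    (h.leg_x.connects_insert_union (.inr h'.connects_x))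
    (h.leg_y.connects_insert_union (.inr h'.connects_y))
    (h.leg_z.connects_of_not_adj hzp).symm
    (hAB.insert_union_insert_union h.subset_x h.subset_y h'.subset_x h'.subset_y h.anti_xy h'.anti)
    ((h.anti_xz.mono subset_rfl (subset_insert z Dz)).insert_union
      (hAB.symm.mono h'.subset_x h.subset_z))
    ((h.anti_yz.mono subset_rfl (subset_insert z Dz)).insert_union
      (hAB.symm.mono h'.subset_y h.subset_z))

theorem HasBend.containsTheta (h : HasBend G A x y z) (h' : HasBend G B x z y)
    (hAB : Anticomplete G A B) (hyz : Gᶜ.Adj y z) : ContainsTheta G := by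
  obtain ⟨Dx, Dy, h⟩ := h
  obtain ⟨Ex, Ez, h'⟩ := h'
  refine containsTheta_of_connects hyz
    (IsLeg.connects_insert_union (.inr h'.connects_x) (.inr h.connects_x))
    h.connects_y h'.connects_y.symm ?_ ?_ (hAB.mono h.subset_y h'.subset_y)
  · rw [union_comm]
    exact (h.anti.mono subset_rfl (subset_insert y Dy)).insert_union
      (hAB.symm.mono h'.subset_x h.subset_y)
  · exact (h'.anti.mono subset_rfl (subset_insert z Ez)).insert_union
      (hAB.mono h.subset_x h'.subset_y)

end TripodThetas

/-! ### Minimal connected sets -/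

section MinimalConnectors

variable {U : Type*} {G : SimpleGraph U} {A B C : Set U} {f : ℕ → U} {n i : ℕ} {c m t x y z : U}

/-- `A` is connected, every vertex of `C` has a neighbour in `A`, and no vertex of `A` can be
removed without destroying one of these two properties. -/
structure IsMinimalConnector (G : SimpleGraph U) (A C : Set U) : Prop where
  preconnectedOn : PreconnectedOn G A
  hasNeighborIn : ∀ c ∈ C, HasNeighborIn G A c
  exists_not_hasNeighborIn :
    ∀ e ∈ A, PreconnectedOn G (A \ {e}) → ∃ c ∈ C, ¬ HasNeighborIn G (A \ {e}) c

/-- The vertices of `A` whose removal keeps `A` connected. -/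
def nonCutVertices (G : SimpleGraph U) (A : Set U) : Set U :=
  {m | m ∈ A ∧ PreconnectedOn G (A \ {m})}

/-- The vertex `m` is the one and only neighbour of `c` in `A`. -/
structure IsOnlyNeighborIn (G : SimpleGraph U) (A : Set U) (c m : U) : Prop where
  adj : G.Adj c m
  eq_of_adj : ∀ a ∈ A, G.Adj c a → a = m

theorem exists_isMinimalConnector [Finite U] (hA : PreconnectedOn G A)
    (hC : ∀ c ∈ C, HasNeighborIn G A c) : ∃ A' ⊆ A, IsMinimalConnector G A' C := by
  obtain ⟨Q, ⟨hQA, hQ, hQC⟩, hmin⟩ :=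
    (toFinite {Q | Q ⊆ A ∧ PreconnectedOn G Q ∧ ∀ c ∈ C, HasNeighborIn G Q c}).exists_minimal
      ⟨A, subset_rfl, hA, hC⟩
  refine ⟨Q, hQA, hQ, hQC, fun e he hQe => ?_⟩
  by_contra! hcon
  exact (hmin ⟨sdiff_subset.trans hQA, hQe, hcon⟩ sdiff_subset he).2 rfl

theorem PreconnectedOn.nontrivial_nonCutVertices [Finite U] (hA : PreconnectedOn G A)
    (hA₂ : A.Nontrivial) : (nonCutVertices G A).Nontrivial := by
  have exists_ne (u : U) (hu : u ∈ A) : ∃ a ∈ nonCutVertices G A, a ≠ u := by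
    have hss : {u} ⊂ A :=
      (singleton_subset_iff.2 hu).ssubset_of_ne fun h => not_nontrivial_singleton (h ▸ hA₂)
    obtain ⟨a, ha, hau, hcut⟩ :=
      hA.exists_sdiff_singleton_of_ssubset (.singleton u) (singleton_nonempty u) hss
    exact ⟨a, ⟨ha, hcut⟩, hau⟩
  obtain ⟨u, hu⟩ := hA₂.nonempty
  obtain ⟨a, ha, -⟩ := exists_ne u hu
  obtain ⟨b, hb, hba⟩ := exists_ne a ha.1
  exact ⟨a, ha, b, hb, hba.symm⟩

theorem HasBend.not_subsingleton (h : HasBend G B x y z) :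
    ¬ (B ∩ G.neighborSet z).Subsingleton := by
  obtain ⟨Dx, Dy, h⟩ := h
  obtain ⟨d, hd, hzd⟩ := h.connects_x.right
  obtain ⟨e, he, hze⟩ := h.connects_y.right
  exact fun hs => (h.anti d (.inr hd) e (.inr he)).1 (hs ⟨h.subset_x hd, hzd⟩ ⟨h.subset_y he, hze⟩)

theorem IsInducedPath.isLeg_image_Iio (hf : IsInducedPath G f n) (hi : i ≤ n)
    (ht : G.Adj t (f 0)) : IsLeg G (f '' Iio i) t (f i) := by
  rcases i with - | i
  · rw [show Iio 0 = (∅ : Set ℕ) from Iio_bot, image_empty]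
    exact .empty ht
  · rw [show Iio (i + 1) = Icc 0 i by ext; simp]
    exact .inr ⟨hf.preconnectedOn 0 (by omega), ⟨f 0, mem_image_of_mem f ⟨le_rfl, i.zero_le⟩, ht⟩,
      f i, mem_image_of_mem f ⟨i.zero_le, le_rfl⟩, (hf.adj (by omega)).symm⟩

theorem IsOnlyNeighborIn.subsingleton (h : IsOnlyNeighborIn G A c m) :
    (A ∩ G.neighborSet c).Subsingleton :=
  fun a ha b hb => (h.eq_of_adj a ha.1 ha.2).trans (h.eq_of_adj b hb.1 hb.2).symm

theorem HasNeighborIn.isOnlyNeighborIn_of_not_sdiff (h : HasNeighborIn G A c)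
    (hm : ¬ HasNeighborIn G (A \ {m}) c) : IsOnlyNeighborIn G A c m := by
  have eq_of_adj : ∀ a ∈ A, G.Adj c a → a = m :=
    fun a ha hca => by_contra fun ham => hm ⟨a, ⟨ha, ham⟩, hca⟩
  obtain ⟨a, ha, hca⟩ := h
  exact ⟨eq_of_adj a ha hca ▸ hca, eq_of_adj⟩

end MinimalConnectors

section Frames

variable {U : Type*} {G : SimpleGraph U} {A B C : Set U} {a a' : U} {c : U → U}
  {f : ℕ → U} {n : ℕ}

/-- Every non-cut vertex `m` of `A` is the only neighbour in `A` of a vertex `c m` which also has a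
neighbour in `B`, and the vertices `c m` are distinct and pairwise non-adjacent. -/
structure IsPrivateAttachment (G : SimpleGraph U) (A B : Set U) (c : U → U) : Prop where
  isOnlyNeighborIn : ∀ m ∈ nonCutVertices G A, IsOnlyNeighborIn G A (c m) m
  compl_adj : (nonCutVertices G A).Pairwise fun m m' => Gᶜ.Adj (c m) (c m')
  hasNeighborIn : ∀ m ∈ nonCutVertices G A, HasNeighborIn G B (c m)

theorem IsMinimalConnector.exists_isPrivateAttachment (hA : IsMinimalConnector G A C)
    (hC : G.IsIndepSet C) (hBC : ∀ c ∈ C, HasNeighborIn G B c) :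
    ∃ c, IsPrivateAttachment G A B c := by
  classical
  have exists_private (m : U) :
      ∃ c, m ∈ nonCutVertices G A → c ∈ C ∧ IsOnlyNeighborIn G A c m := by
    by_cases hm : m ∈ nonCutVertices G A
    · obtain ⟨c, hc, hcm⟩ := hA.exists_not_hasNeighborIn m hm.1 hm.2
      exact ⟨c, fun _ => ⟨hc, (hA.hasNeighborIn c hc).isOnlyNeighborIn_of_not_sdiff hcm⟩⟩
    · exact ⟨m, fun h => absurd h hm⟩
  choose c hc using exists_private
  refine ⟨c, fun m hm => (hc m hm).2, fun m hm m' hm' hne => ?_, fun m hm => hBC _ (hc m hm).1⟩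
  have hcc : c m ≠ c m' := fun h => hne ((hc m' hm').2.eq_of_adj m hm.1 (h ▸ (hc m hm).2.adj))
  exact ⟨hcc, hC (hc m hm).1 (hc m' hm').1 hcc⟩

/-- Connected anticomplete sets `A` and `B` with a private attachment `c`, together with two
non-cut vertices `a`, `a'` of `A` whose attachments have at most one neighbour in `B`. -/
structure IsFrame (G : SimpleGraph U) (A B : Set U) (c : U → U) (a a' : U) : Prop
    extends IsPrivateAttachment G A B c where
  preconnectedOn_left : PreconnectedOn G A
  preconnectedOn_right : PreconnectedOn G B
  anticomplete : Anticomplete G A B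
  mem_left : a ∈ nonCutVertices G A
  mem_right : a' ∈ nonCutVertices G A
  ne : a ≠ a'
  subsingleton_left : (B ∩ G.neighborSet (c a)).Subsingleton
  subsingleton_right : (B ∩ G.neighborSet (c a')).Subsingleton

theorem IsPrivateAttachment.exists_isFrame [Finite U] (h : IsPrivateAttachment G A B c)
    (hA : PreconnectedOn G A) (hA₂ : A.Nontrivial) (hB : PreconnectedOn G B)
    (hAB : Anticomplete G A B) : ∃ B' ⊆ B, ∃ a a', IsFrame G A B' c a a' := by
  obtain ⟨B', hB'B, hB'⟩ := exists_isMinimalConnector (C := c '' nonCutVertices G A) hB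
    (forall_mem_image.2 h.hasNeighborIn)
  have hB'nbr := forall_mem_image.1 hB'.hasNeighborIn
  suffices ∃ a ∈ nonCutVertices G A, ∃ a' ∈ nonCutVertices G A, a ≠ a' ∧
      (B' ∩ G.neighborSet (c a)).Subsingleton ∧ (B' ∩ G.neighborSet (c a')).Subsingleton by
    obtain ⟨a, ha, a', ha', hne, hs, hs'⟩ := this
    exact ⟨B', hB'B, a, a', { h with
      hasNeighborIn := fun m hm => hB'nbr hm
      preconnectedOn_left := hA
      preconnectedOn_right := hB'.preconnectedOn
      anticomplete := hAB.mono subset_rfl hB'B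
      mem_left := ha
      mem_right := ha'
      ne := hne
      subsingleton_left := hs
      subsingleton_right := hs' }⟩
  by_cases hB'₂ : B'.Nontrivial
  · have exists_private (b : U) (hb : b ∈ nonCutVertices G B') :
        ∃ m ∈ nonCutVertices G A, IsOnlyNeighborIn G B' (c m) b := by
      obtain ⟨_, ⟨m, hm, rfl⟩, hmb⟩ := hB'.exists_not_hasNeighborIn b hb.1 hb.2
      exact ⟨m, hm, (hB'nbr hm).isOnlyNeighborIn_of_not_sdiff hmb⟩
    obtain ⟨b, hb, b', hb', hbb'⟩ := hB'.preconnectedOn.nontrivial_nonCutVertices hB'₂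
    obtain ⟨m, hm, hmb⟩ := exists_private b hb
    obtain ⟨m', hm', hmb'⟩ := exists_private b' hb'
    refine ⟨m, hm, m', hm', ?_, hmb.subsingleton, hmb'.subsingleton⟩
    rintro rfl
    exact hbb' (hmb'.eq_of_adj b hb.1 hmb.adj)
  · obtain ⟨a, ha, a', ha', hne⟩ := hA.nontrivial_nonCutVertices hA₂
    rw [not_nontrivial_iff] at hB'₂
    exact ⟨a, ha, a', ha', hne, hB'₂.anti inter_subset_left, hB'₂.anti inter_subset_left⟩

/-- `f 0, …, f n` is an induced path from `a` to `a'` inside `A`. -/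
structure IsSpine (G : SimpleGraph U) (A : Set U) (a a' : U) (f : ℕ → U) (n : ℕ) : Prop where
  isInducedPath : IsInducedPath G f n
  mem : ∀ i ≤ n, f i ∈ A
  zero : f 0 = a
  last : f n = a'

namespace IsSpine

theorem subset (hf : IsSpine G A a a' f n) : f '' Icc 0 n ⊆ A :=
  image_subset_iff.2 fun i hi => hf.mem i hi.2

theorem preconnectedOn (hf : IsSpine G A a a' f n) : PreconnectedOn G (f '' Icc 0 n) :=
  hf.isInducedPath.preconnectedOn 0 le_rfl

theorem left_mem (hf : IsSpine G A a a' f n) : a ∈ f '' Icc 0 n :=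
  ⟨0, ⟨le_rfl, n.zero_le⟩, hf.zero⟩

theorem right_mem (hf : IsSpine G A a a' f n) : a' ∈ f '' Icc 0 n :=
  ⟨n, ⟨n.zero_le, le_rfl⟩, hf.last⟩

end IsSpine

theorem PreconnectedOn.exists_isSpine (hA : PreconnectedOn G A) (ha : a ∈ A) (ha' : a' ∈ A) :
    ∃ n f, IsSpine G A a a' f n := by
  obtain ⟨n, f, hfA, hf, hfa, hfa'⟩ :=
    hA.exists_isInducedPath (· = a) (· = a') ⟨a, ha, rfl⟩ ⟨a', ha', rfl⟩
  exact ⟨n, f, hf, hfA, (hfa 0 n.zero_le).2 rfl, (hfa' n le_rfl).2 rfl⟩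

end Frames

namespace IsFrame

variable {U : Type} {G : SimpleGraph U} {A A' B P : Set U} {a a' m m₁ m₂ m₃ p q : U} {c : U → U}
  {f : ℕ → U} {n u : ℕ}

theorem notMem_left (h : IsFrame G A B c a a') (hm : m ∈ nonCutVertices G A) : c m ∉ A :=
  h.anticomplete.notMem_of_hasNeighborIn (h.hasNeighborIn m hm)

theorem notMem_right (h : IsFrame G A B c a a') (hm : m ∈ nonCutVertices G A) : c m ∉ B :=
  h.anticomplete.symm.notMem_of_hasNeighborIn ⟨m, hm.1, (h.isOnlyNeighborIn m hm).adj⟩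

theorem compl_adj_of_ne (h : IsFrame G A B c a a') (hm : m ∈ nonCutVertices G A) (hq : q ∈ A)
    (hne : q ≠ m) : Gᶜ.Adj (c m) q :=
  ⟨fun heq => h.notMem_left hm (heq ▸ hq),
    fun hadj => hne ((h.isOnlyNeighborIn m hm).eq_of_adj q hq hadj)⟩

theorem hasTripodAt_of_adj (h : IsFrame G A B c a a') (hG : G.CliqueFree 3)
    (hf : IsSpine G A a a' f n) (hm : m ∈ nonCutVertices G A) (hmP : m ∉ f '' Icc 0 n)
    (hu : u + 1 ≤ n) (hsucc : f (u + 1) ∈ nonCutVertices G A) (hmu : G.Adj m (f u))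
    (hmin : ∀ t < u, ¬ G.Adj m (f t)) :
    HasTripodAt G A (c a) (c m) (c (f (u + 1))) (f u) := by
  have ne_of_mem {t : ℕ} (ht : t ≤ n) : f t ≠ m := fun heq => hmP ⟨t, ⟨t.zero_le, ht⟩, heq⟩
  have ham : a ≠ m := hf.zero ▸ ne_of_mem n.zero_le
  have ne_succ {t : ℕ} (ht : t < u + 1) : f t ≠ f (u + 1) := (hf.isInducedPath t _ ht hu).1
  have has : a ≠ f (u + 1) := hf.zero ▸ ne_succ u.succ_pos
  have adj_own {q : U} (hq : q ∈ nonCutVertices G A) : G.Adj (c q) q :=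
    (h.isOnlyNeighborIn q hq).adj
  have hDA : f '' Iio u ⊆ A :=
    image_subset_iff.2 fun t (ht : t < u) => hf.mem t (by omega)
  have connects {q : U} (hq : q ∈ nonCutVertices G A) (huq : G.Adj (f u) q) :
      Connects G {q} (c q) (f u) :=
    ⟨.singleton q, ⟨q, rfl, adj_own hq⟩, ⟨q, rfl, huq⟩⟩
  refine ⟨f '' Iio u, {m}, {f (u + 1)}, hf.mem u (by omega), hDA, singleton_subset_iff.2 hm.1,
    singleton_subset_iff.2 hsucc.1,
    hf.isInducedPath.isLeg_image_Iio (by omega) (by rw [hf.zero]; exact adj_own h.mem_left),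
    .inr (connects hm hmu.symm), .inr (connects hsucc (hf.isInducedPath.adj (by omega))),
    ?_, ?_, ?_⟩
  · refine .insert_insert (h.compl_adj h.mem_left hm ham) ?_ ?_ ?_
    · rintro _ rfl
      exact h.compl_adj_of_ne h.mem_left hm.1 ham.symm
    · rintro _ ⟨t, ht : t < u, rfl⟩
      exact h.compl_adj_of_ne hm (hDA ⟨t, ht, rfl⟩) (ne_of_mem (by omega))
    · rintro _ ⟨t, ht : t < u, rfl⟩ _ rfl
      exact ⟨ne_of_mem (by omega), fun hadj => hmin t ht hadj.symm⟩
  · refine .insert_insert (h.compl_adj h.mem_left hsucc has) ?_ ?_ ?_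
    · rintro _ rfl
      exact h.compl_adj_of_ne h.mem_left hsucc.1 has.symm
    · rintro _ ⟨t, ht : t < u, rfl⟩
      exact h.compl_adj_of_ne hsucc (hDA ⟨t, ht, rfl⟩) (ne_succ (by omega))
    · rintro _ ⟨t, ht : t < u, rfl⟩ _ rfl
      exact hf.isInducedPath.compl_adj (by omega) hu
  · refine .insert_insert (h.compl_adj hm hsucc (ne_of_mem hu).symm) ?_ ?_ ?_
    · rintro _ rfl
      exact h.compl_adj_of_ne hm hsucc.1 (ne_of_mem hu)
    · rintro _ rfl
      exact h.compl_adj_of_ne hsucc hm.1 (ne_of_mem hu).symm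
    · rintro _ rfl _ rfl
      exact ⟨(ne_of_mem hu).symm,
        not_adj_of_cliqueFree_three hG hmu (hf.isInducedPath.adj (by omega))⟩

variable [Finite U]

theorem eq_of_hasTripodAt (h : IsFrame G A B c a a') (hT : ¬ ContainsTheta G)
    (hG : G.CliqueFree 3) (h₁ : m₁ ∈ nonCutVertices G A) (h₂ : m₂ ∈ nonCutVertices G A)
    (h₃ : m₃ ∈ nonCutVertices G A) (h₁₂ : m₁ ≠ m₂) (h₁₃ : m₁ ≠ m₃) (h₂₃ : m₂ ≠ m₃)
    (hp : HasTripodAt G A (c m₁) (c m₂) (c m₃) p) :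
    (p = m₁ ∨ p = m₂ ∨ p = m₃) ∧ ¬ (B ∩ G.neighborSet (c p)).Subsingleton := by
  have hB : HasTripod G B (c m₁) (c m₂) (c m₃) := IsAttachedTriple.hasTripod hG
    h.preconnectedOn_right ⟨h.compl_adj h₁ h₂ h₁₂, h.compl_adj h₁ h₃ h₁₃, h.compl_adj h₂ h₃ h₂₃,
      h.notMem_right h₁, h.notMem_right h₂, h.notMem_right h₃, h.hasNeighborIn _ h₁,
      h.hasNeighborIn _ h₂, h.hasNeighborIn _ h₃⟩
  have eq_of_bend {x y m : U} (hm : m ∈ nonCutVertices G A) (hxy : HasTripodAt G A x y (c m) p)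
      (hbend : HasBend G B x y (c m)) : p = m := by
    obtain ⟨_, _, _, hp⟩ := id hp
    exact by_contra fun hpm => hT (hxy.containsTheta_of_hasBend hbend h.anticomplete
      (h.compl_adj_of_ne hm hp.center_mem hpm).2)
  rcases hB with ⟨q, hq⟩ | hq | hq | hq
  · exact absurd (hp.containsTheta hq h.anticomplete) hT
  · obtain rfl := eq_of_bend h₁ hp.swap_left.swap_right hq
    exact ⟨.inl rfl, hq.not_subsingleton⟩
  · obtain rfl := eq_of_bend h₂ hp.swap_right hq
    exact ⟨.inr (.inl rfl), hq.not_subsingleton⟩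
  · obtain rfl := eq_of_bend h₃ hp hq
    exact ⟨.inr (.inr rfl), hq.not_subsingleton⟩

theorem exists_compl_adj_of_subset (h : IsFrame G A B c a a') (hT : ¬ ContainsTheta G)
    (hG : G.CliqueFree 3) (hA' : PreconnectedOn G A') (hA'A : A' ⊆ A) (ha : a ∈ A') (ha' : a' ∈ A')
    (hm : m ∈ nonCutVertices G A) (hmA' : m ∈ A') (ham : a ≠ m) (ham' : a' ≠ m) :
    ∃ d ∈ A', ∃ d' ∈ A', G.Adj m d ∧ G.Adj m d' ∧ Gᶜ.Adj d d' := by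
  have nbr {q : U} (hq : q ∈ nonCutVertices G A) (hqA' : q ∈ A') : HasNeighborIn G A' (c q) :=
    ⟨q, hqA', (h.isOnlyNeighborIn q hq).adj⟩
  have not_bend {x y q : U} (hq : q ∈ nonCutVertices G A) : ¬ HasBend G A' x y (c q) :=
    fun hbend => (hbend.mono hA'A).not_subsingleton (h.isOnlyNeighborIn q hq).subsingleton
  have htripod : HasTripod G A' (c a) (c a') (c m) := IsAttachedTriple.hasTripod hG hA'
    ⟨h.compl_adj h.mem_left h.mem_right h.ne, h.compl_adj h.mem_left hm ham,
      h.compl_adj h.mem_right hm ham', fun hc => h.notMem_left h.mem_left (hA'A hc),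
      fun hc => h.notMem_left h.mem_right (hA'A hc), fun hc => h.notMem_left hm (hA'A hc),
      nbr h.mem_left ha, nbr h.mem_right ha', nbr hm hmA'⟩
  rcases htripod with ⟨p, hp⟩ | hbend | hbend | hbend
  · obtain ⟨hcenter, hp₂⟩ := h.eq_of_hasTripodAt hT hG h.mem_left h.mem_right hm h.ne ham ham'
      (hp.mono hA'A)
    obtain rfl | rfl | rfl := hcenter
    · exact absurd h.subsingleton_left hp₂
    · exact absurd h.subsingleton_right hp₂
    · obtain ⟨D, D', _, hp⟩ := hp
      obtain ⟨d, hd, hpd⟩ :=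
        (hp.leg_x.connects_of_not_adj (h.compl_adj_of_ne h.mem_left hm.1 ham.symm).2).right
      obtain ⟨d', hd', hpd'⟩ :=
        (hp.leg_y.connects_of_not_adj (h.compl_adj_of_ne h.mem_right hm.1 ham'.symm).2).right
      exact ⟨d, hp.subset_x hd, d', hp.subset_y hd', hpd, hpd',
        hp.anti_xy d (.inr hd) d' (.inr hd')⟩
  · exact absurd hbend (not_bend h.mem_left)
  · exact absurd hbend (not_bend h.mem_right)
  · exact absurd hbend (not_bend hm)

theorem hasNeighborIn_of_mem_nonCutVertices (h : IsFrame G A B c a a') (hT : ¬ ContainsTheta G)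
    (hG : G.CliqueFree 3) (hP : PreconnectedOn G P) (hPA : P ⊆ A) (ha : a ∈ P) (ha' : a' ∈ P)
    (hm : m ∈ nonCutVertices G A) (hmP : m ∉ P) : HasNeighborIn G P m := by
  by_contra hmnbr
  have ham : a ≠ m := fun heq => hmP (heq ▸ ha)
  have ham' : a' ≠ m := fun heq => hmP (heq ▸ ha')
  have haA : a ∈ A \ {m} := ⟨h.mem_left.1, ham⟩
  have hmA : HasNeighborIn G (A \ {m}) m := by
    obtain ⟨e, he, heA, hnbr⟩ := h.preconnectedOn_left.exists_hasNeighborIn_of_ssubset ⟨a, haA⟩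
      (sdiff_singleton_ssubset.2 hm.1)
    obtain rfl : e = m := by_contra fun hne => heA ⟨he, hne⟩
    exact hnbr
  obtain ⟨l, g, hgA, hpath, hmg, hPg⟩ :=
    hm.2.exists_isInducedPath (G.Adj m) (· ∈ P) hmA ⟨a, haA, ha⟩
  have hg₀ : g 0 ∈ g '' Icc 0 l := mem_image_of_mem g ⟨le_rfl, l.zero_le⟩
  have hconn : PreconnectedOn G (g '' Icc 0 l ∪ P) :=
    (hpath.preconnectedOn 0 le_rfl).union_of_inter_nonempty hP
      ⟨g l, mem_image_of_mem g ⟨l.zero_le, le_rfl⟩, (hPg l le_rfl).2 rfl⟩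
  have hsub : insert m (g '' Icc 0 l ∪ P) ⊆ A :=
    insert_subset hm.1 (union_subset (image_subset_iff.2 fun t ht => (hgA t ht.2).1) hPA)
  have eq_of_adj : ∀ d ∈ insert m (g '' Icc 0 l ∪ P), G.Adj m d → d = g 0 := by
    rintro d (rfl | ⟨t, ht, rfl⟩ | hd) hmd
    · exact absurd hmd G.irrefl
    · rw [(hmg t ht.2).1 hmd]
    · exact absurd ⟨d, hd, hmd⟩ hmnbr
  obtain ⟨d, hd, d', hd', hmd, hmd', hdd'⟩ := h.exists_compl_adj_of_subset hT hG
    (hconn.insert ⟨g 0, .inl hg₀, (hmg 0 l.zero_le).2 rfl⟩) hsub (.inr (.inr ha))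
    (.inr (.inr ha')) hm (mem_insert _ _) ham ham'
  exact hdd'.1 ((eq_of_adj d hd hmd).trans (eq_of_adj d' hd' hmd').symm)

theorem hasNeighborIn_of_notMem (h : IsFrame G A B c a a') (hT : ¬ ContainsTheta G)
    (hG : G.CliqueFree 3) (hP : PreconnectedOn G P) (hPA : P ⊆ A) (ha : a ∈ P) (ha' : a' ∈ P)
    (hq : q ∈ A) (hqP : q ∉ P) : HasNeighborIn G P q := by
  by_contra hqnbr
  have hstar : PreconnectedOn G {v | v ∈ A ∧ (v ∈ P ∨ HasNeighborIn G P v)} :=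
    hP.of_subset_of_hasNeighborIn (fun v hv => ⟨hPA hv, .inl hv⟩) fun v hv => hv.2
  obtain ⟨e, he, heP, hcut⟩ := h.preconnectedOn_left.exists_sdiff_singleton_of_ssubset hstar
    ⟨a, hPA ha, .inl ha⟩ ⟨fun v hv => hv.1, fun hsub => (hsub hq).2.elim hqP hqnbr⟩
  exact heP ⟨he, .inr (h.hasNeighborIn_of_mem_nonCutVertices hT hG hP hPA ha ha' ⟨he, hcut⟩
    fun he' => heP ⟨he, .inl he'⟩)⟩

theorem mem_nonCutVertices_of_notMem (h : IsFrame G A B c a a') (hT : ¬ ContainsTheta G)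
    (hG : G.CliqueFree 3) (hP : PreconnectedOn G P) (hPA : P ⊆ A) (ha : a ∈ P) (ha' : a' ∈ P)
    (hq : q ∈ A) (hqP : q ∉ P) : q ∈ nonCutVertices G A := by
  refine ⟨hq, hP.of_subset_of_hasNeighborIn (subset_sdiff_singleton hPA hqP) fun e he => ?_⟩
  exact or_iff_not_imp_left.2 (h.hasNeighborIn_of_notMem hT hG hP hPA ha ha' he.1)

theorem exists_adj_adj_of_notMem (h : IsFrame G A B c a a') (hT : ¬ ContainsTheta G)
    (hG : G.CliqueFree 3) (hf : IsSpine G A a a' f n) (hm : m ∈ A) (hmP : m ∉ f '' Icc 0 n) :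
    ∃ i j, i + 2 ≤ j ∧ j ≤ n ∧ G.Adj m (f i) ∧ G.Adj m (f j) := by
  have hmcut := h.mem_nonCutVertices_of_notMem hT hG hf.preconnectedOn hf.subset hf.left_mem
    hf.right_mem hm hmP
  have hnbr := h.hasNeighborIn_of_notMem hT hG hf.preconnectedOn hf.subset hf.left_mem
    hf.right_mem hm hmP
  obtain ⟨d, hd, d', hd', hmd, hmd', hdd'⟩ := h.exists_compl_adj_of_subset hT hG
    (hf.preconnectedOn.insert hnbr) (insert_subset hm hf.subset) (.inr hf.left_mem)
    (.inr hf.right_mem) hmcut (mem_insert _ _) (fun heq => hmP (heq ▸ hf.left_mem))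
    (fun heq => hmP (heq ▸ hf.right_mem))
  obtain ⟨i, hi, rfl⟩ := hd.resolve_left hmd.ne'
  obtain ⟨j, hj, rfl⟩ := hd'.resolve_left hmd'.ne'
  have hij : i ≠ j := fun heq => hdd'.1 (heq ▸ rfl)
  have hnot := (hf.isInducedPath.adj_iff hi.2 hj.2).not.1 hdd'.2
  rcases lt_or_ge i j with hlt | hge
  · exact ⟨i, j, by omega, hj.2, hmd, hmd'⟩
  · exact ⟨j, i, by omega, hi.2, hmd', hmd⟩

theorem succ_mem_nonCutVertices (h : IsFrame G A B c a a') (hT : ¬ ContainsTheta G)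
    (hG : G.CliqueFree 3) (hf : IsSpine G A a a' f n) (hm : m ∈ A) (hmP : m ∉ f '' Icc 0 n) {j : ℕ}
    (huj : u + 2 ≤ j) (hj : j ≤ n) (hmu : G.Adj m (f u)) (hmj : G.Adj m (f j)) :
    f (u + 1) ∈ nonCutVertices G A := by
  have hpath := hf.isInducedPath
  have hdetour : PreconnectedOn G (insert m (f '' Icc 0 u) ∪ f '' Icc (u + 2) n) :=
    ((hpath.preconnectedOn 0 (by omega)).insert
      ⟨f u, mem_image_of_mem f ⟨u.zero_le, le_rfl⟩, hmu⟩).union_of_adj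
      (hpath.preconnectedOn _ le_rfl)
      ⟨m, mem_insert _ _, f j, mem_image_of_mem f ⟨huj, hj⟩, hmj⟩
  have mem_detour {t : ℕ} (ht : t ≤ n) (hne : t ≠ u + 1) :
      f t ∈ insert m (f '' Icc 0 u) ∪ f '' Icc (u + 2) n := by
    rcases lt_or_ge t (u + 1) with hlt | hge
    · exact .inl (.inr ⟨t, ⟨by omega, by omega⟩, rfl⟩)
    · exact .inr ⟨t, ⟨by omega, ht⟩, rfl⟩
  have mem_sdiff {t : ℕ} (ht : t ≤ n) (hne : t ≠ u + 1) : f t ∈ A \ {f (u + 1)} :=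
    ⟨hf.mem t ht, fun heq => hne (hpath.injOn ht (mem_Iic.2 (by omega)) heq)⟩
  refine ⟨hf.mem _ (by omega), hdetour.of_subset_of_hasNeighborIn ?_ ?_⟩
  · rintro v ((rfl | ⟨t, ht, rfl⟩) | ⟨t, ht, rfl⟩)
    · exact ⟨hm, fun heq => hmP ⟨u + 1, ⟨by omega, by omega⟩, heq.symm⟩⟩
    · exact mem_sdiff (by have := ht.2; omega) (by have := ht.2; omega)
    · exact mem_sdiff ht.2 (by have := ht.1; omega)
  · rintro e ⟨heA, hes⟩
    by_cases heP : e ∈ f '' Icc 0 n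
    · obtain ⟨t, ht, rfl⟩ := heP
      exact .inl (mem_detour ht.2 fun heq => hes (congrArg f heq))
    · obtain ⟨i, i', hii', hi', hei, hei'⟩ := h.exists_adj_adj_of_notMem hT hG hf heA heP
      by_cases hi : i = u + 1
      · exact .inr ⟨f i', mem_detour hi' (by omega), hei'⟩
      · exact .inr ⟨f i, mem_detour (by omega) hi, hei⟩

theorem subset_image_of_isSpine (h : IsFrame G A B c a a') (hT : ¬ ContainsTheta G)
    (hG : G.CliqueFree 3) (hf : IsSpine G A a a' f n) : A ⊆ f '' Icc 0 n := by
  classical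
  intro m hm
  by_contra hmP
  obtain ⟨i, j, hij, hj, hmi, hmj⟩ := h.exists_adj_adj_of_notMem hT hG hf hm hmP
  have hex : ∃ t, G.Adj m (f t) := ⟨i, hmi⟩
  have hui : Nat.find hex ≤ i := Nat.find_min' hex hmi
  obtain ⟨u, hu⟩ : ∃ u, u = Nat.find hex := ⟨_, rfl⟩
  have hmu : G.Adj m (f u) := hu ▸ Nat.find_spec hex
  have hmcut := h.mem_nonCutVertices_of_notMem hT hG hf.preconnectedOn hf.subset hf.left_mem
    hf.right_mem hm hmP
  have hsucc := h.succ_mem_nonCutVertices hT hG hf hm hmP (by omega) hj hmu hmj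
  have ne_of_mem {t : ℕ} (ht : t ≤ n) : f t ≠ m := fun heq => hmP ⟨t, ⟨t.zero_le, ht⟩, heq⟩
  have ne_succ {t : ℕ} (ht : t < u + 1) : f t ≠ f (u + 1) :=
    (hf.isInducedPath t _ ht (by omega)).1
  obtain ⟨hcenter, hcenter₂⟩ := h.eq_of_hasTripodAt hT hG h.mem_left hmcut hsucc
    (hf.zero ▸ ne_of_mem n.zero_le) (hf.zero ▸ ne_succ u.succ_pos) (ne_of_mem (by omega)).symm
    (h.hasTripodAt_of_adj hG hf hmcut hmP (by omega) hsucc hmu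
      fun t ht => Nat.find_min hex (hu ▸ ht))
  rcases hcenter with heq | heq | heq
  · exact hcenter₂ (heq ▸ h.subsingleton_left)
  · exact ne_of_mem (by omega) heq
  · exact ne_succ u.lt_succ_self heq

end IsFrame

theorem IsMinimalConnector.exists_isInducedPath {U : Type} [Finite U] {G : SimpleGraph U}
    {A B C : Set U} (hA : IsMinimalConnector G A C) (hT : ¬ ContainsTheta G) (hG : G.CliqueFree 3)
    (hC : G.IsIndepSet C) (hC₀ : C.Nonempty) (hAB : Anticomplete G A B) (hB : PreconnectedOn G B)
    (hBC : ∀ c ∈ C, HasNeighborIn G B c) : ∃ n f, IsInducedPath G f n ∧ A = f '' Icc 0 n := by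
  by_cases hA₂ : A.Nontrivial
  · obtain ⟨c, hc⟩ := hA.exists_isPrivateAttachment hC hBC
    obtain ⟨B', -, a, a', hframe⟩ := hc.exists_isFrame hA.preconnectedOn hA₂ hB hAB
    obtain ⟨n, f, hf⟩ := hA.preconnectedOn.exists_isSpine hframe.mem_left.1 hframe.mem_right.1
    exact ⟨n, f, hf.isInducedPath, (hframe.subset_image_of_isSpine hT hG hf).antisymm hf.subset⟩
  · obtain ⟨c, hc⟩ := hC₀
    obtain ⟨u, hu, -⟩ := hA.hasNeighborIn c hc
    obtain rfl := (not_nontrivial_iff.1 hA₂).eq_singleton_of_mem hu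
    exact ⟨0, fun _ => u, fun i j hij hj => by omega, by simp⟩

/-! ### Vertices attached to an induced path -/

section Extents

variable {U : Type*} {G : SimpleGraph U} {f : ℕ → U} {n i j s t u lo hi : ℕ} {c x y z : U}

/-- `f lo` and `f hi` are the first and the last neighbour of `c` on the path `f 0, …, f n`. -/
structure IsExtent (G : SimpleGraph U) (f : ℕ → U) (n : ℕ) (c : U) (lo hi : ℕ) : Prop where
  le : lo ≤ hi
  hi_le : hi ≤ n
  adj_lo : G.Adj c (f lo)
  adj_hi : G.Adj c (f hi)
  mem_Icc : ∀ t ≤ n, G.Adj c (f t) → t ∈ Icc lo hi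

theorem hasNeighborIn_image_Icc (ht : t ∈ Icc i j) (hct : G.Adj c (f t)) :
    HasNeighborIn G (f '' Icc i j) c :=
  ⟨f t, mem_image_of_mem f ht, hct⟩

theorem HasNeighborIn.exists_isExtent (h : HasNeighborIn G (f '' Icc 0 n) c) :
    ∃ lo hi, IsExtent G f n c lo hi := by
  classical
  obtain ⟨_, ⟨t, ht, rfl⟩, hct⟩ := h
  have hex : ∃ t, G.Adj c (f t) := ⟨t, hct⟩
  have hle : Nat.find hex ≤ n := (Nat.find_min' hex hct).trans ht.2
  exact ⟨Nat.find hex, Nat.findGreatest (fun s => G.Adj c (f s)) n,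
    Nat.le_findGreatest hle (Nat.find_spec hex), Nat.findGreatest_le n, Nat.find_spec hex,
    Nat.findGreatest_spec (P := fun s => G.Adj c (f s)) ht.2 hct,
    fun s hs hcs => ⟨Nat.find_min' hex hcs, Nat.le_findGreatest hs hcs⟩⟩

namespace IsExtent

theorem hasNeighborIn (h : IsExtent G f n c lo hi) : HasNeighborIn G (f '' Icc 0 n) c :=
  hasNeighborIn_image_Icc ⟨hi.zero_le, h.hi_le⟩ h.adj_hi

theorem reverse (h : IsExtent G f n c lo hi) :
    IsExtent G (fun t => f (n - t)) n c (n - hi) (n - lo) := by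
  obtain ⟨hle, hhi, hclo, hchi, hmem⟩ := h
  refine ⟨by omega, by omega, ?_, ?_, fun t ht hct => ?_⟩
  · simpa only [Nat.sub_sub_self hhi] using hchi
  · simpa only [Nat.sub_sub_self (hle.trans hhi)] using hclo
  · have := hmem (n - t) (by omega) hct
    exact ⟨by have := this.2; omega, by have := this.1; omega⟩

theorem hi_ne_lo_succ (h : IsExtent G f n c lo hi) (hG : G.CliqueFree 3)
    (hf : IsInducedPath G f n) : hi ≠ lo + 1 := by
  rintro rfl
  exact not_adj_of_cliqueFree_three hG h.adj_lo (hf.adj h.hi_le) h.adj_hi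

theorem take (h : IsExtent G f n c lo hi) (hj : hi ≤ j) (hjn : j ≤ n) : IsExtent G f j c lo hi :=
  ⟨h.le, hj, h.adj_lo, h.adj_hi, fun t ht => h.mem_Icc t (ht.trans hjn)⟩

theorem take_lo (h : IsExtent G f n c lo hi) : IsExtent G f lo c lo lo :=
  ⟨le_rfl, le_rfl, h.adj_lo, h.adj_lo,
    fun t ht hct => ⟨(h.mem_Icc t (ht.trans (h.le.trans h.hi_le)) hct).1, ht⟩⟩

theorem compl_adj (h : IsExtent G f n c lo hi) (hc : c ∉ f '' Icc 0 n) (ht : t ≤ n)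
    (hne : t ∉ Icc lo hi) : Gᶜ.Adj c (f t) :=
  ⟨fun heq => hc ⟨t, ⟨t.zero_le, ht⟩, heq.symm⟩, fun hct => hne (h.mem_Icc t ht hct)⟩

theorem subsingleton (h : IsExtent G f n c u u) :
    (f '' Icc 0 n ∩ G.neighborSet c).Subsingleton := by
  have eq_of_adj {t : ℕ} (ht : t ∈ Icc 0 n) (hct : G.Adj c (f t)) : t = u :=
    le_antisymm (h.mem_Icc t ht.2 hct).2 (h.mem_Icc t ht.2 hct).1
  rintro _ ⟨⟨s, hs, rfl⟩, hcs⟩ _ ⟨⟨t, ht, rfl⟩, hct⟩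
  rw [eq_of_adj hs hcs, eq_of_adj ht hct]

end IsExtent

namespace IsInducedPath

theorem connects (hf : IsInducedPath G f n) (hj : j ≤ n) (hs : s ∈ Icc i j) (ht : t ∈ Icc i j)
    (hxs : G.Adj x (f s)) (hyt : G.Adj y (f t)) : Connects G (f '' Icc i j) x y :=
  ⟨hf.preconnectedOn i hj, hasNeighborIn_image_Icc hs hxs, hasNeighborIn_image_Icc ht hyt⟩

theorem isLeg_image_Icc_succ (hf : IsInducedPath G f n) (hi : i ≤ n) (ht : G.Adj c (f n)) :
    IsLeg G (f '' Icc (i + 1) n) c (f i) := by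
  obtain rfl | hlt := hi.eq_or_lt
  · rw [Icc_eq_empty (by omega), image_empty]
    exact .empty ht
  · exact .inr (hf.connects le_rfl ⟨hlt, le_rfl⟩ ⟨le_rfl, hlt⟩ ht (hf.adj hlt))

theorem hasTripodAt_of_isExtent (hf : IsInducedPath G f n)
    (h : IsAttachedTriple G (f '' Icc 0 n) x y z) (hx : IsExtent G f n x 0 0)
    (hy : IsExtent G f n y n n) (hz : IsExtent G f n z u u) :
    HasTripodAt G (f '' Icc 0 n) x y z (f u) := by
  have hun : u ≤ n := hz.hi_le
  refine ⟨f '' Iio u, f '' Icc (u + 1) n, ∅, mem_image_of_mem f ⟨u.zero_le, hun⟩,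
    image_mono fun t (ht : t < u) => ⟨t.zero_le, by omega⟩,
    image_mono (Icc_subset_Icc_left (by omega)), empty_subset _,
    hf.isLeg_image_Iio hun hx.adj_lo, hf.isLeg_image_Icc_succ hun hy.adj_lo, .empty hz.adj_lo,
    .insert_insert h.xy ?_ ?_ ?_, .insert_insert h.xz (by simp) ?_ .empty_right,
    .insert_insert h.yz (by simp) ?_ .empty_right⟩
  · rintro _ ⟨t, ⟨hut, htn⟩, rfl⟩
    exact hx.compl_adj h.notMem_x htn fun ht => by have := ht.2; omega
  · rintro _ ⟨t, ht : t < u, rfl⟩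
    exact hy.compl_adj h.notMem_y (by omega) fun ht' => by have := ht'.1; omega
  · rintro _ ⟨s, hs : s < u, rfl⟩ _ ⟨t, ⟨hut, htn⟩, rfl⟩
    exact hf.compl_adj (by omega) htn
  · rintro _ ⟨t, ht : t < u, rfl⟩
    exact hz.compl_adj h.notMem_z (by omega) fun ht' => by have := ht'.1; omega
  · rintro _ ⟨t, ⟨hut, htn⟩, rfl⟩
    exact hz.compl_adj h.notMem_z htn fun ht => by have := ht.2; omega

theorem hasBend_of_isExtent (hf : IsInducedPath G f n)
    (h : IsAttachedTriple G (f '' Icc 0 n) x y z) (hx : IsExtent G f n x 0 0)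
    (hy : IsExtent G f n y n n) (hz : IsExtent G f n z lo hi) (hlt : lo + 1 < hi) :
    HasBend G (f '' Icc 0 n) x y z := by
  have hhi := hz.hi_le
  refine ⟨f '' Icc 0 lo, f '' Icc hi n, image_mono (Icc_subset_Icc_right (by omega)),
    image_mono (Icc_subset_Icc_left hi.zero_le),
    hf.connects (by omega) ⟨le_rfl, lo.zero_le⟩ ⟨lo.zero_le, le_rfl⟩ hx.adj_lo hz.adj_lo,
    hf.connects le_rfl ⟨hhi, le_rfl⟩ ⟨le_rfl, hhi⟩ hy.adj_lo hz.adj_hi,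
    .insert_insert h.xy ?_ ?_ (hf.anticomplete hlt le_rfl)⟩
  · rintro _ ⟨t, ⟨ht, htn⟩, rfl⟩
    exact hx.compl_adj h.notMem_x htn fun ht' => by have := ht'.2; omega
  · rintro _ ⟨t, ⟨-, ht⟩, rfl⟩
    exact hy.compl_adj h.notMem_y (by omega) fun ht' => by have := ht'.1; omega

end IsInducedPath

end Extents

namespace IsInducedPath

variable {U : Type} {G : SimpleGraph U} {B D : Set U} {f : ℕ → U} {n i j i' j' p s t : ℕ}
  {w x y z : U}

theorem containsTheta_of_connects (hf : IsInducedPath G f n) (hfB : Anticomplete G (f '' Icc 0 n) B)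
    (hzw : Gᶜ.Adj z w) (h : Connects G (f '' Icc i j) z w) (h' : Connects G (f '' Icc i' j') z w)
    (hB : Connects G B z w) (hji' : j + 1 < i') (hj : j ≤ n) (hj' : j' ≤ n) : ContainsTheta G :=
  ThetaFree.containsTheta_of_connects hzw h h' hB (hf.anticomplete hji' hj')
    (hfB.mono (image_mono (Icc_subset_Icc i.zero_le hj)) subset_rfl)
    (hfB.mono (image_mono (Icc_subset_Icc i'.zero_le hj')) subset_rfl)

/-- The theta has ends `f p` and `z`; its third path leaves `f p` through `w`. -/
theorem containsTheta_of_adj_iff (hf : IsInducedPath G f n)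
    (hfB : Anticomplete G (f '' Icc 0 n) B) (hB : Connects G B z w) (hjn : j ≤ n)
    (hw : ∀ r ∈ Icc i j, (G.Adj w (f r) ↔ r = p)) (hzp : ¬ G.Adj z (f p)) (hs : s ∈ Ico i p)
    (ht : t ∈ Ioc p j) (hzs : G.Adj z (f s)) (hzt : G.Adj z (f t)) : ContainsTheta G := by
  obtain ⟨his, hsp⟩ := hs
  obtain ⟨hpt, htj⟩ := ht
  have notMem {v : U} (hv : HasNeighborIn G B v) {r : ℕ} (hr : r ≤ n) : f r ≠ v := fun heq =>
    hfB.notMem_of_hasNeighborIn hv ⟨r, ⟨r.zero_le, hr⟩, heq⟩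
  have anti {i' j' : ℕ} (hi' : i ≤ i') (hj' : j' ≤ j) (hp : p ∉ Icc i' j') :
      Anticomplete G (f '' Icc i' j') (insert w B) := by
    rintro _ ⟨r, hr, rfl⟩ e (rfl | he)
    · exact ⟨notMem hB.right (hr.2.trans (hj'.trans hjn)), fun hadj =>
        hp ((hw r ⟨hi'.trans hr.1, hr.2.trans hj'⟩).1 hadj.symm ▸ hr)⟩
    · exact hfB _ (mem_image_of_mem f ⟨r.zero_le, hr.2.trans (hj'.trans hjn)⟩) e he
  have hpred : G.Adj (f p) (f (p - 1)) := (hf.adj_iff (by omega) (by omega)).2 (by omega)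
  refine ThetaFree.containsTheta_of_connects (a := f p) (b := z)
    ⟨notMem hB.left (by omega), fun hadj => hzp hadj.symm⟩
    (hf.connects (i := i) (j := p - 1) (by omega) ⟨by omega, le_rfl⟩ ⟨his, by omega⟩ hpred hzs)
    (hf.connects (i := p + 1) hjn ⟨le_rfl, by omega⟩ ⟨hpt, htj⟩ (hf.adj (by omega)) hzt)
    ⟨hB.preconnectedOn.insert hB.right,
      ⟨w, mem_insert w B, ((hw p ⟨by omega, by omega⟩).2 rfl).symm⟩,
      hB.left.mono (subset_insert w B)⟩
    (hf.anticomplete (by omega) hjn) (anti le_rfl (by omega) fun hp => ?_)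
    (anti (by omega) le_rfl fun hp => ?_)
  · have := hp.2
    omega
  · exact absurd hp.1 (by omega)

theorem containsTheta_of_isExtent (hf : IsInducedPath G f n) (hG : G.CliqueFree 3)
    (hfB : Anticomplete G (f '' Icc 0 n) B) (hB : Connects G B x y) (hxy : Gᶜ.Adj x y)
    (hy₀ : G.Adj y (f 0)) (hyn : G.Adj y (f n)) (hy : ∀ r ∈ Ioo 0 n, ¬ G.Adj y (f r))
    (hx : IsExtent G f n x s t) (hs₀ : 0 < s) (hsn : s < n) : ContainsTheta G := by
  have hle := hx.le
  have htn := hx.hi_le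
  have hgap := hx.hi_ne_lo_succ hG hf
  obtain hlt | rfl := hle.lt_or_eq
  · exact hf.containsTheta_of_connects hfB hxy
      (hf.connects (i := 0) (by omega) ⟨s.zero_le, le_rfl⟩ ⟨le_rfl, s.zero_le⟩ hx.adj_lo hy₀)
      (hf.connects le_rfl ⟨le_rfl, htn⟩ ⟨htn, le_rfl⟩ hx.adj_hi hyn) hB (by omega) (by omega)
      le_rfl
  · refine hf.containsTheta_of_adj_iff (i := 0) hfB hB.symm le_rfl (fun r hr => ?_)
      (hy s ⟨hs₀, hsn⟩) ⟨le_rfl, hs₀⟩ ⟨hsn, le_rfl⟩ hy₀ hyn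
    constructor
    · intro hxr
      have := hx.mem_Icc r hr.2 hxr
      exact le_antisymm this.2 this.1
    · rintro rfl
      exact hx.adj_lo

theorem subset_image_Ioo (hf : IsInducedPath G f n) (hDf : D ⊆ f '' Icc 0 n)
    (hD : PreconnectedOn G D) (hjn : j ≤ n) (hi : f i ∉ D) (hj : f j ∉ D) (hs : s ∈ Ioo i j)
    (hsD : f s ∈ D) : D ⊆ f '' Ioo i j := by
  refine hD.subset_of_closed ⟨f s, hsD, mem_image_of_mem f hs⟩ ?_
  rintro _ ⟨r, ⟨hir, hrj⟩, rfl⟩ b hb hadj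
  obtain ⟨t, ⟨-, htn⟩, rfl⟩ := hDf hb
  have hrt := (hf.adj_iff (by omega) htn).1 hadj
  have hti : t ≠ i := fun heq => hi (heq ▸ hb)
  have htj : t ≠ j := fun heq => hj (heq ▸ hb)
  exact mem_image_of_mem f ⟨by omega, by omega⟩

theorem one_mem_of_hasNeighborIn (hf : IsInducedPath G f n) (hD : D ⊆ f '' Icc 0 n)
    (h : HasNeighborIn G D (f 0)) : f 1 ∈ D := by
  obtain ⟨d, hd, hadj⟩ := h
  obtain ⟨t, ⟨-, ht⟩, rfl⟩ := hD hd
  obtain rfl : t = 1 := by simpa using (hf.adj_iff n.zero_le ht).1 hadj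
  exact hd

/-- The leg from `x` to `f 0` avoids the neighbours of `y`, so it lies before the second
neighbour of `y` on the path. -/
theorem containsTheta_of_isLeg (hf : IsInducedPath G f n) (hG : G.CliqueFree 3)
    (hfB : Anticomplete G (f '' Icc 0 n) B) (hB : Connects G B x y) (hxy : Gᶜ.Adj x y)
    (hy₀ : G.Adj y (f 0)) (hx : HasNeighborIn G (f '' Icc 1 n) x)
    (hy : HasNeighborIn G (f '' Icc 1 n) y) (hD : D ⊆ f '' Icc 0 n) (hleg : IsLeg G D x (f 0))
    (hyD : ∀ d ∈ D, ¬ G.Adj y d) : ContainsTheta G := by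
  classical
  have two_le {v : U} (hv₀ : G.Adj v (f 0)) {t : ℕ} (ht : t ∈ Icc 1 n) (hvt : G.Adj v (f t)) :
      2 ≤ t := by
    obtain ⟨h1t, htn⟩ := ht
    refine h1t.lt_of_ne ?_
    rintro rfl
    exact not_adj_of_cliqueFree_three hG hv₀ (hf.adj htn) hvt
  by_cases hx₀ : G.Adj x (f 0)
  · obtain ⟨_, ⟨s, hs, rfl⟩, hxs⟩ := hx
    obtain ⟨_, ⟨t, ht, rfl⟩, hyt⟩ := hy
    exact hf.containsTheta_of_connects hfB hxy
      (hf.connects (j := 0) n.zero_le ⟨le_rfl, le_rfl⟩ ⟨le_rfl, le_rfl⟩ hx₀ hy₀)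
      (hf.connects le_rfl ⟨two_le hx₀ hs hxs, hs.2⟩ ⟨two_le hy₀ ht hyt, ht.2⟩ hxs hyt) hB
      (by omega) n.zero_le le_rfl
  · have hex : ∃ t, t ∈ Icc 1 n ∧ G.Adj y (f t) := by
      obtain ⟨_, ⟨t, ht, rfl⟩, hyt⟩ := hy
      exact ⟨t, ht, hyt⟩
    obtain ⟨j, ⟨hj, hyj⟩, hmin⟩ :
        ∃ j, (j ∈ Icc 1 n ∧ G.Adj y (f j)) ∧ ∀ t < j, ¬ (t ∈ Icc 1 n ∧ G.Adj y (f t)) :=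
      ⟨Nat.find hex, Nat.find_spec hex, fun t => Nat.find_min hex⟩
    obtain ⟨hDconn, ⟨d, hd, hxd⟩, hf₀⟩ := hleg.connects_of_not_adj hx₀
    obtain ⟨r, ⟨-, hrj⟩, rfl⟩ := hf.subset_image_Ioo hD hDconn hj.2 (fun h => hyD _ h hy₀)
      (fun h => hyD _ h hyj) ⟨one_pos, two_le hy₀ hj hyj⟩
      (hf.one_mem_of_hasNeighborIn hD hf₀) hd
    have hx : HasNeighborIn G (f '' Icc 0 j) x := hasNeighborIn_image_Icc ⟨r.zero_le, hrj.le⟩ hxd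
    obtain ⟨s, t, hext⟩ := hx.exists_isExtent
    have hs₀ : s ≠ 0 := fun heq => hx₀ (heq ▸ hext.adj_lo)
    exact (hf.mono hj.2).containsTheta_of_isExtent hG
      (hfB.mono (image_mono (Icc_subset_Icc_right hj.2)) subset_rfl) hB hxy hy₀ hyj
      (fun q hq hyq => hmin q hq.2 ⟨⟨hq.1, hq.2.le.trans hj.2⟩, hyq⟩) hext
      (Nat.pos_of_ne_zero hs₀) ((hext.mem_Icc r hrj.le hxd).1.trans_lt hrj)

theorem containsTheta_of_hasTripodAt_zero (hf : IsInducedPath G f n) (hG : G.CliqueFree 3)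
    (hfB : Anticomplete G (f '' Icc 0 n) B) (hB : Connects G B x y) (hxy : Gᶜ.Adj x y)
    (hx : HasNeighborIn G (f '' Icc 1 n) x) (hy : HasNeighborIn G (f '' Icc 1 n) y)
    (h : HasTripodAt G (f '' Icc 0 n) x y z (f 0)) : ContainsTheta G := by
  obtain ⟨Dx, Dy, Dz, ht⟩ := h
  by_cases hy₀ : G.Adj y (f 0)
  · exact hf.containsTheta_of_isLeg hG hfB hB hxy hy₀ hx hy ht.subset_x ht.leg_x fun d hd hadj =>
      (ht.anti_xy d (.inr hd) y (.inl rfl)).2 hadj.symm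
  by_cases hx₀ : G.Adj x (f 0)
  · exact hf.containsTheta_of_isLeg hG hfB hB.symm hxy.symm hx₀ hy hx ht.subset_y ht.leg_y
      fun d hd hadj => (ht.anti_xy x (.inl rfl) d (.inr hd)).2 hadj
  have hxf₁ := hf.one_mem_of_hasNeighborIn ht.subset_x (ht.leg_x.connects_of_not_adj hx₀).right
  have hyf₁ := hf.one_mem_of_hasNeighborIn ht.subset_y (ht.leg_y.connects_of_not_adj hy₀).right
  exact absurd rfl (ht.anti_xy (f 1) (.inr hxf₁) (f 1) (.inr hyf₁)).1

end IsInducedPath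

/-! ### Pairs of paths with common ends -/

section AttachedOnlyAt

variable {U : Type*} {G : SimpleGraph U} {C : Set U} {f : ℕ → U} {m i j : ℕ} {c x y : U}

/-- The vertices of `C` whose only neighbour on the path `f 0, …, f m` is `f i`. -/
def attachedOnlyAt (G : SimpleGraph U) (C : Set U) (f : ℕ → U) (m i : ℕ) : Set U :=
  {c ∈ C | IsExtent G f m c i i}

theorem mem_attachedOnlyAt_reverse (hc : c ∈ attachedOnlyAt G C f m i) :
    c ∈ attachedOnlyAt G C (fun t => f (m - t)) m (m - i) :=
  ⟨hc.1, hc.2.reverse⟩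

theorem mem_attachedOnlyAt_of_reverse
    (hc : c ∈ attachedOnlyAt G C (fun t => f (m - t)) m i) : c ∈ attachedOnlyAt G C f m (m - i) :=
  ⟨hc.1, le_rfl, m.sub_le i, hc.2.adj_lo, hc.2.adj_lo, fun t ht hct => by
    have := hc.2.mem_Icc (m - t) (m.sub_le t) (by simpa only [Nat.sub_sub_self ht] using hct)
    exact ⟨by have := this.2; omega, by have := this.1; omega⟩⟩

theorem ne_of_mem_attachedOnlyAt (hx : x ∈ attachedOnlyAt G C f m i)
    (hy : y ∈ attachedOnlyAt G C f m j) (hij : i ≠ j) : x ≠ y := by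
  rintro rfl
  have := hy.2.mem_Icc i hx.2.hi_le hx.2.adj_lo
  exact hij (le_antisymm this.2 this.1)

theorem mem_attachedOnlyAt_zero_or_hasNeighborIn (hc : c ∈ C)
    (h : HasNeighborIn G (f '' Icc 0 m) c) :
    c ∈ attachedOnlyAt G C f m 0 ∨ HasNeighborIn G (f '' Icc 1 m) c := by
  obtain ⟨lo, hi, hext⟩ := h.exists_isExtent
  obtain rfl | hpos := hi.eq_zero_or_pos
  · obtain rfl := Nat.le_zero.1 hext.le
    exact .inl ⟨hc, hext⟩
  · exact .inr (hasNeighborIn_image_Icc ⟨hpos, hext.hi_le⟩ hext.adj_hi)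

theorem mem_attachedOnlyAt_of_length_zero (hc : c ∈ C) (h : HasNeighborIn G (f '' Icc 0 0) c) :
    c ∈ attachedOnlyAt G C f 0 0 :=
  (mem_attachedOnlyAt_zero_or_hasNeighborIn hc h).resolve_right fun ⟨_, ⟨_, ht, _⟩, _⟩ =>
    absurd (ht.1.trans ht.2) (by omega)

theorem IsMinimalConnector.nonempty_attachedOnlyAt_zero (hf : IsInducedPath G f m)
    (h : IsMinimalConnector G (f '' Icc 0 m) C) : (attachedOnlyAt G C f m 0).Nonempty := by
  have hdiff : f '' Icc 0 m \ {f 0} = f '' Icc 1 m := by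
    rw [← image_singleton, ← (hf.injOn.mono Icc_subset_Iic_self).image_sdiff_subset
      (by simp)]
    congr 1
    ext t
    simp only [mem_sdiff, mem_Icc, mem_singleton_iff]
    omega
  obtain ⟨c, hc, hcn⟩ := h.exists_not_hasNeighborIn (f 0) (mem_image_of_mem f ⟨le_rfl, m.zero_le⟩)
    (hdiff ▸ hf.preconnectedOn 1 le_rfl)
  rw [hdiff] at hcn
  exact ⟨c, (mem_attachedOnlyAt_zero_or_hasNeighborIn hc (h.hasNeighborIn c hc)).resolve_right hcn⟩

theorem image_reverse_Icc_zero : (fun t => f (m - t)) '' Icc 0 m = f '' Icc 0 m := by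
  rw [image_reverse_Icc m.zero_le le_rfl, Nat.sub_self, Nat.sub_zero]

theorem IsMinimalConnector.nonempty_attachedOnlyAt_length (hf : IsInducedPath G f m)
    (h : IsMinimalConnector G (f '' Icc 0 m) C) : (attachedOnlyAt G C f m m).Nonempty :=
  (nonempty_attachedOnlyAt_zero hf.reverse (by rwa [image_reverse_Icc_zero])).imp
    fun _ => mem_attachedOnlyAt_of_reverse

end AttachedOnlyAt

section PathPairs

variable {U : Type*} {G : SimpleGraph U} {C : Set U} {f g : ℕ → U} {m l : ℕ} {c x y z : U}

/-- The paths `f 0, …, f m` and `g 0, …, g l` are induced and anticomplete to each other, and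
every vertex of the independent set `C` has a neighbour on both. -/
structure IsPathPair (G : SimpleGraph U) (C : Set U) (f : ℕ → U) (m : ℕ) (g : ℕ → U) (l : ℕ) :
    Prop where
  indep : G.IsIndepSet C
  path_left : IsInducedPath G f m
  path_right : IsInducedPath G g l
  anticomplete : Anticomplete G (f '' Icc 0 m) (g '' Icc 0 l)
  nbr_left : ∀ c ∈ C, HasNeighborIn G (f '' Icc 0 m) c
  nbr_right : ∀ c ∈ C, HasNeighborIn G (g '' Icc 0 l) c

namespace IsPathPair

theorem swap (h : IsPathPair G C f m g l) : IsPathPair G C g l f m :=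
  ⟨h.indep, h.path_right, h.path_left, h.anticomplete.symm, h.nbr_right, h.nbr_left⟩

theorem reverse_right (h : IsPathPair G C f m g l) : IsPathPair G C f m (fun t => g (l - t)) l :=
  ⟨h.indep, h.path_left, h.path_right.reverse, by
    rw [image_reverse_Icc_zero]; exact h.anticomplete,
    h.nbr_left, by rw [image_reverse_Icc_zero]; exact h.nbr_right⟩

theorem reverse_left (h : IsPathPair G C f m g l) : IsPathPair G C (fun t => f (m - t)) m g l :=
  h.swap.reverse_right.swap

theorem compl_adj (h : IsPathPair G C f m g l) (hx : x ∈ C) (hy : y ∈ C) (hxy : x ≠ y) :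
    Gᶜ.Adj x y :=
  ⟨hxy, h.indep hx hy hxy⟩

theorem notMem_left (h : IsPathPair G C f m g l) (hc : c ∈ C) : c ∉ f '' Icc 0 m :=
  h.anticomplete.notMem_of_hasNeighborIn (h.nbr_right c hc)

theorem connects_left (h : IsPathPair G C f m g l) (hx : x ∈ C) (hy : y ∈ C) :
    Connects G (f '' Icc 0 m) x y :=
  ⟨h.path_left.preconnectedOn 0 le_rfl, h.nbr_left x hx, h.nbr_left y hy⟩

theorem isAttachedTriple_left (h : IsPathPair G C f m g l) (hx : x ∈ C) (hy : y ∈ C) (hz : z ∈ C)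
    (hxy : x ≠ y) (hxz : x ≠ z) (hyz : y ≠ z) : IsAttachedTriple G (f '' Icc 0 m) x y z :=
  ⟨h.compl_adj hx hy hxy, h.compl_adj hx hz hxz, h.compl_adj hy hz hyz, h.notMem_left hx,
    h.notMem_left hy, h.notMem_left hz, h.nbr_left x hx, h.nbr_left y hy, h.nbr_left z hz⟩

theorem hasTripod_right [Finite U] (h : IsPathPair G C f m g l) (hG : G.CliqueFree 3)
    (hx : x ∈ C) (hy : y ∈ C) (hz : z ∈ C) (hxy : x ≠ y) (hxz : x ≠ z) (hyz : y ≠ z) :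
    HasTripod G (g '' Icc 0 l) x y z :=
  (h.swap.isAttachedTriple_left hx hy hz hxy hxz hyz).hasTripod hG
    (h.path_right.preconnectedOn 0 le_rfl)

end IsPathPair

end PathPairs

section CommonEnds

variable {U : Type} {G : SimpleGraph U} {C : Set U} {f g : ℕ → U} {m l u : ℕ} {x y z : U}

namespace IsPathPair

theorem containsTheta_of_length_zero (h : IsPathPair G C f 0 g 0) (hx : x ∈ C) (hy : y ∈ C)
    (hz : z ∈ C) (hxy : x ≠ y) (hxz : x ≠ z) (hyz : y ≠ z) : ContainsTheta G := by
  have connects {c : U} (hc : c ∈ C) : Connects G {c} (f 0) (g 0) :=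
    ⟨.singleton c, ⟨c, rfl, (mem_attachedOnlyAt_of_length_zero hc (h.nbr_left c hc)).2.adj_lo.symm⟩,
      ⟨c, rfl, (mem_attachedOnlyAt_of_length_zero hc (h.nbr_right c hc)).2.adj_lo.symm⟩⟩
  have anti {c d : U} (hc : c ∈ C) (hd : d ∈ C) (hcd : c ≠ d) : Anticomplete G {c} {d} := by
    rintro _ rfl _ rfl
    exact h.compl_adj hc hd hcd
  have hfg : Gᶜ.Adj (f 0) (g 0) :=
    h.anticomplete _ (mem_image_of_mem f ⟨le_rfl, le_rfl⟩) _ (mem_image_of_mem g ⟨le_rfl, le_rfl⟩)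
  exact containsTheta_of_connects hfg (connects hx) (connects hy) (connects hz) (anti hx hy hxy)
    (anti hx hz hxz) (anti hy hz hyz)

variable [Finite U]

theorem eq_zero_or_eq_of_isExtent (h : IsPathPair G C f m g l) (hT : ¬ ContainsTheta G)
    (hG : G.CliqueFree 3) (hx : x ∈ attachedOnlyAt G C f m 0) (hy : y ∈ attachedOnlyAt G C f m m)
    (hz : z ∈ attachedOnlyAt G C g l 0) (hxy : x ≠ y) (hxz : x ≠ z) (hyz : y ≠ z)
    (hzu : IsExtent G f m z u u) : u = 0 ∨ u = m := by
  have htripod := h.path_left.hasTripodAt_of_isExtent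
    (h.isAttachedTriple_left hx.1 hy.1 hz.1 hxy hxz hyz) hx.2 hy.2 hzu
  by_contra! hu
  have hxu : ¬ G.Adj x (f u) := fun hadj => hu.1 (Nat.le_zero.1 (hx.2.mem_Icc u hzu.hi_le hadj).2)
  have hyu : ¬ G.Adj y (f u) := fun hadj =>
    hu.2 (le_antisymm hzu.hi_le (hy.2.mem_Icc u hzu.hi_le hadj).1)
  obtain ⟨q, hq⟩ | hx' | hy' | hz' := h.hasTripod_right hG hx.1 hy.1 hz.1 hxy hxz hyz
  · exact hT (htripod.containsTheta hq h.anticomplete)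
  · exact hT (htripod.swap_left.swap_right.containsTheta_of_hasBend hx' h.anticomplete hxu)
  · exact hT (htripod.swap_right.containsTheta_of_hasBend hy' h.anticomplete hyu)
  · exact hz'.not_subsingleton hz.2.subsingleton

theorem mem_or_mem_of_hasBend (h : IsPathPair G C f m g l) (hT : ¬ ContainsTheta G)
    (hG : G.CliqueFree 3) (hx : x ∈ C) (hy : y ∈ C) (hz : z ∈ attachedOnlyAt G C g l 0)
    (hxy : x ≠ y) (hxz : x ≠ z) (hyz : y ≠ z) (hbend : HasBend G (f '' Icc 0 m) x y z) :
    x ∈ attachedOnlyAt G C g l 0 ∨ y ∈ attachedOnlyAt G C g l 0 := by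
  obtain ⟨q, hq⟩ | hx' | hy' | hz' := h.hasTripod_right hG hx hy hz.1 hxy hxz hyz
  · have hzq : G.Adj z q := by
      by_contra hzq
      exact hT (hq.containsTheta_of_hasBend hbend h.anticomplete.symm hzq)
    obtain rfl : q = g 0 := by
      obtain ⟨_, _, _, hq'⟩ := hq
      exact hz.2.subsingleton ⟨hq'.center_mem, hzq⟩
        ⟨mem_image_of_mem g ⟨le_rfl, l.zero_le⟩, hz.2.adj_lo⟩
    by_contra! hnot
    exact hT (h.path_right.containsTheta_of_hasTripodAt_zero hG h.anticomplete.symm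
      (h.connects_left hx hy) (h.compl_adj hx hy hxy)
      ((mem_attachedOnlyAt_zero_or_hasNeighborIn hx (h.nbr_right x hx)).resolve_left hnot.1)
      ((mem_attachedOnlyAt_zero_or_hasNeighborIn hy (h.nbr_right y hy)).resolve_left hnot.2) hq)
  · exact absurd (hbend.symm.containsTheta hx' h.anticomplete (h.compl_adj hx hz.1 hxz)) hT
  · exact absurd (hbend.containsTheta hy' h.anticomplete (h.compl_adj hy hz.1 hyz)) hT
  · exact absurd hz.2.subsingleton hz'.not_subsingleton

theorem exists_mem_attachedOnlyAt_zero (h : IsPathPair G C f m g l) (hT : ¬ ContainsTheta G)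
    (hG : G.CliqueFree 3) (hm : m ≠ 0) (hx : (attachedOnlyAt G C f m 0).Nonempty)
    (hy : (attachedOnlyAt G C f m m).Nonempty) (hz : (attachedOnlyAt G C g l 0).Nonempty) :
    ∃ c ∈ attachedOnlyAt G C g l 0,
      c ∈ attachedOnlyAt G C f m 0 ∨ c ∈ attachedOnlyAt G C f m m := by
  obtain ⟨x, hx⟩ := hx
  obtain ⟨y, hy⟩ := hy
  obtain ⟨z, hz⟩ := hz
  have hxy : x ≠ y := ne_of_mem_attachedOnlyAt hx hy hm.symm
  by_cases hxz : x = z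
  · exact ⟨z, hz, .inl (hxz ▸ hx)⟩
  by_cases hyz : y = z
  · exact ⟨z, hz, .inr (hyz ▸ hy)⟩
  obtain ⟨lo, hi, hext⟩ := (h.nbr_left z hz.1).exists_isExtent
  obtain hlt | rfl := hext.le.lt_or_eq
  · have hbend := h.path_left.hasBend_of_isExtent
      (h.isAttachedTriple_left hx.1 hy.1 hz.1 hxy hxz hyz) hx.2 hy.2 hext
      (lt_of_le_of_ne hlt (hext.hi_ne_lo_succ hG h.path_left).symm)
    exact (h.mem_or_mem_of_hasBend hT hG hx.1 hy.1 hz hxy hxz hyz hbend).elim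
      (fun hx' => ⟨x, hx', .inl hx⟩) fun hy' => ⟨y, hy', .inr hy⟩
  · obtain rfl | rfl := h.eq_zero_or_eq_of_isExtent hT hG hx hy hz hxy hxz hyz hext
    · exact ⟨z, hz, .inl ⟨hz.1, hext⟩⟩
    · exact ⟨z, hz, .inr ⟨hz.1, hext⟩⟩

theorem exists_mem_attachedOnlyAt_length (h : IsPathPair G C f m g l) (hT : ¬ ContainsTheta G)
    (hG : G.CliqueFree 3) (hm : m ≠ 0) (hx : (attachedOnlyAt G C f m 0).Nonempty)
    (hy : (attachedOnlyAt G C f m m).Nonempty) (hz : (attachedOnlyAt G C g l l).Nonempty) :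
    ∃ c ∈ attachedOnlyAt G C g l l,
      c ∈ attachedOnlyAt G C f m 0 ∨ c ∈ attachedOnlyAt G C f m m := by
  have hz' : (attachedOnlyAt G C (fun t => g (l - t)) l 0).Nonempty :=
    hz.imp fun c hc => by simpa only [Nat.sub_self] using mem_attachedOnlyAt_reverse hc
  obtain ⟨c, hc, hcf⟩ := h.reverse_right.exists_mem_attachedOnlyAt_zero hT hG hm hx hy hz'
  exact ⟨c, mem_attachedOnlyAt_of_reverse hc, hcf⟩

end IsPathPair

end CommonEnds

section ClosedPathPairs

variable {U : Type*} {G : SimpleGraph U} {C : Set U} {f g : ℕ → U} {m l : ℕ} {x y : U}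

/-- A pair of paths that closes up to a hole `x, f 0, …, f m, y, g l, …, g 0` through two vertices
`x` and `y` of `C`. -/
structure IsClosedPathPair (G : SimpleGraph U) (C : Set U) (f : ℕ → U) (m : ℕ) (g : ℕ → U) (l : ℕ)
    (x y : U) : Prop extends IsPathPair G C f m g l where
  ne : x ≠ y
  left_zero : x ∈ attachedOnlyAt G C f m 0
  right_zero : x ∈ attachedOnlyAt G C g l 0
  left_length : y ∈ attachedOnlyAt G C f m m
  right_length : y ∈ attachedOnlyAt G C g l l

theorem IsClosedPathPair.swap (h : IsClosedPathPair G C f m g l x y) :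
    IsClosedPathPair G C g l f m x y :=
  ⟨h.toIsPathPair.swap, h.ne, h.right_zero, h.left_zero, h.right_length, h.left_length⟩

theorem IsClosedPathPair.reverse (h : IsClosedPathPair G C f m g l x y) :
    IsClosedPathPair G C (fun t => f (m - t)) m (fun t => g (l - t)) l y x where
  toIsPathPair := h.reverse_left.reverse_right
  ne := h.ne.symm
  left_zero := by simpa only [Nat.sub_self] using mem_attachedOnlyAt_reverse h.left_length
  right_zero := by simpa only [Nat.sub_self] using mem_attachedOnlyAt_reverse h.right_length
  left_length := mem_attachedOnlyAt_reverse h.left_zero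
  right_length := mem_attachedOnlyAt_reverse h.right_zero

theorem IsPathPair.isClosedPathPair_of_length_zero (h : IsPathPair G C f 0 g l) (hl : l ≠ 0)
    (hx : x ∈ attachedOnlyAt G C g l 0) (hy : y ∈ attachedOnlyAt G C g l l) :
    IsClosedPathPair G C f 0 g l x y :=
  ⟨h, ne_of_mem_attachedOnlyAt hx hy hl.symm,
    mem_attachedOnlyAt_of_length_zero hx.1 (h.nbr_left x hx.1), hx,
    mem_attachedOnlyAt_of_length_zero hy.1 (h.nbr_left y hy.1), hy⟩

end ClosedPathPairs

theorem IsPathPair.exists_isClosedPathPair {U : Type} [Finite U] {G : SimpleGraph U} {C : Set U}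
    {f g : ℕ → U} {m l : ℕ} (h : IsPathPair G C f m g l) (hT : ¬ ContainsTheta G)
    (hG : G.CliqueFree 3) (hC : 2 < C.ncard) (hf₀ : (attachedOnlyAt G C f m 0).Nonempty)
    (hfm : (attachedOnlyAt G C f m m).Nonempty) (hg₀ : (attachedOnlyAt G C g l 0).Nonempty)
    (hgl : (attachedOnlyAt G C g l l).Nonempty) :
    ∃ g' x y, IsClosedPathPair G C f m g' l x y := by
  obtain rfl | hm := eq_or_ne m 0
  · obtain rfl | hl := eq_or_ne l 0
    · obtain ⟨a, b, c, ha, hb, hc, hab, hac, hbc⟩ := (two_lt_ncard_iff C.toFinite).1 hC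
      exact absurd (h.containsTheta_of_length_zero ha hb hc hab hac hbc) hT
    · exact ⟨g, _, _, h.isClosedPathPair_of_length_zero hl hg₀.some_mem hgl.some_mem⟩
  obtain rfl | hl := eq_or_ne l 0
  · exact ⟨g, _, _,
      (h.swap.isClosedPathPair_of_length_zero hm hf₀.some_mem hfm.some_mem).swap⟩
  have straight {x y : U} (hx : x ∈ attachedOnlyAt G C f m 0) (hx' : x ∈ attachedOnlyAt G C g l 0)
      (hy : y ∈ attachedOnlyAt G C f m m) (hy' : y ∈ attachedOnlyAt G C g l l) :
      ∃ g' x y, IsClosedPathPair G C f m g' l x y :=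
    ⟨g, x, y, h, ne_of_mem_attachedOnlyAt hx hy hm.symm, hx, hx', hy, hy'⟩
  have crossed {x y : U} (hx : x ∈ attachedOnlyAt G C f m 0) (hx' : x ∈ attachedOnlyAt G C g l l)
      (hy : y ∈ attachedOnlyAt G C f m m) (hy' : y ∈ attachedOnlyAt G C g l 0) :
      ∃ g' x y, IsClosedPathPair G C f m g' l x y :=
    ⟨fun t => g (l - t), x, y, h.reverse_right, ne_of_mem_attachedOnlyAt hx hy hm.symm, hx,
      by simpa only [Nat.sub_self] using mem_attachedOnlyAt_reverse hx', hy,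
      mem_attachedOnlyAt_reverse hy'⟩
  obtain ⟨a, ha, haf | haf⟩ := h.exists_mem_attachedOnlyAt_zero hT hG hm hf₀ hfm hg₀ <;>
    obtain ⟨b, hb, hbf | hbf⟩ := h.exists_mem_attachedOnlyAt_length hT hG hm hf₀ hfm hgl
  · obtain ⟨c, hc, hcg | hcg⟩ := h.swap.exists_mem_attachedOnlyAt_length hT hG hl hg₀ hgl hfm
    · exact crossed hbf hb hc hcg
    · exact straight haf ha hc hcg
  · exact straight haf ha hbf hb
  · exact crossed hbf hb haf ha
  · obtain ⟨c, hc, hcg | hcg⟩ := h.swap.exists_mem_attachedOnlyAt_zero hT hG hl hg₀ hgl hf₀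
    · exact straight hc hcg hbf hb
    · exact crossed hc hcg haf ha

/-! ### The rungs of a closed path pair -/

section FarTripods

variable {U : Type*} {G : SimpleGraph U} {f : ℕ → U} {n j a b a' b' : ℕ} {c x z w : U}

/-- There is a tripod inside `A` with terminals `t`, `z`, `w` whose centre is `z` or a vertex of
`A` not adjacent to `w`. -/
def HasFarTripod (G : SimpleGraph U) (A : Set U) (t z w : U) : Prop :=
  HasBend G A t w z ∨ ∃ p, HasTripodAt G A t z w p ∧ ¬ G.Adj w p

theorem IsExtent.exists_take (h : IsExtent G f n c a b) (haj : a ≤ j) (hjn : j ≤ n) :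
    ∃ hi, IsExtent G f j c a hi := by
  obtain ⟨lo, hi, hext⟩ :=
    (hasNeighborIn_image_Icc (i := 0) ⟨a.zero_le, haj⟩ h.adj_lo).exists_isExtent
  obtain rfl : lo = a := le_antisymm (hext.mem_Icc a haj h.adj_lo).1
    (h.mem_Icc lo (hext.le.trans (hext.hi_le.trans hjn)) hext.adj_lo).1
  exact ⟨hi, hext⟩

theorem IsInducedPath.hasFarTripod (hf : IsInducedPath G f n) (hG : G.CliqueFree 3)
    (h : IsAttachedTriple G (f '' Icc 0 n) x z w) (hx : IsExtent G f n x 0 0)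
    (hz : IsExtent G f n z a b) (hw : IsExtent G f n w a' b') (hlt : a < a') :
    HasFarTripod G (f '' Icc 0 n) x z w := by
  have ha' : a' ≤ n := hw.le.trans hw.hi_le
  have hsub : f '' Icc 0 a' ⊆ f '' Icc 0 n := image_mono (Icc_subset_Icc_right ha')
  have hf' := hf.mono ha'
  obtain ⟨hi, hz'⟩ := hz.exists_take hlt.le ha'
  have hx' := hx.take a'.zero_le ha'
  have h' : IsAttachedTriple G (f '' Icc 0 a') x w z :=
    ⟨h.xz, h.xy, h.yz.symm, fun hmem => h.notMem_x (hsub hmem), fun hmem => h.notMem_z (hsub hmem),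
      fun hmem => h.notMem_y (hsub hmem), hx'.hasNeighborIn, hw.take_lo.hasNeighborIn,
      hz'.hasNeighborIn⟩
  obtain hlt' | rfl := hz'.le.lt_or_eq
  · exact .inl ((hf'.hasBend_of_isExtent h' hx' hw.take_lo hz'
      (lt_of_le_of_ne hlt' (hz'.hi_ne_lo_succ hG hf').symm)).mono hsub)
  · exact .inr ⟨f a, ((hf'.hasTripodAt_of_isExtent h' hx' hw.take_lo hz').mono hsub).swap_right,
      fun hwa => hlt.not_ge (hw.mem_Icc a (hlt.le.trans ha') hwa).1⟩

end FarTripods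

theorem HasFarTripod.containsTheta {U : Type} {G : SimpleGraph U} {A B : Set U} {t z w : U}
    (h : HasFarTripod G A t z w) (h' : HasFarTripod G B t w z) (hAB : Anticomplete G A B)
    (hzw : Gᶜ.Adj z w) : ContainsTheta G := by
  obtain hz | ⟨p, hp, hwp⟩ := h <;> obtain hw | ⟨q, hq, hzq⟩ := h'
  · exact hz.containsTheta hw hAB hzw.symm
  · exact hq.containsTheta_of_hasBend hz hAB.symm hzq
  · exact hp.containsTheta_of_hasBend hw hAB hwp
  · exact hp.containsTheta hq.swap_right hAB

section Rungs

variable {U : Type*} {G : SimpleGraph U} {C : Set U} {f g : ℕ → U} {m l : ℕ} {x y z w : U}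
  {a b c d a' b' c' d' : ℕ}

/-- `z` is a vertex of `C` other than the ends `x` and `y`; its neighbours on the two paths range
from `f a` to `f b` and from `g c` to `g d`. -/
structure IsRung (G : SimpleGraph U) (C : Set U) (f : ℕ → U) (m : ℕ) (g : ℕ → U) (l : ℕ)
    (x y z : U) (a b c d : ℕ) : Prop where
  mem : z ∈ C
  ne_x : x ≠ z
  ne_y : y ≠ z
  left : IsExtent G f m z a b
  right : IsExtent G g l z c d

theorem IsRung.swap (h : IsRung G C f m g l x y z a b c d) : IsRung G C g l f m x y z c d a b :=
  ⟨h.mem, h.ne_x, h.ne_y, h.right, h.left⟩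

theorem IsRung.reverse (h : IsRung G C f m g l x y z a b c d) :
    IsRung G C (fun t => f (m - t)) m (fun t => g (l - t)) l y x z (m - b) (m - a) (l - d)
      (l - c) :=
  ⟨h.mem, h.ne_y, h.ne_x, h.left.reverse, h.right.reverse⟩

theorem IsClosedPathPair.exists_isRung (h : IsClosedPathPair G C f m g l x y)
    (hz : z ∈ C \ {x, y}) : ∃ a b c d, IsRung G C f m g l x y z a b c d := by
  obtain ⟨hzC, hzxy⟩ := hz
  obtain ⟨a, b, hab⟩ := (h.nbr_left z hzC).exists_isExtent
  obtain ⟨c, d, hcd⟩ := (h.nbr_right z hzC).exists_isExtent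
  exact ⟨a, b, c, d, hzC, fun heq => hzxy (.inl heq.symm), fun heq => hzxy (.inr heq.symm), hab,
    hcd⟩

theorem IsClosedPathPair.hasFarTripod_left (h : IsClosedPathPair G C f m g l x y)
    (hG : G.CliqueFree 3) (hz : IsRung G C f m g l x y z a b c d)
    (hw : IsRung G C f m g l x y w a' b' c' d') (hzw : z ≠ w) (hlt : a < a') :
    HasFarTripod G (f '' Icc 0 m) x z w :=
  h.path_left.hasFarTripod hG
    (h.isAttachedTriple_left h.left_zero.1 hz.mem hw.mem hz.ne_x hw.ne_x hzw) h.left_zero.2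
    hz.left hw.left hlt

end Rungs

section OrderOfRungs

variable {U : Type} {G : SimpleGraph U} {C : Set U} {f g : ℕ → U} {m l : ℕ} {x y z w : U}
  {a b c d a' b' c' d' : ℕ}

theorem IsPathPair.containsTheta_of_nested (h : IsPathPair G C f m g l) (hG : G.CliqueFree 3)
    (hz : z ∈ C) (hw : w ∈ C) (hzw : z ≠ w) (ez : IsExtent G f m z a b)
    (ew : IsExtent G f m w a' b') (ha : a ≤ a') (hb : b' ≤ b) (hne : a' ≠ b') :
    ContainsTheta G := by
  have := ew.hi_ne_lo_succ hG h.path_left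
  have := ew.le
  have := ez.hi_le
  exact h.path_left.containsTheta_of_connects h.anticomplete (h.compl_adj hz hw hzw)
    (h.path_left.connects (by omega) ⟨le_rfl, ha⟩ ⟨ha, le_rfl⟩ ez.adj_lo ew.adj_lo)
    (h.path_left.connects ez.hi_le ⟨hb, le_rfl⟩ ⟨le_rfl, hb⟩ ez.adj_hi ew.adj_hi)
    (h.swap.connects_left hz hw) (by omega) (by omega) ez.hi_le

theorem IsPathPair.containsTheta_of_crossing (h : IsPathPair G C f m g l) (hG : G.CliqueFree 3)
    (hz : z ∈ C) (hw : w ∈ C) (hzw : z ≠ w) (ez : IsExtent G f m z a b)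
    (ew : IsExtent G f m w a' b') (ha : a < a') (hb : b < b') (hab : a' < b) :
    ContainsTheta G := by
  have hb' := ew.hi_le
  have hB := h.swap.connects_left hz hw
  obtain rfl | hlt := (Nat.succ_le_of_lt hab).eq_or_lt
  · have adj_succ : G.Adj (f a') (f (a' + 1)) := h.path_left.adj (by omega)
    refine h.path_left.containsTheta_of_adj_iff (i := a) h.anticomplete hB ez.hi_le
      (fun r hr => ⟨fun hwr => ?_, fun heq => heq ▸ ew.adj_lo⟩)
      (fun hza' => not_adj_of_cliqueFree_three hG hza' adj_succ ez.adj_hi)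
      ⟨le_rfl, ha⟩ ⟨Nat.lt_succ_self a', le_rfl⟩ ez.adj_lo ez.adj_hi
    have hr' : r ≠ a' + 1 := by
      rintro rfl
      exact not_adj_of_cliqueFree_three hG ew.adj_lo adj_succ hwr
    have := (ew.mem_Icc r (by have := hr.2; omega) hwr).1
    have := hr.2
    omega
  · exact h.path_left.containsTheta_of_connects h.anticomplete (h.compl_adj hz hw hzw)
      (h.path_left.connects (by omega) ⟨le_rfl, ha.le⟩ ⟨ha.le, le_rfl⟩ ez.adj_lo ew.adj_lo)
      (h.path_left.connects hb' ⟨le_rfl, hb.le⟩ ⟨hb.le, le_rfl⟩ ez.adj_hi ew.adj_hi)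
      hB hlt (by omega) hb'

namespace IsClosedPathPair

theorem right_lo_le_of_left_lo_lt (h : IsClosedPathPair G C f m g l x y) (hT : ¬ ContainsTheta G)
    (hG : G.CliqueFree 3) (hz : IsRung G C f m g l x y z a b c d)
    (hw : IsRung G C f m g l x y w a' b' c' d') (hzw : z ≠ w) (hlt : a < a') : c ≤ c' := by
  by_contra! hlt'
  exact hT ((h.hasFarTripod_left hG hz hw hzw hlt).containsTheta
    (h.swap.hasFarTripod_left hG hw.swap hz.swap hzw.symm hlt') h.anticomplete
    (h.compl_adj hz.mem hw.mem hzw))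

theorem right_hi_le_of_left_hi_lt (h : IsClosedPathPair G C f m g l x y) (hT : ¬ ContainsTheta G)
    (hG : G.CliqueFree 3) (hz : IsRung G C f m g l x y z a b c d)
    (hw : IsRung G C f m g l x y w a' b' c' d') (hzw : z ≠ w) (hlt : b < b') : d ≤ d' := by
  have := hw.left.hi_le
  have := hz.right.hi_le
  have := h.reverse.right_lo_le_of_left_lo_lt hT hG hw.reverse hz.reverse hzw.symm (by omega)
  omega

theorem lo_ne_hi (h : IsClosedPathPair G C f m g l x y) (hT : ¬ ContainsTheta G)
    (hz : IsRung G C f m g l x y z a b c d) : a ≠ b ∨ c ≠ d := by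
  by_contra! hsingle
  obtain ⟨rfl, rfl⟩ := hsingle
  have hx := h.left_zero
  have hy := h.left_length
  have tripod_left := h.path_left.hasTripodAt_of_isExtent
    (h.isAttachedTriple_left hx.1 hy.1 hz.mem h.ne hz.ne_x hz.ne_y) hx.2 hy.2 hz.left
  have tripod_right := h.path_right.hasTripodAt_of_isExtent
    (h.swap.isAttachedTriple_left hx.1 hy.1 hz.mem h.ne hz.ne_x hz.ne_y) h.right_zero.2
    h.right_length.2 hz.right
  exact hT (tripod_left.containsTheta tripod_right h.anticomplete)

/-- When `w` has a single neighbour on the first path, the extents are nested on the second one. -/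
theorem containsTheta_of_nested (h : IsClosedPathPair G C f m g l x y) (hG : G.CliqueFree 3)
    (hz : IsRung G C f m g l x y z a b c d) (hw : IsRung G C f m g l x y w a' b' c' d')
    (hzw : z ≠ w) (ha : a ≤ a') (hb : b' ≤ b) (hab' : a < b') (ha'b : a' < b) :
    ContainsTheta G := by
  by_contra hT
  obtain rfl | hne := eq_or_ne a' b'
  · exact hT (h.swap.toIsPathPair.containsTheta_of_nested hG hz.mem hw.mem hzw hz.right hw.right
      (h.right_lo_le_of_left_lo_lt hT hG hz hw hzw hab')
      (h.right_hi_le_of_left_hi_lt hT hG hw hz hzw.symm ha'b)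
      ((h.lo_ne_hi hT hw).resolve_left fun hne => hne rfl))
  · exact hT (h.toIsPathPair.containsTheta_of_nested hG hz.mem hw.mem hzw hz.left hw.left ha hb hne)

theorem left_hi_le_lo_or_hi_le_lo (h : IsClosedPathPair G C f m g l x y) (hT : ¬ ContainsTheta G)
    (hG : G.CliqueFree 3) (hz : IsRung G C f m g l x y z a b c d)
    (hw : IsRung G C f m g l x y w a' b' c' d') (hzw : z ≠ w) : b ≤ a' ∨ b' ≤ a := by
  by_contra! hoverlap
  obtain ⟨ha'b, hab'⟩ := hoverlap
  obtain ha | ha := lt_or_ge a a'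
  · obtain hb | hb := lt_or_ge b b'
    · exact hT (h.containsTheta_of_crossing hG hz.mem hw.mem hzw hz.left hw.left ha hb ha'b)
    · exact hT (h.containsTheta_of_nested hG hz hw hzw ha.le hb hab' ha'b)
  · obtain hb | hb := le_or_gt b b'
    · exact hT (h.containsTheta_of_nested hG hw hz hzw.symm ha hb ha'b hab')
    · obtain rfl | ha := ha.eq_or_lt
      · exact hT (h.containsTheta_of_nested hG hz hw hzw le_rfl hb.le hab' ha'b)
      · exact hT (h.containsTheta_of_crossing hG hw.mem hz.mem hzw.symm hw.left hz.left ha hb hab')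

theorem hi_le_lo_or_hi_le_lo (h : IsClosedPathPair G C f m g l x y) (hT : ¬ ContainsTheta G)
    (hG : G.CliqueFree 3) (hz : IsRung G C f m g l x y z a b c d)
    (hw : IsRung G C f m g l x y w a' b' c' d') (hzw : z ≠ w) :
    b ≤ a' ∧ d ≤ c' ∨ b' ≤ a ∧ d' ≤ c := by
  have := h.left_hi_le_lo_or_hi_le_lo hT hG hz hw hzw
  have := h.swap.left_hi_le_lo_or_hi_le_lo hT hG hz.swap hw.swap hzw
  have := h.right_lo_le_of_left_lo_lt hT hG hz hw hzw
  have := h.right_lo_le_of_left_lo_lt hT hG hw hz hzw.symm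
  have := h.right_hi_le_of_left_hi_lt hT hG hz hw hzw
  have := h.right_hi_le_of_left_hi_lt hT hG hw hz hzw.symm
  have := h.lo_ne_hi hT hz
  have := h.lo_ne_hi hT hw
  have := hz.left.le
  have := hz.right.le
  have := hw.left.le
  have := hw.right.le
  omega

end IsClosedPathPair

end OrderOfRungs

/-! ### A spider centred at a rung -/

section Join

variable {U : Type*} {G : SimpleGraph U} {f g : ℕ → U} {n n' : ℕ}

/-- The concatenation of the first `n` terms of `f` with the sequence `g`. -/
def join (f : ℕ → U) (n : ℕ) (g : ℕ → U) (i : ℕ) : U := if i < n then f i else g (i - n)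

theorem join_of_lt {i : ℕ} (hi : i < n) : join f n g i = f i := if_pos hi

theorem join_add (j : ℕ) : join f n g (n + j) = g j := by
  rw [join, if_neg (by omega), Nat.add_sub_cancel_left]

theorem forall_join {P : ℕ → U → Prop} (hf : ∀ i < n, P i (f i))
    (hg : ∀ j ≤ n', P (n + j) (g j)) : ∀ i ≤ n + n', P i (join f n g i) := by
  intro i hi
  obtain hlt | hge := lt_or_ge i n
  · rw [join_of_lt hlt]
    exact hf i hlt
  · obtain ⟨j, rfl⟩ := Nat.exists_eq_add_of_le hge
    rw [join_add]
    exact hg j (by omega)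

theorem IsInducedPath.join (hf : IsInducedPath G f (n - 1)) (hg : IsInducedPath G g n')
    (hfg : ∀ i < n, ∀ j ≤ n', f i ≠ g j ∧ (G.Adj (f i) (g j) ↔ i + 1 = n ∧ j = 0)) :
    IsInducedPath G (join f n g) (n + n') := by
  intro i j hij hj
  obtain hi | hi := lt_or_ge i n
  · rw [join_of_lt hi]
    obtain hjn | hjn := lt_or_ge j n
    · rw [join_of_lt hjn]
      exact hf i j hij (by omega)
    · obtain ⟨j, rfl⟩ := Nat.exists_eq_add_of_le hjn
      rw [join_add, (hfg i hi j (by omega)).2]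
      exact ⟨(hfg i hi j (by omega)).1, by omega⟩
  · obtain ⟨i, rfl⟩ := Nat.exists_eq_add_of_le hi
    obtain ⟨j, rfl⟩ := Nat.exists_eq_add_of_le (hi.trans hij.le)
    rw [join_add, join_add]
    have := hg i j (by omega) (by omega)
    exact ⟨this.1, this.2.trans (by omega)⟩

theorem IsInducedPath.join_singleton {v : U} (hg : IsInducedPath G g n')
    (hv : v ∉ g '' Icc 0 n') (hadj : IsExtent G g n' v 0 0) :
    IsInducedPath G (ThetaFree.join (fun _ => v) 1 g) (1 + n') := by
  refine .join (fun i j hij hj => absurd hj (by omega)) hg fun i hi j hj =>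
    ⟨fun heq => hv ⟨j, ⟨j.zero_le, hj⟩, heq.symm⟩, fun hvj => ?_, ?_⟩
  · exact ⟨by omega, Nat.le_zero.1 (hadj.mem_Icc j hj hvj).2⟩
  · rintro ⟨-, rfl⟩
    exact hadj.adj_lo

end Join

section Spiders

variable {U : Type} {G : SimpleGraph U} {W : ℕ → U} {k n p q : ℕ} {z : U}

theorem IsInducedPath.containsSpider_of_legs (hW : IsInducedPath G W n) {leg : Fin 3 → Fin k → ℕ}
    (hle : ∀ j i, leg j i ≤ n) (hz : z ∉ W '' Icc 0 n)
    (hadj_z : ∀ j i, G.Adj z (W (leg j i)) ↔ (i : ℕ) = 0)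
    (hinj : ∀ j₁ i₁ j₂ i₂, leg j₁ i₁ = leg j₂ i₂ → j₁ = j₂ ∧ i₁ = i₂)
    (hadj : ∀ j₁ i₁ j₂ i₂, leg j₂ i₂ = leg j₁ i₁ + 1 ∨ leg j₁ i₁ = leg j₂ i₂ + 1 ↔
      j₁ = j₂ ∧ ((i₁ : ℕ) + 1 = i₂ ∨ (i₂ : ℕ) + 1 = i₁)) : ContainsSpider G k :=
  ⟨z, fun j i => W (leg j i), fun j i heq => hz ⟨leg j i, ⟨Nat.zero_le _, hle j i⟩, heq⟩,
    fun j₁ i₁ j₂ i₂ heq => hinj j₁ i₁ j₂ i₂ (hW.injOn (hle j₁ i₁) (hle j₂ i₂) heq), hadj_z,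
    fun j₁ i₁ j₂ i₂ => (hW.adj_iff (hle j₁ i₁) (hle j₂ i₂)).trans (hadj j₁ i₁ j₂ i₂)⟩

/-- The legs run along `W` backwards from `W p`, forwards from `W q` and backwards from `W n`. -/
theorem IsInducedPath.containsSpider (hW : IsInducedPath G W n) (hz : z ∉ W '' Icc 0 n)
    (hadj_z : ∀ i ≤ n, G.Adj z (W i) → i ∈ Icc p q ∨ i = n) (hp : G.Adj z (W p))
    (hq : G.Adj z (W q)) (hn : G.Adj z (W n)) (hkp : k ≤ p + 1) (hpq : p + 2 ≤ q)
    (hqn : q + 2 * k ≤ n) : ContainsSpider G k := by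
  have adj_z_iff {t₀ t i : ℕ} (hadj : G.Adj z (W t₀)) (ht : t ≤ n) (hi : i = 0 → t = t₀)
      (hne : i ≠ 0 → t ∉ Icc p q ∧ t ≠ n) : G.Adj z (W t) ↔ i = 0 := by
    refine ⟨fun hzt => ?_, fun h0 => hi h0 ▸ hadj⟩
    by_contra h0
    exact (hadj_z t ht hzt).elim (hne h0).1 (hne h0).2
  refine hW.containsSpider_of_legs (leg := fun j i => ![p - i, q + i, n - i] j) ?_ hz ?_ ?_ ?_
  · intro j ⟨i, hi⟩
    fin_cases j <;> simp <;> omega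
  · intro j ⟨i, hi⟩
    fin_cases j
    · exact adj_z_iff hp (by simp; omega) (by simp +contextual) (by simp; omega)
    · exact adj_z_iff hq (by simp; omega) (by simp +contextual) (by simp; omega)
    · exact adj_z_iff hn (by simp) (by simp +contextual) (by simp; omega)
  · intro j₁ ⟨i₁, h₁⟩ j₂ ⟨i₂, h₂⟩
    fin_cases j₁ <;> fin_cases j₂ <;> simp <;> omega
  · intro j₁ ⟨i₁, h₁⟩ j₂ ⟨i₂, h₂⟩
    fin_cases j₁ <;> fin_cases j₂ <;> simp <;> omega

end Spiders

section SpiderWalk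

variable {U : Type*} {G : SimpleGraph U} {C : Set U} {f g : ℕ → U} {m l c d : ℕ}
  {x y : U}

/-- The walk `f 0, …, f m, y, g l, g (l - 1), …` along the hole of a closed path pair. -/
def holeTail (f g : ℕ → U) (m l : ℕ) (y : U) : ℕ → U :=
  join f (m + 1) (join (fun _ => y) 1 fun t => g (l - t))

/-- The walk `g (c - 2), …, g 0, x, f 0, …, f m, y, g l, …` along the hole of a closed path pair;
its first `c` vertices are `g (c - 2), …, g 0, x`. -/
def holeWalk (f g : ℕ → U) (m l c : ℕ) (x y : U) : ℕ → U :=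
  join (fun i => join (fun _ => x) 1 g (c - 1 - i)) c (holeTail f g m l y)

theorem forall_reverse_join_singleton {P : ℕ → U → Prop} (hx : 0 < c → P (c - 1) x)
    (hg : ∀ t, t + 1 < c → P (c - 2 - t) (g t)) :
    ∀ i < c, P i (join (fun _ => x) 1 g (c - 1 - i)) := by
  intro i hi
  obtain rfl | hlt : i = c - 1 ∨ i < c - 1 := by omega
  · rw [Nat.sub_self, join_of_lt one_pos]
    exact hx (by omega)
  · obtain ⟨t, ht⟩ := Nat.exists_eq_add_of_lt hlt
    rw [show c - 1 - i = 1 + t by omega, join_add, show i = c - 2 - t by omega]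
    exact hg t (by omega)

theorem forall_holeTail {P : ℕ → U → Prop} {n : ℕ} (hf : ∀ t ≤ m, P t (f t))
    (hy : P (m + 1) y) (hg : ∀ t ≤ n, P (m + 1 + (1 + t)) (g (l - t))) :
    ∀ i ≤ m + 1 + (1 + n), P i (holeTail f g m l y i) := by
  refine forall_join (fun t ht => hf t (by omega))
    (forall_join (P := fun i => P (m + 1 + i)) (fun t ht => ?_) hg)
  obtain rfl := Nat.lt_one_iff.1 ht
  exact hy

theorem forall_holeWalk {P : ℕ → U → Prop} {n : ℕ} (hx : 0 < c → P (c - 1) x)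
    (hg : ∀ t, t + 1 < c → P (c - 2 - t) (g t)) (hf : ∀ t ≤ m, P (c + t) (f t))
    (hy : P (c + (m + 1)) y) (hg' : ∀ t ≤ n, P (c + (m + 1 + (1 + t))) (g (l - t))) :
    ∀ i ≤ c + (m + 1 + (1 + n)), P i (holeWalk f g m l c x y i) := by
  exact forall_join (forall_reverse_join_singleton hx hg)
    (forall_holeTail (P := fun i => P (c + i)) hf hy hg')

theorem holeWalk_left {t : ℕ} (ht : t ≤ m) : holeWalk f g m l c x y (c + t) = f t := by
  rw [holeWalk, join_add, holeTail, join_of_lt (by omega)]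

theorem holeWalk_right (t : ℕ) :
    holeWalk f g m l c x y (c + (m + 1 + (1 + t))) = g (l - t) := by
  rw [holeWalk, join_add, holeTail, join_add, join_add]

theorem IsPathPair.ne_and_adj_iff_of_attachedOnlyAt (h : IsPathPair G C f m g l) {v : U} {s t : ℕ}
    (hv : v ∈ attachedOnlyAt G C f m s) (ht : t ≤ m) : v ≠ f t ∧ (G.Adj v (f t) ↔ t = s) := by
  refine ⟨fun heq => h.notMem_left hv.1 ⟨t, ⟨t.zero_le, ht⟩, heq.symm⟩, fun hvt => ?_, ?_⟩
  · exact le_antisymm (hv.2.mem_Icc t ht hvt).2 (hv.2.mem_Icc t ht hvt).1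
  · rintro rfl
    exact hv.2.adj_lo

namespace IsClosedPathPair

theorem isInducedPath_holeTail (h : IsClosedPathPair G C f m g l x y) :
    IsInducedPath G (holeTail f g m l y) (m + 1 + (1 + l)) := by
  have hy := h.reverse.right_zero
  refine .join h.path_left (h.path_right.reverse.join_singleton
    (h.reverse.swap.notMem_left hy.1) hy.2) fun i hi => ?_
  refine forall_join (P := fun j v => f i ≠ v ∧ (G.Adj (f i) v ↔ i + 1 = m + 1 ∧ j = 0))
    (fun j hj => ?_) fun t ht => ?_
  · have := h.ne_and_adj_iff_of_attachedOnlyAt h.left_length (t := i) (by omega)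
    rw [G.adj_comm, this.2]
    exact ⟨this.1.symm, by omega⟩
  · have hfg := h.anticomplete (f i) (mem_image_of_mem f ⟨i.zero_le, by omega⟩) (g (l - t))
      (mem_image_of_mem g ⟨Nat.zero_le _, by omega⟩)
    exact ⟨hfg.1, iff_of_false hfg.2 (by omega)⟩

theorem isInducedPath_holeWalk (h : IsClosedPathPair G C f m g l x y) (hcd : c ≤ d) (hd : d ≤ l) :
    IsInducedPath G (holeWalk f g m l c x y) (c + (m + 1 + (1 + (l - d)))) := by
  have hx := h.right_zero
  have path_x := h.path_right.join_singleton (h.swap.notMem_left hx.1) hx.2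
  refine .join (path_x.mono (by omega : c - 1 ≤ _)).reverse
    (h.isInducedPath_holeTail.mono (by omega))
    (forall_reverse_join_singleton (P := fun i v => ∀ j ≤ m + 1 + (1 + (l - d)),
      v ≠ holeTail f g m l y j ∧
      (G.Adj v (holeTail f g m l y j) ↔ i + 1 = c ∧ j = 0))
      (fun hc => ?_) fun s hs => ?_)
  · refine forall_holeTail (P := fun j v => x ≠ v ∧ (G.Adj x v ↔ c - 1 + 1 = c ∧ j = 0))
      (fun t ht => ?_) ?_ fun t ht => ?_
    · have := h.ne_and_adj_iff_of_attachedOnlyAt h.left_zero (t := t) (by omega)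
      exact ⟨this.1, this.2.trans (by omega)⟩
    · have := h.compl_adj hx.1 h.right_length.1 h.ne
      exact ⟨this.1, iff_of_false this.2 (by omega)⟩
    · have := h.swap.ne_and_adj_iff_of_attachedOnlyAt hx (t := l - t) (by omega)
      exact ⟨this.1, this.2.trans (by omega)⟩
  · refine forall_holeTail
      (P := fun j v => g s ≠ v ∧ (G.Adj (g s) v ↔ c - 2 - s + 1 = c ∧ j = 0))
      (fun t ht => ?_) ?_ fun t ht => ?_
    · have := h.anticomplete.symm (g s) (mem_image_of_mem g ⟨s.zero_le, by omega⟩) (f t)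
        (mem_image_of_mem f ⟨t.zero_le, by omega⟩)
      exact ⟨this.1, iff_of_false this.2 (by omega)⟩
    · have := h.swap.ne_and_adj_iff_of_attachedOnlyAt h.right_length (t := s) (by omega)
      rw [G.adj_comm, this.2]
      exact ⟨this.1.symm, by omega⟩
    · have := h.path_right.compl_adj (i := s) (j := l - t) (by omega) (by omega)
      exact ⟨this.1, iff_of_false this.2 (by omega)⟩

end IsClosedPathPair

end SpiderWalk

section RungSpider

variable {U : Type} {G : SimpleGraph U} {C : Set U} {f g : ℕ → U} {m l : ℕ} {x y z : U}
  {a b c d k : ℕ}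

namespace IsClosedPathPair

theorem adj_holeWalk (h : IsClosedPathPair G C f m g l x y)
    (hz : IsRung G C f m g l x y z a b c d) :
    ∀ i ≤ c + (m + 1 + (1 + (l - d))), z ≠ holeWalk f g m l c x y i ∧
      (G.Adj z (holeWalk f g m l c x y i) →
        i ∈ Icc (c + a) (c + b) ∨ i = c + (m + 1 + (1 + (l - d)))) := by
  have hle := hz.right.le
  have hdl := hz.right.hi_le
  have ne_left {t : ℕ} (ht : t ≤ m) : z ≠ f t := fun heq =>
    h.notMem_left hz.mem ⟨t, ⟨t.zero_le, ht⟩, heq.symm⟩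
  have ne_right {t : ℕ} (ht : t ≤ l) : z ≠ g t := fun heq =>
    h.swap.notMem_left hz.mem ⟨t, ⟨t.zero_le, ht⟩, heq.symm⟩
  refine forall_holeWalk (P := fun i v => z ≠ v ∧ (G.Adj z v →
      i ∈ Icc (c + a) (c + b) ∨ i = c + (m + 1 + (1 + (l - d)))))
    (fun _ => ?_) (fun t ht => ?_) (fun t ht => ?_) ?_ fun t ht => ?_
  · exact ⟨hz.ne_x.symm, fun hzx => absurd hzx
      (h.compl_adj hz.mem h.left_zero.1 hz.ne_x.symm).2⟩
  · exact ⟨ne_right (by omega), fun hzt =>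
      absurd (hz.right.mem_Icc t (by omega) hzt).1 (by omega)⟩
  · refine ⟨ne_left ht, fun hzt => .inl ?_⟩
    have := hz.left.mem_Icc t ht hzt
    exact ⟨by have := this.1; omega, by have := this.2; omega⟩
  · exact ⟨hz.ne_y.symm, fun hzy => absurd hzy
      (h.compl_adj hz.mem h.left_length.1 hz.ne_y.symm).2⟩
  · refine ⟨ne_right (by omega), fun hzt => .inr ?_⟩
    have := (hz.right.mem_Icc (l - t) (by omega) hzt).2
    omega

theorem containsSpider_of_isRung (h : IsClosedPathPair G C f m g l x y) (hG : G.CliqueFree 3)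
    (hz : IsRung G C f m g l x y z a b c d) (hab : a ≠ b) (hk : k ≤ a + c + 1)
    (hk' : 2 * k ≤ (m - b) + (l - d) + 2) : ContainsSpider G k := by
  have hle := hz.left.le
  have hbm := hz.left.hi_le
  have hdl := hz.right.hi_le
  have hgap := hz.left.hi_ne_lo_succ hG h.path_left
  have hadj := h.adj_holeWalk hz
  refine (h.isInducedPath_holeWalk hz.right.le hdl).containsSpider (z := z) (p := c + a)
    (q := c + b) ?_ (fun i hi => (hadj i hi).2) ?_ ?_ ?_ (by omega) (by omega) (by omega)
  · rintro ⟨i, hi, heq⟩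
    exact (hadj i hi.2).1 heq.symm
  · rw [holeWalk_left (by omega)]
    exact hz.left.adj_lo
  · rw [holeWalk_left hbm]
    exact hz.left.adj_hi
  · rw [holeWalk_right, Nat.sub_sub_self hdl]
    exact hz.right.adj_hi

end IsClosedPathPair

end RungSpider

section Separators

theorem ncard_setOf_lt_le_of_injOn {α : Type*} {Z : Set α} {φ : α → ℕ} {n : ℕ}
    (hφ : InjOn φ Z) : {z ∈ Z | φ z < n}.ncard ≤ n := by
  calc {z ∈ Z | φ z < n}.ncard ≤ (Iio n).ncard :=
        ncard_le_ncard_of_injOn φ (fun z hz => hz.2) (hφ.mono (sep_subset Z _)) (finite_Iio n)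
    _ = n := by simp

theorem exists_le_and_le_of_injOn {α : Type*} {Z : Set α} {φ ψ : α → ℕ} {n : ℕ} (hφ : InjOn φ Z)
    (hψ : InjOn ψ Z) (hZ : 2 * n < Z.ncard) : ∃ z ∈ Z, n ≤ φ z ∧ n ≤ ψ z := by
  by_contra! hsmall
  have hfin : Z.Finite := finite_of_ncard_ne_zero (by omega)
  have hcover : Z ⊆ {z ∈ Z | φ z < n} ∪ {z ∈ Z | ψ z < n} := fun z hz =>
    (lt_or_ge (φ z) n).imp (⟨hz, ·⟩) fun h => ⟨hz, hsmall z hz h⟩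
  have := ncard_le_ncard hcover ((hfin.sep _).union (hfin.sep _))
  have := ncard_union_le {z ∈ Z | φ z < n} {z ∈ Z | ψ z < n}
  have := ncard_setOf_lt_le_of_injOn (n := n) hφ
  have := ncard_setOf_lt_le_of_injOn (n := n) hψ
  omega

variable {U : Type} {G : SimpleGraph U} {C : Set U} {f g : ℕ → U} {m l k : ℕ} {x y z w : U}
  {a b c d a' b' c' d' : ℕ}

namespace IsClosedPathPair

theorem lo_add_two_le_hi (h : IsClosedPathPair G C f m g l x y) (hT : ¬ ContainsTheta G)
    (hG : G.CliqueFree 3) (hz : IsRung G C f m g l x y z a b c d) : a + c + 2 ≤ b + d := by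
  have := hz.left.hi_ne_lo_succ hG h.path_left
  have := hz.right.hi_ne_lo_succ hG h.path_right
  have := h.lo_ne_hi hT hz
  have := hz.left.le
  have := hz.right.le
  omega

theorem half_ne_half (h : IsClosedPathPair G C f m g l x y) (hT : ¬ ContainsTheta G)
    (hG : G.CliqueFree 3) (hz : IsRung G C f m g l x y z a b c d)
    (hw : IsRung G C f m g l x y w a' b' c' d') (hzw : z ≠ w) :
    (a + c) / 2 ≠ (a' + c') / 2 ∧ ((m - b) + (l - d)) / 2 ≠ ((m - b') + (l - d')) / 2 := by
  have := h.hi_le_lo_or_hi_le_lo hT hG hz hw hzw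
  have := h.lo_add_two_le_hi hT hG hz
  have := h.lo_add_two_le_hi hT hG hw
  have := hz.left.hi_le
  have := hz.right.hi_le
  have := hw.left.hi_le
  have := hw.right.hi_le
  omega

/-- Distinct rungs differ in both halved distances, so at each end of the hole fewer than `k` rungs
are too close to it to be the centre of a spider. -/
theorem containsSpider (h : IsClosedPathPair G C f m g l x y) (hT : ¬ ContainsTheta G)
    (hG : G.CliqueFree 3) (hk : 1 ≤ k) (hC : 2 * k < C.ncard) : ContainsSpider G k := by
  choose! a b c d hrung using fun z (hz : z ∈ C \ {x, y}) => h.exists_isRung hz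
  have hsize : 2 * (k - 1) < (C \ {x, y}).ncard := by
    have := ncard_le_ncard_sdiff_add_ncard C {x, y}
    have := ncard_pair h.ne
    omega
  obtain ⟨z, hz, hlo, hhi⟩ := exists_le_and_le_of_injOn (φ := fun z => (a z + c z) / 2)
    (ψ := fun z => ((m - b z) + (l - d z)) / 2)
    (fun z hz w hw heq => by_contra fun hzw =>
      (h.half_ne_half hT hG (hrung z hz) (hrung w hw) hzw).1 heq)
    (fun z hz w hw heq => by_contra fun hzw =>
      (h.half_ne_half hT hG (hrung z hz) (hrung w hw) hzw).2 heq) hsize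
  obtain hab | hcd := h.lo_ne_hi hT (hrung z hz)
  · exact h.containsSpider_of_isRung hG (hrung z hz) hab (by omega) (by omega)
  · exact h.swap.containsSpider_of_isRung hG (hrung z hz).swap hcd (by omega) (by omega)

end IsClosedPathPair

theorem ncard_le_two_mul_of_isIndepSet [Finite U] (hT : ¬ ContainsTheta G)
    (hG : G.CliqueFree 3) (hk : 1 ≤ k) (hS : ¬ ContainsSpider G k) (hC : G.IsIndepSet C)
    {A B : Set U} (hA : PreconnectedOn G A) (hB : PreconnectedOn G B) (hAB : Anticomplete G A B)
    (hAC : ∀ c ∈ C, HasNeighborIn G A c) (hBC : ∀ c ∈ C, HasNeighborIn G B c) :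
    C.ncard ≤ 2 * k := by
  by_contra! hcard
  have hne : C.Nonempty := nonempty_of_ncard_ne_zero (by omega)
  obtain ⟨A', hA', minA⟩ := exists_isMinimalConnector hA hAC
  obtain ⟨B', hB', minB⟩ := exists_isMinimalConnector hB hBC
  have hAB' := hAB.mono hA' hB'
  obtain ⟨m, f, hf, rfl⟩ := minA.exists_isInducedPath hT hG hC hne hAB' minB.preconnectedOn
    minB.hasNeighborIn
  obtain ⟨l, g, hg, rfl⟩ := minB.exists_isInducedPath hT hG hC hne hAB'.symm minA.preconnectedOn
    minA.hasNeighborIn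
  have hpair : IsPathPair G C f m g l :=
    ⟨hC, hf, hg, hAB', minA.hasNeighborIn, minB.hasNeighborIn⟩
  obtain ⟨g', x, y, hclosed⟩ := hpair.exists_isClosedPathPair hT hG (by omega)
    (minA.nonempty_attachedOnlyAt_zero hf) (minA.nonempty_attachedOnlyAt_length hf)
    (minB.nonempty_attachedOnlyAt_zero hg) (minB.nonempty_attachedOnlyAt_length hg)
  exact hS (hclosed.containsSpider hT hG hk hcard)

end Separators

/-! ### Ramsey numbers and sizes of separators -/

section Ramsey

variable {U : Type*} {G : SimpleGraph U} {X : Finset U} {n t : ℕ}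

theorem exists_isNIndepSet_of_lt_card (hG : G.CliqueFree 3) (hX : (t - 1) * t < X.card) :
    ∃ I ⊆ X, G.IsNIndepSet t I := by
  classical
  obtain ⟨I, hI, hmax⟩ := Finset.exists_max_image
    (X.powerset.filter fun J : Finset U => G.IsIndepSet J)
    Finset.card ⟨∅, by simp⟩
  simp only [Finset.mem_filter, Finset.mem_powerset] at hI hmax
  suffices hIt : t ≤ I.card by
    obtain ⟨J, hJI, hJ⟩ := Finset.exists_subset_card_eq hIt
    exact ⟨J, hJI.trans hI.1, hI.2.mono (by exact_mod_cast hJI), hJ⟩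
  have card_neighbors_le (v : U) : {x ∈ X | G.Adj v x}.card ≤ I.card :=
    hmax _ ⟨Finset.filter_subset _ _, (isIndepSet_neighborSet_of_triangleFree G hG v).mono
      fun x hx => (Finset.mem_filter.1 hx).2⟩
  have dominated : X ⊆ I.biUnion fun v => insert v {x ∈ X | G.Adj v x} := by
    intro x hx
    by_contra h
    simp only [Finset.mem_biUnion, Finset.mem_insert, Finset.mem_filter, not_exists, not_and,
      not_or] at h
    have hxI : x ∉ I := fun hxI => (h x hxI).1 rfl
    have := hmax (insert x I) ⟨Finset.insert_subset hx hI.1, by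
      rw [Finset.coe_insert]
      exact Set.Pairwise.insert hI.2 fun v hv _ =>
        ⟨fun hxv => (h v hv).2 hx hxv.symm, (h v hv).2 hx⟩⟩
    rw [Finset.card_insert_of_notMem hxI] at this
    omega
  have card_le : X.card ≤ I.card * (I.card + 1) :=
    (Finset.card_le_card dominated).trans <| Finset.card_biUnion_le_card_mul _ _ _ fun v _ =>
      (Finset.card_insert_le _ _).trans (Nat.succ_le_succ (card_neighbors_le v))
  by_contra! hlt
  have : I.card * (I.card + 1) ≤ (t - 1) * t := Nat.mul_le_mul (by omega) (by omega)
  omega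

theorem ramseyProp_ramseyNumber_three (t : ℕ) : RamseyProp (ramseyNumber 3 t) 3 t := by
  refine Nat.sInf_mem (s := {n | RamseyProp n 3 t}) ⟨(t - 1) * t + 1, fun H => ?_⟩
  by_cases hH : H.CliqueFree 3
  · obtain ⟨I, -, hI⟩ :=
      exists_isNIndepSet_of_lt_card (X := Finset.univ) (t := t) hH (by simp)
    exact .inr ⟨I, (isNClique_compl _).2 hI⟩
  · simp only [CliqueFree, not_forall, not_not] at hH
    exact .inl hH

theorem exists_isNIndepSet_of_ramseyNumber_le (hG : G.CliqueFree 3)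
    (hX : ramseyNumber 3 t ≤ X.card) : ∃ I ⊆ X, G.IsNIndepSet t I := by
  obtain ⟨Y, hYX, hY⟩ := Finset.exists_subset_card_eq hX
  let φ : Fin (ramseyNumber 3 t) ↪ U :=
    (Y.equivFinOfCardEq hY).symm.toEmbedding.trans (.subtype _)
  rcases ramseyProp_ramseyNumber_three t (G.comap φ) with ⟨K, hK⟩ | ⟨I, hI⟩
  · exact (hG.comap (Embedding.comap φ G).isContained K hK).elim
  · refine ⟨I.map φ, fun x hx => ?_, ?_, by rw [Finset.card_map, hI.card_eq]⟩
    · obtain ⟨i, -, rfl⟩ := Finset.mem_map.1 hx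
      exact hYX (Subtype.prop _)
    · rw [Finset.coe_map]
      rintro _ ⟨i, hi, rfl⟩ _ ⟨j, hj, rfl⟩ hij
      exact ((isNClique_compl _).1 hI).isIndepSet hi hj (ne_of_apply_ne φ hij)

/-- A perfect matching has no triangle, and its independent sets contain at most half of the
vertices. -/
theorem two_mul_le_of_ramseyProp_three (h : RamseyProp n 3 t) : 2 * t ≤ n + 1 := by
  let matching : SimpleGraph (Fin n) := (SimpleGraph.comap (fun i : Fin n => (i : ℕ) / 2) ⊤)ᶜ
  have adj_iff (i j : Fin n) : matching.Adj i j ↔ i ≠ j ∧ (i : ℕ) / 2 = (j : ℕ) / 2 := by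
    simp [matching]
  rcases h matching with ⟨K, hK⟩ | ⟨I, hI⟩
  · obtain ⟨a, b, c, hab, hac, hbc, -⟩ := is3Clique_iff.1 hK
    simp only [adj_iff, ne_eq, Fin.ext_iff] at hab hac hbc
    omega
  · have card_le : I.card ≤ (Finset.range ((n + 1) / 2)).card := by
      refine Finset.card_le_card_of_injOn (fun i : Fin n => (i : ℕ) / 2) (fun i _ => ?_) ?_
      · simp only [Finset.coe_range, mem_Iio]
        omega
      · intro i hi j hj hij
        by_contra hne
        exact ((isNClique_compl _).1 hI).isIndepSet hi hj hne ((adj_iff i j).2 ⟨hne, hij⟩)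
    rw [Finset.card_range, hI.card_eq] at card_le
    omega

/-- Fewer than `R` vertices can have neighbours in both of two anticomplete connected sets.
In particular this bounds the size of the minimal separators of `G`. -/
def SeparatorsSmallerThan (G : SimpleGraph U) (R : ℕ) : Prop :=
  ∀ ⦃A B : Set U⦄ ⦃C : Finset U⦄, PreconnectedOn G A → PreconnectedOn G B → Anticomplete G A B →
    (∀ c ∈ C, HasNeighborIn G A c) → (∀ c ∈ C, HasNeighborIn G B c) → C.card < R

theorem separatorsSmallerThan_ramseyNumber {U : Type} [Finite U] {G : SimpleGraph U} {k t : ℕ}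
    (hT : ¬ ContainsTheta G) (hG : G.CliqueFree 3) (hk : 1 ≤ k) (hS : ¬ ContainsSpider G k)
    (ht : 2 * k < t) : SeparatorsSmallerThan G (ramseyNumber 3 t) := by
  intro A B C hA hB hAB hAC hBC
  by_contra! hC
  obtain ⟨I, hIC, hI⟩ := exists_isNIndepSet_of_ramseyNumber_le hG hC
  have := ncard_le_two_mul_of_isIndepSet hT hG hk hS hI.isIndepSet hA hB hAB
    (fun c hc => hAC c (hIC hc)) fun c hc => hBC c (hIC hc)
  rw [ncard_coe_finset, hI.card_eq] at this
  omega

end Ramsey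

/-! ### Tree decompositions in which every clique lies in a bag -/

section Trees

variable {U ι κ : Type*} {S : SimpleGraph ι} {T : SimpleGraph κ} {D : Set ι}

theorem isTree_sum_sup_edge [Finite ι] [Finite κ] (hS : S.IsTree) (hT : T.IsTree) (i : ι) (j : κ) :
    ((S ⊕g T) ⊔ edge (Sum.inl i) (Sum.inr j)).IsTree := by
  have new_edge : s(Sum.inl i, Sum.inr j) ∉ (S ⊕g T).edgeSet := by simp
  have card_edgeSet : Nat.card ((S ⊕g T) ⊔ edge (Sum.inl i) (Sum.inr j)).edgeSet =
      Nat.card S.edgeSet + Nat.card T.edgeSet + 1 := by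
    rw [edgeSet_sup, edgeSet_edge_of_ne Sum.inl_ne_inr, union_singleton, Nat.card_coe_set_eq,
      ncard_insert_of_notMem new_edge, ← Nat.card_coe_set_eq, Nat.card_congr edgeSetSumEquiv,
      Nat.card_sum]
  have hS' := (isTree_iff_connected_and_card.1 hS).2
  have hT' := (isTree_iff_connected_and_card.1 hT).2
  refine isTree_iff_connected_and_card.2 ⟨hS.connected.sum_sup_edge hT.connected, ?_⟩
  rw [card_edgeSet, Nat.card_sum]
  omega

theorem PreconnectedOn.image (hD : PreconnectedOn S D) (f : S →g T) : PreconnectedOn T (f '' D) :=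
  Preconnected.map (induceHom f (mapsTo_image f D)) (by
    rintro ⟨_, d, hd, rfl⟩
    exact ⟨⟨d, hd⟩, rfl⟩) hD

theorem PreconnectedOn.mem_of_mem_support (hD : PreconnectedOn S D) (hS : S.IsTree) {i j x : ι}
    (hi : i ∈ D) (hj : j ∈ D) {p : S.Walk i j} (hp : p.IsPath) (hx : x ∈ p.support) : x ∈ D := by
  obtain ⟨q, hq⟩ := (hD ⟨i, hi⟩ ⟨j, hj⟩).exists_isPath
  have hpq := (hS.existsUnique_path i j).unique hp
    (hq.map (f := (Embedding.induce D).toHom) Subtype.val_injective)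
  subst hpq
  obtain ⟨⟨y, hy⟩, -, rfl⟩ := List.mem_map.1 (Walk.support_map _ q ▸ hx)
  exact hy

/-- `T` and the bags `B i ⊆ X` form a tree decomposition of the restriction of the graph `H` to
`X`, except that every clique of `H` in `X`, and not just every edge, is asked to lie in a bag. -/
structure IsCliqueTree (H : SimpleGraph U) (X : Finset U) (T : SimpleGraph ι) (B : ι → Finset U) :
    Prop where
  isTree : T.IsTree
  subset (i : ι) : B i ⊆ X
  exists_subset_of_isClique ⦃K : Finset U⦄ : K ⊆ X → H.IsClique K → ∃ i, K ⊆ B i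
  preconnectedOn (v : U) : PreconnectedOn T {i | v ∈ B i}

theorem IsCliqueTree.singleton (H : SimpleGraph U) (X : Finset U) :
    IsCliqueTree H X (⊥ : SimpleGraph Unit) fun _ => X where
  isTree := .of_subsingleton
  subset _ := subset_rfl
  exists_subset_of_isClique _ hK _ := ⟨(), hK⟩
  preconnectedOn _ := .of_subsingleton

theorem IsCliqueTree.glue [Finite ι] [Finite κ] {H₁ H₂ H : SimpleGraph U} {X₁ X₂ X Y : Finset U}
    {B : ι → Finset U} {C : κ → Finset U} (h₁ : IsCliqueTree H₁ X₁ S B)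
    (h₂ : IsCliqueTree H₂ X₂ T C) (hX₁ : X₁ ⊆ X) (hX₂ : X₂ ⊆ X)
    (hY : ∀ v ∈ X₁, v ∈ X₂ → v ∈ Y)
    (hK : ∀ K ⊆ X, H.IsClique K → (K ⊆ X₁ ∧ H₁.IsClique K) ∨ (K ⊆ X₂ ∧ H₂.IsClique K))
    {i : ι} {j : κ} (hi : Y ⊆ B i) (hj : Y ⊆ C j) :
    IsCliqueTree H X ((S ⊕g T) ⊔ edge (Sum.inl i) (Sum.inr j)) (Sum.elim B C) where
  isTree := isTree_sum_sup_edge h₁.isTree h₂.isTree i j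
  subset := Sum.rec (fun i => (h₁.subset i).trans hX₁) fun j => (h₂.subset j).trans hX₂
  exists_subset_of_isClique K hKX hKc := by
    rcases hK K hKX hKc with ⟨hKX₁, hKc₁⟩ | ⟨hKX₂, hKc₂⟩
    · exact (h₁.exists_subset_of_isClique hKX₁ hKc₁).elim fun i hi => ⟨.inl i, hi⟩
    · exact (h₂.exists_subset_of_isClique hKX₂ hKc₂).elim fun j hj => ⟨.inr j, hj⟩
  preconnectedOn v := by
    have bags_eq : {b | v ∈ Sum.elim B C b} = .inl '' {i | v ∈ B i} ∪ .inr '' {j | v ∈ C j} := by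
      ext (i | j) <;> simp
    have left := (h₁.preconnectedOn v).image <|
      (Hom.ofLE le_sup_left : S ⊕g T →g (S ⊕g T) ⊔ edge (Sum.inl i) (Sum.inr j)).comp
        Embedding.sumInl.toHom
    have right := (h₂.preconnectedOn v).image <|
      (Hom.ofLE le_sup_left : S ⊕g T →g (S ⊕g T) ⊔ edge (Sum.inl i) (Sum.inr j)).comp
        Embedding.sumInr.toHom
    rw [bags_eq]
    rcases eq_empty_or_nonempty {i | v ∈ B i} with hB | ⟨i', hi'⟩
    · rw [hB, image_empty, empty_union]
      exact right
    rcases eq_empty_or_nonempty {j | v ∈ C j} with hC | ⟨j', hj'⟩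
    · rw [hC, image_empty, union_empty]
      exact left
    have hvY : v ∈ Y := hY v (h₁.subset i' hi') (h₂.subset j' hj')
    exact left.union_of_adj right ⟨_, ⟨i, hi hvY, rfl⟩, _, ⟨j, hj hvY, rfl⟩,
      .inr ((edge_adj ..).2 ⟨.inl ⟨rfl, rfl⟩, Sum.inl_ne_inr⟩)⟩

end Trees

section Treewidth

variable {U ι κ : Type} {S : SimpleGraph ι} {T : SimpleGraph κ} {G H : SimpleGraph U}
  {X : Finset U} {N : ℕ}

theorem IsCliqueTree.isTreeDecomp [Fintype U] {B : ι → Finset U}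
    (h : IsCliqueTree H Finset.univ S B) (hGH : G ≤ H) : IsTreeDecomp G S B := by
  classical
  refine ⟨h.isTree, fun v => ?_, fun u v huv => ?_, fun v i j hi hj p hp x hx =>
    (h.preconnectedOn v).mem_of_mem_support h.isTree hi hj hp hx⟩
  · obtain ⟨i, hi⟩ := h.exists_subset_of_isClique ({v} : Finset U).subset_univ (by simp)
    exact ⟨i, hi (by simp)⟩
  · obtain ⟨i, hi⟩ := h.exists_subset_of_isClique ({u, v} : Finset U).subset_univ
      (by simpa using fun _ => hGH huv)
    exact ⟨i, hi (by simp), hi (by simp)⟩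

theorem isTreeDecomp_comp_iso {B : κ → Finset U} (h : IsTreeDecomp G T B) (e : S ≃g T) :
    IsTreeDecomp G S (B ∘ e) := by
  obtain ⟨hT, hv, huv, hp⟩ := h
  refine ⟨e.isTree_iff.2 hT, fun v => ?_, fun u v h => ?_, fun v i j hi hj p hpath x hx => ?_⟩
  · exact e.surjective.exists.1 (hv v)
  · exact e.surjective.exists.1 (huv u v h)
  · exact hp v _ _ hi hj (p.map e.toHom) (hpath.map e.injective) _
      (p.support_map e.toHom ▸ List.mem_map_of_mem hx)

/-- `H` has, on the vertex set `X`, a finite clique tree with bags of size at most `N`. -/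
def HasCliqueTree (H : SimpleGraph U) (X : Finset U) (N : ℕ) : Prop :=
  ∃ (ι : Type) (_ : Finite ι) (T : SimpleGraph ι) (B : ι → Finset U),
    IsCliqueTree H X T B ∧ ∀ i, (B i).card ≤ N

theorem hasCliqueTree_of_card_le (H : SimpleGraph U) (hX : X.card ≤ N) : HasCliqueTree H X N :=
  ⟨Unit, inferInstance, ⊥, _, .singleton H X, fun _ => hX⟩

theorem HasCliqueTree.glue {H₁ H₂ : SimpleGraph U} {X₁ X₂ Y : Finset U}
    (h₁ : HasCliqueTree H₁ X₁ N) (h₂ : HasCliqueTree H₂ X₂ N) (hX₁ : X₁ ⊆ X) (hX₂ : X₂ ⊆ X)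
    (hYX₁ : Y ⊆ X₁) (hYX₂ : Y ⊆ X₂) (hY : ∀ v ∈ X₁, v ∈ X₂ → v ∈ Y)
    (hY₁ : H₁.IsClique Y) (hY₂ : H₂.IsClique Y)
    (hK : ∀ K ⊆ X, H.IsClique K → (K ⊆ X₁ ∧ H₁.IsClique K) ∨ (K ⊆ X₂ ∧ H₂.IsClique K)) :
    HasCliqueTree H X N := by
  obtain ⟨ι, _, S, B, hB, hBN⟩ := h₁
  obtain ⟨κ, _, T, C, hC, hCN⟩ := h₂
  obtain ⟨i, hi⟩ := hB.exists_subset_of_isClique hYX₁ hY₁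
  obtain ⟨j, hj⟩ := hC.exists_subset_of_isClique hYX₂ hY₂
  exact ⟨ι ⊕ κ, inferInstance, _, _, hB.glue hC hX₁ hX₂ hY hK hi hj, Sum.rec hBN hCN⟩

theorem HasCliqueTree.treewidth_le [Fintype U] (h : HasCliqueTree H Finset.univ N) (hGH : G ≤ H) :
    treewidth G ≤ N - 1 := by
  obtain ⟨ι, _, T, B, hB, hBN⟩ := h
  obtain ⟨m, ⟨e⟩⟩ := Finite.exists_equiv_fin ι
  exact Nat.sInf_le ⟨m, T.map e.toEmbedding, B ∘ (Iso.map e T).symm,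
    isTreeDecomp_comp_iso (hB.isTreeDecomp hGH) _, fun i => (hBN _).trans (by omega)⟩

end Treewidth

section Counting

variable {U : Type*} {I : Finset U} {s : ℕ}

theorem card_le_three_mul (P Q S : U → U → U → Prop) [∀ u v w, Decidable (P u v w)]
    [∀ u v w, Decidable (Q u v w)] [∀ u v w, Decidable (S u v w)]
    (cover : ∀ u ∈ I, ∀ v ∈ I, ∀ w ∈ I, P u v w ∨ Q u v w ∨ S u v w)
    (hP : ∀ u ∈ I, ∀ v ∈ I, (I.filter fun w => P u v w).card ≤ s)
    (hQ : ∀ u ∈ I, ∀ w ∈ I, (I.filter fun v => Q u v w).card ≤ s)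
    (hS : ∀ v ∈ I, ∀ w ∈ I, (I.filter fun u => S u v w).card ≤ s) : I.card ≤ 3 * s := by
  rcases I.eq_empty_or_nonempty with rfl | hI
  · simp
  have card_triples_le {f : U → U → ℕ} (hf : ∀ a ∈ I, ∀ b ∈ I, f a b ≤ s) :
      ∑ a ∈ I, ∑ b ∈ I, f a b ≤ I.card * I.card * s := by
    calc ∑ a ∈ I, ∑ b ∈ I, f a b ≤ ∑ _a ∈ I, ∑ _b ∈ I, s :=
          Finset.sum_le_sum fun a ha => Finset.sum_le_sum fun b hb => hf a ha b hb
      _ = I.card * I.card * s := by simp [mul_assoc]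
  have one_le {u v w : U} (hu : u ∈ I) (hv : v ∈ I) (hw : w ∈ I) :
      1 ≤ (if P u v w then 1 else 0) + (if Q u v w then 1 else 0) + if S u v w then 1 else 0 := by
    rcases cover u hu v hv w hw with h | h | h <;> rw [if_pos h] <;> omega
  have count : I.card * I.card * I.card ≤ I.card * I.card * (3 * s) :=
    calc I.card * I.card * I.card
        = ∑ _u ∈ I, ∑ _v ∈ I, ∑ _w ∈ I, 1 := by simp [mul_assoc]
      _ ≤ ∑ u ∈ I, ∑ v ∈ I, ∑ w ∈ I,
          ((if P u v w then 1 else 0) + (if Q u v w then 1 else 0) + if S u v w then 1 else 0) :=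
        Finset.sum_le_sum fun u hu => Finset.sum_le_sum fun v hv => Finset.sum_le_sum
          fun w hw => one_le hu hv hw
      _ = (∑ u ∈ I, ∑ v ∈ I, (I.filter fun w => P u v w).card) +
            (∑ u ∈ I, ∑ w ∈ I, (I.filter fun v => Q u v w).card) +
            ∑ v ∈ I, ∑ w ∈ I, (I.filter fun u => S u v w).card := by
        simp only [Finset.sum_add_distrib, Finset.card_filter]
        congr 1
        · exact congrArg _ (Finset.sum_congr rfl fun u _ => Finset.sum_comm)
        · rw [Finset.sum_comm]
          exact Finset.sum_congr rfl fun v _ => Finset.sum_comm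
      _ ≤ I.card * I.card * (3 * s) := by
        linarith [card_triples_le hP, card_triples_le hQ, card_triples_le hS]
  exact Nat.le_of_mul_le_mul_left count (Nat.mul_pos hI.card_pos hI.card_pos)

end Counting

/-! ### Torsos and components -/

section Components

variable {U : Type*} {G : SimpleGraph U} {D X Y : Set U} {u v w y : U}

theorem preconnectedOn_iUnion {ι : Sort*} {K : ι → Set U} (hK : ∀ i, PreconnectedOn G (K i))
    (hv : ∀ i, v ∈ K i) : PreconnectedOn G (⋃ i, K i) := by
  refine preconnectedOn_of_subset_of_closed fun A ⟨x, hx, hxA⟩ hA => ?_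
  have subset_of_meets (i : ι) (hi : (K i ∩ A).Nonempty) : K i ⊆ A :=
    (hK i).subset_of_closed hi fun a ha d hd => hA a ha d (mem_iUnion_of_mem i hd)
  obtain ⟨i, hi⟩ := mem_iUnion.1 hx
  have hvA : v ∈ A := subset_of_meets i ⟨x, hi, hxA⟩ (hv i)
  exact iUnion_subset fun j => subset_of_meets j ⟨v, hv j, hvA⟩

theorem anticomplete_iUnion_iUnion {ι κ : Sort*} {K : ι → Set U} {L : κ → Set U}
    (h : ∀ i j, Anticomplete G (K i) (L j)) : Anticomplete G (⋃ i, K i) (⋃ j, L j) := by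
  intro a ha b hb
  obtain ⟨i, hi⟩ := mem_iUnion.1 ha
  obtain ⟨j, hj⟩ := mem_iUnion.1 hb
  exact h i j a hi b hj

/-- The vertex set of the connected component of `u` in `G - Y`; it is empty if `u ∈ Y`. -/
def component (G : SimpleGraph U) (Y : Set U) (u : U) : Set U :=
  ⋃ D : {D : Set U // PreconnectedOn G D ∧ u ∈ D ∧ Disjoint D Y}, D

theorem PreconnectedOn.subset_component (hD : PreconnectedOn G D) (hu : u ∈ D)
    (hDY : Disjoint D Y) : D ⊆ component G Y u :=
  subset_iUnion_of_subset ⟨D, hD, hu, hDY⟩ subset_rfl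

theorem preconnectedOn_component (G : SimpleGraph U) (Y : Set U) (u : U) :
    PreconnectedOn G (component G Y u) :=
  preconnectedOn_iUnion (fun D => D.2.1) fun D => D.2.2.1

theorem disjoint_component (G : SimpleGraph U) (Y : Set U) (u : U) :
    Disjoint (component G Y u) Y :=
  disjoint_iUnion_left.2 fun D => D.2.2.2

theorem notMem_component (hy : y ∈ Y) : y ∉ component G Y u :=
  fun h => (disjoint_component G Y u).le_bot ⟨h, hy⟩

theorem mem_component_self (hu : u ∉ Y) : u ∈ component G Y u :=
  (PreconnectedOn.singleton u).subset_component rfl (disjoint_singleton_left.2 hu) rfl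

theorem self_mem_component_of_mem (hv : v ∈ component G Y u) : u ∈ component G Y u := by
  obtain ⟨D, -⟩ := mem_iUnion.1 hv
  exact mem_iUnion_of_mem D D.2.2.1

theorem mem_component_of_adj (hv : v ∈ component G Y u) (hvw : G.Adj v w) (hw : w ∉ Y) :
    w ∈ component G Y u := by
  have hconn : PreconnectedOn G (insert w (component G Y u)) :=
    (preconnectedOn_component G Y u).insert ⟨v, hv, hvw.symm⟩
  refine hconn.subset_component (.inr (self_mem_component_of_mem hv)) ?_ (.inl rfl)
  exact disjoint_insert_left.2 ⟨hw, disjoint_component G Y u⟩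

theorem PreconnectedOn.subset_component_of_inter_nonempty (hD : PreconnectedOn G D)
    (hDY : Disjoint D Y) (h : (D ∩ component G Y u).Nonempty) : D ⊆ component G Y u :=
  hD.subset_of_closed h fun _ ha _ hd had =>
    mem_component_of_adj ha had (hDY.notMem_of_mem_left hd)

theorem PreconnectedOn.subset_component_of_hasNeighborIn (hD : PreconnectedOn G D)
    (hDY : Disjoint D Y) (hv : v ∈ component G Y u) (hvD : HasNeighborIn G D v) :
    D ⊆ component G Y u := by
  obtain ⟨d, hd, hvd⟩ := hvD
  exact hD.subset_component_of_inter_nonempty hDY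
    ⟨d, hd, mem_component_of_adj hv hvd (hDY.notMem_of_mem_left hd)⟩

theorem mem_component_of_hasNeighborIn (hv : HasNeighborIn G (component G Y u) v) (hvY : v ∉ Y) :
    v ∈ component G Y u := by
  obtain ⟨d, hd, hvd⟩ := hv
  exact mem_component_of_adj hd hvd.symm hvY

theorem anticomplete_component (hv : v ∉ component G Y u) :
    Anticomplete G (component G Y u) (component G Y v) := by
  have hdisj : ∀ b ∈ component G Y v, b ∉ component G Y u := fun b hb hbu =>
    hv ((preconnectedOn_component G Y v).subset_component_of_inter_nonempty
      (disjoint_component G Y v) ⟨b, hb, hbu⟩ (self_mem_component_of_mem hb))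
  refine fun a ha b hb => ⟨fun hab => hdisj b hb (hab ▸ ha), fun hab => hdisj b hb ?_⟩
  exact mem_component_of_adj ha hab fun hbY => notMem_component hbY hb

theorem component_eq_of_mem (hv : v ∈ component G Y u) : component G Y v = component G Y u := by
  have hvY : v ∉ Y := fun h => notMem_component h hv
  refine subset_antisymm ?_ ?_
  · exact (preconnectedOn_component G Y v).subset_component_of_inter_nonempty
      (disjoint_component G Y v) ⟨v, mem_component_self hvY, hv⟩
  · exact (preconnectedOn_component G Y u).subset_component hv (disjoint_component G Y u)

theorem component_sdiff_singleton_subset (hu : u ∉ Y)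
    (hy : ¬ HasNeighborIn G (component G Y u) y) :
    component G (Y \ {y}) u ⊆ component G Y u := by
  refine (preconnectedOn_component G (Y \ {y}) u).subset_of_closed
    ⟨u, mem_component_self fun h => hu h.1, mem_component_self hu⟩ fun a ha d hd had => ?_
  refine mem_component_of_adj ha had fun hdY => notMem_component (Y := Y \ {y}) ⟨hdY, ?_⟩ hd
  rintro rfl
  exact hy ⟨a, ha, had.symm⟩

/-- The graph obtained from `G` by joining any two vertices that have neighbours in a common
connected set avoiding `X`. Restricted to `X`, this is the usual torso of `X` in `G`. -/
def torso (G : SimpleGraph U) (X : Set U) : SimpleGraph U where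
  Adj u v := u ≠ v ∧ (G.Adj u v ∨ ∃ D, Disjoint D X ∧ Connects G D u v)
  symm := ⟨fun _ _ h => ⟨h.1.symm, h.2.imp .symm fun ⟨D, hD, hc⟩ => ⟨D, hD, hc.symm⟩⟩⟩

theorem le_torso (G : SimpleGraph U) (X : Set U) : G ≤ torso G X :=
  fun _ _ h => ⟨h.ne, .inl h⟩

theorem torso_anti (h : Y ⊆ X) : torso G X ≤ torso G Y :=
  fun _ _ ⟨hne, huv⟩ => ⟨hne, huv.imp_right fun ⟨D, hD, hc⟩ => ⟨D, hD.mono_right h, hc⟩⟩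

theorem isClique_torso (hD : PreconnectedOn G D) (hDX : Disjoint D X)
    (hY : ∀ y ∈ Y, HasNeighborIn G D y) : (torso G X).IsClique Y :=
  fun y hy z hz hyz => ⟨hyz, .inr ⟨D, hDX, hD, hY y hy, hY z hz⟩⟩

theorem Connects.exists_component (h : Connects G D u v) (hDX : Disjoint D X) :
    ∃ d, Connects G (component G X d) u v := by
  obtain ⟨d, hd⟩ := h.left.nonempty
  have hsub := h.preconnectedOn.subset_component hd hDX
  exact ⟨d, preconnectedOn_component G X d, h.left.mono hsub, h.right.mono hsub⟩

theorem mem_component_of_torso_adj (hYX : Y ⊆ X) (hv : v ∈ component G Y u)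
    (hvw : (torso G X).Adj v w) (hw : w ∉ Y) : w ∈ component G Y u := by
  rcases hvw.2 with hadj | ⟨D, hDX, hD⟩
  · exact mem_component_of_adj hv hadj hw
  · have hsub := hD.preconnectedOn.subset_component_of_hasNeighborIn (hDX.mono_right hYX) hv hD.left
    exact mem_component_of_hasNeighborIn (hD.right.mono hsub) hw

theorem notMem_component_of_not_torso_adj (huv : u ≠ v) (h : ¬ (torso G X).Adj u v) :
    v ∉ component G (X \ {u, v}) u := by
  intro hv
  obtain ⟨n, f, hmem, hf, hfu, hfv⟩ :=
    (preconnectedOn_component G (X \ {u, v}) u).exists_isInducedPath (· = u) (· = v)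
      ⟨u, self_mem_component_of_mem hv, rfl⟩ ⟨v, hv, rfl⟩
  have hu₀ : f 0 = u := (hfu 0 (Nat.zero_le n)).2 rfl
  have hvn : f n = v := (hfv n le_rfl).2 rfl
  have hn : n ≠ 0 := by
    rintro rfl
    exact huv (hu₀.symm.trans hvn)
  by_cases hn₁ : n = 1
  · subst hn₁
    exact h ⟨huv, .inl (hu₀ ▸ hvn ▸ hf.adj one_pos)⟩
  refine h ⟨huv, .inr ⟨f '' Icc 1 (n - 1), ?_, hf.preconnectedOn 1 (by omega),
    ⟨f 1, ⟨1, ⟨le_rfl, by omega⟩, rfl⟩, ?_⟩, f (n - 1), ⟨n - 1, ⟨by omega, le_rfl⟩, rfl⟩, ?_⟩⟩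
  · refine disjoint_left.2 ?_
    rintro _ ⟨i, ⟨hi₁, hin⟩, rfl⟩ hiX
    refine notMem_component (Y := X \ {u, v}) ⟨hiX, ?_⟩ (hmem i (by omega))
    rintro (hiu | hiv)
    · have := (hfu i (by omega)).1 hiu
      omega
    · have := (hfv i (by omega)).1 hiv
      omega
  · exact hu₀ ▸ hf.adj (by omega)
  · have := hf.adj (i := n - 1) (by omega)
    rw [Nat.sub_add_cancel (by omega), hvn] at this
    exact this.symm

end Components

/-! ### The decomposition along minimal separators -/

section Decomposition

variable {U : Type*} {G : SimpleGraph U} {X Y : Finset U} {R : ℕ} {u v w z : U}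

/-- Every connected set of vertices outside `X` is attached to fewer than `R` vertices of `X`. -/
def HasSmallAttachments (G : SimpleGraph U) (X : Finset U) (R : ℕ) : Prop :=
  ∀ ⦃D : Set U⦄ ⦃C : Finset U⦄, PreconnectedOn G D → Disjoint D X → C ⊆ X →
    (∀ c ∈ C, HasNeighborIn G D c) → C.card < R

theorem SeparatorsSmallerThan.pos (hR : SeparatorsSmallerThan G R) : 0 < R :=
  hR (C := ∅) .empty .empty .empty_left (by simp) (by simp)

theorem SeparatorsSmallerThan.card_lt_of_connects (hR : SeparatorsSmallerThan G R) {X : Set U}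
    (hv : v ∈ X) (hw : w ∈ X) (hvw : Gᶜ.Adj v w) {C : Finset U} {d e : U → U}
    (hd : ∀ u ∈ C, Connects G (component G X (d u)) u v)
    (he : ∀ u ∈ C, Connects G (component G X (e u)) u w)
    (hdw : ∀ u ∈ C, ¬ HasNeighborIn G (component G X (d u)) w)
    (hev : ∀ u ∈ C, ¬ HasNeighborIn G (component G X (e u)) v) : C.card < R := by
  have hA : PreconnectedOn G (⋃ u : C, insert v (component G X (d u))) :=
    preconnectedOn_iUnion (fun u => (preconnectedOn_component G X _).insert (hd u u.2).right)
      fun u => .inl rfl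
  have hB : PreconnectedOn G (⋃ u : C, insert w (component G X (e u))) :=
    preconnectedOn_iUnion (fun u => (preconnectedOn_component G X _).insert (he u u.2).right)
      fun u => .inl rfl
  have components_anticomplete (a b : C) :
      Anticomplete G (component G X (d a)) (component G X (e b)) := by
    refine anticomplete_component fun hmem => hdw a a.2 ?_
    rw [← component_eq_of_mem hmem]
    exact (he b b.2).right
  refine hR hA hB (anticomplete_iUnion_iUnion fun a b => .insert_insert hvw
    (compl_adj_of_not_hasNeighborIn (hev b b.2) (notMem_component hv))
    (compl_adj_of_not_hasNeighborIn (hdw a a.2) (notMem_component hw))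
    (components_anticomplete a b)) (fun c hc => (hd c hc).left.mono ?_)
    fun c hc => (he c hc).left.mono ?_
  · exact (subset_insert _ _).trans (subset_iUnion_of_subset (⟨c, hc⟩ : C) subset_rfl)
  · exact (subset_insert _ _).trans (subset_iUnion_of_subset (⟨c, hc⟩ : C) subset_rfl)

theorem card_filter_eq_or_le {I : Finset U} {p : U → Prop} [DecidableEq U] [DecidablePred p] (a : U)
    (hp : (I.filter p).card < R) : (I.filter fun x => x = a ∨ p x).card ≤ R := by
  have hsub : (I.filter fun x => x = a ∨ p x) ⊆ insert a (I.filter p) := by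
    intro x hx
    simp only [Finset.mem_filter, Finset.mem_insert] at hx ⊢
    exact hx.2.imp_right fun hpx => ⟨hx.1, hpx⟩
  exact (Finset.card_le_card hsub).trans ((Finset.card_insert_le _ _).trans hp)

theorem exists_connects_component_of_isClique_torso {X I : Set U} (hI : G.IsIndepSet I)
    (hc : (torso G X).IsClique I) :
    ∃ d : U → U → U, ∀ u ∈ I, ∀ v ∈ I, u ≠ v → Connects G (component G X (d u v)) u v := by
  have exists_component (u v : U) :
      ∃ d, u ∈ I → v ∈ I → u ≠ v → Connects G (component G X d) u v := by
    by_cases h : u ∈ I ∧ v ∈ I ∧ u ≠ v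
    · obtain ⟨hu, hv, huv⟩ := h
      obtain ⟨D, hDX, hD⟩ := (hc hu hv huv).2.resolve_left (hI hu hv huv)
      exact (hD.exists_component hDX).imp fun d hd _ _ _ => hd
    · exact ⟨u, fun hu hv huv => (h ⟨hu, hv, huv⟩).elim⟩
  choose d hd using exists_component
  exact ⟨d, fun u hu v hv => hd u v hu hv⟩

open Classical in
theorem card_le_of_isIndepSet_of_isClique_torso (hR : SeparatorsSmallerThan G R)
    (hX : HasSmallAttachments G X R) {I : Finset U} (hIX : I ⊆ X) (hI : G.IsIndepSet I)
    (hc : (torso G X).IsClique I) : I.card ≤ 3 * R := by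
  obtain ⟨d, hd⟩ := exists_connects_component_of_isClique_torso hI hc
  have few_attached (u v : U) :
      (I.filter fun w => HasNeighborIn G (component G X (d u v)) w).card < R :=
    hX (preconnectedOn_component G X _) (disjoint_component G X _)
      ((Finset.filter_subset ..).trans hIX) fun c hc => (Finset.mem_filter.1 hc).2
  have few_separated (v w : U) (hv : v ∈ I) (hw : w ∈ I) :
      (I.filter fun u => (w ≠ u ∧ u ≠ v ∧ v ≠ w) ∧
        ¬ HasNeighborIn G (component G X (d u v)) w ∧
        ¬ HasNeighborIn G (component G X (d u w)) v).card < R := by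
    by_cases hvw : v = w
    · simpa [hvw] using hR.pos
    refine hR.card_lt_of_connects (hIX hv) (hIX hw) ⟨hvw, hI hv hw hvw⟩ (d := (d · v))
      (e := (d · w)) ?_ ?_ ?_ ?_ <;> intro u hu <;>
      obtain ⟨huI, ⟨hwu, huv, -⟩, hnw, hnv⟩ := Finset.mem_filter.1 hu
    exacts [hd u huI v hv huv, hd u huI w hw hwu.symm, hnw, hnv]
  refine card_le_three_mul
    (fun u v w => w = u ∨ HasNeighborIn G (component G X (d u v)) w)
    (fun u v w => v = w ∨ HasNeighborIn G (component G X (d u w)) v)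
    (fun u v w => u = v ∨ ((w ≠ u ∧ u ≠ v ∧ v ≠ w) ∧
      ¬ HasNeighborIn G (component G X (d u v)) w ∧
      ¬ HasNeighborIn G (component G X (d u w)) v)) ?_ ?_ ?_ ?_
  · intro u _ v _ w _
    tauto
  · exact fun u _ v _ => card_filter_eq_or_le u (few_attached u v)
  · exact fun u _ w _ => card_filter_eq_or_le w (few_attached u w)
  · exact fun v hv w hw => card_filter_eq_or_le v (few_separated v w hv hw)

theorem card_le_of_isClique_torso (hG : G.CliqueFree 3) (hR : SeparatorsSmallerThan G R)
    (hX : HasSmallAttachments G X R) (hc : (torso G X).IsClique X) :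
    X.card ≤ 3 * R * (3 * R + 1) := by
  by_contra! hcard
  obtain ⟨I, hIX, hI⟩ := exists_isNIndepSet_of_lt_card (t := 3 * R + 1) hG hcard
  have hcard_le := card_le_of_isIndepSet_of_isClique_torso hR hX hIX hI.isIndepSet
    (hc.subset (Finset.coe_subset.2 hIX))
  have := hI.card_eq
  omega

open Classical in
theorem exists_minimal_separator (huv : u ≠ v) (h : ¬ (torso G X).Adj u v) :
    ∃ Y ⊆ X, u ∉ Y ∧ v ∉ Y ∧ v ∉ component G Y u ∧
      (∀ y ∈ Y, HasNeighborIn G (component G Y u) y) ∧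
      ∀ y ∈ Y, HasNeighborIn G (component G Y v) y := by
  obtain ⟨Y, hYX, ⟨huY, hvY, hsep⟩, hmin⟩ := exists_minimal_le_of_wellFoundedLT
    (fun Y : Finset U => u ∉ Y ∧ v ∉ Y ∧ v ∉ component G Y u) (X \ {u, v})
    ⟨by simp, by simp, by simpa using notMem_component_of_not_torso_adj huv h⟩
  have erase_not_separating (y : U) (hy : y ∈ Y) : v ∈ component G (Y \ {y} : Set U) u := by
    by_contra hsep'
    refine Finset.notMem_erase y Y (hmin ⟨?_, ?_, ?_⟩ (Finset.erase_subset y Y) hy)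
    · exact fun h => huY (Finset.mem_of_mem_erase h)
    · exact fun h => hvY (Finset.mem_of_mem_erase h)
    · rwa [Finset.coe_erase]
  refine ⟨Y, hYX.trans Finset.sdiff_subset, huY, hvY, hsep, fun y hy => ?_, fun y hy => ?_⟩
  · by_contra hno
    exact hsep (component_sdiff_singleton_subset huY hno (erase_not_separating y hy))
  · by_contra hno
    have hvu := erase_not_separating y hy
    have huv' := component_sdiff_singleton_subset hvY hno
      (component_eq_of_mem hvu ▸ self_mem_component_of_mem hvu)
    exact hsep (component_eq_of_mem huv' ▸ mem_component_self hvY)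

open Classical in
theorem HasSmallAttachments.filter_mem_component_union (hX : HasSmallAttachments G X R)
    (hYX : Y ⊆ X) (hY : Y.card < R) :
    HasSmallAttachments G (X.filter (· ∈ component G Y z) ∪ Y) R := by
  intro D C hD hDX' hC hCD
  by_cases hDX : Disjoint D X
  · exact hX hD hDX (hC.trans (Finset.union_subset (Finset.filter_subset _ _) hYX)) hCD
  obtain ⟨d, hdD, hdX⟩ := not_disjoint_iff.1 hDX
  have hDY : Disjoint D Y := hDX'.mono_right (by simp)
  refine (Finset.card_le_card fun c hc => ?_).trans_lt hY
  rcases Finset.mem_union.1 (hC hc) with hcA | hcY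
  · have hDA := hD.subset_component_of_hasNeighborIn hDY (Finset.mem_filter.1 hcA).2 (hCD c hc)
    exact (hDX'.notMem_of_mem_left hdD (by simpa using .inl ⟨hdX, hDA hdD⟩)).elim
  · exact hcY

open Classical in
theorem HasSmallAttachments.filter_notMem_component (hX : HasSmallAttachments G X R)
    (hYX : Y ⊆ X) (hY : Y.card < R) :
    HasSmallAttachments G (X.filter (· ∉ component G Y z)) R := by
  intro D C hD hDX' hC hCD
  by_cases hDX : Disjoint D X
  · exact hX hD hDX (hC.trans (Finset.filter_subset _ _)) hCD
  obtain ⟨d, hdD, hdX⟩ := not_disjoint_iff.1 hDX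
  have hdA : d ∈ component G Y z := by
    by_contra hdA
    exact hDX'.notMem_of_mem_left hdD (by simpa using ⟨hdX, hdA⟩)
  have hDY : Disjoint D Y := hDX'.mono_right fun y hy => by
    simpa using ⟨hYX hy, notMem_component hy⟩
  have hDA := hD.subset_component_of_inter_nonempty hDY ⟨d, hdD, hdA⟩
  refine (Finset.card_le_card fun c hc => ?_).trans_lt hY
  by_contra hcY
  exact (Finset.mem_filter.1 (hC hc)).2
    (mem_component_of_hasNeighborIn ((hCD c hc).mono hDA) hcY)

open Classical in
theorem subset_or_subset_of_isClique_torso (hYX : Y ⊆ X) {K : Finset U} (hKX : K ⊆ X)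
    (hK : (torso G X).IsClique K) :
    K ⊆ X.filter (· ∈ component G Y z) ∪ Y ∨ K ⊆ X.filter (· ∉ component G Y z) := by
  by_cases hKA : ∃ a ∈ K, a ∈ component G Y z
  · obtain ⟨a, haK, haA⟩ := hKA
    refine .inl fun b hb => ?_
    by_cases hbY : b ∈ Y
    · exact Finset.mem_union_right _ hbY
    refine Finset.mem_union_left _ (Finset.mem_filter.2 ⟨hKX hb, ?_⟩)
    rcases eq_or_ne a b with rfl | hab
    · exact haA
    · exact mem_component_of_torso_adj (Finset.coe_subset.2 hYX) haA (hK haK hb hab) hbY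
  · exact .inr fun b hb => Finset.mem_filter.2 ⟨hKX hb, fun hbA => hKA ⟨b, hb, hbA⟩⟩

end Decomposition

section Main

variable {U : Type} {G : SimpleGraph U} {R : ℕ}

open Classical in
theorem hasCliqueTree_torso_of_minimal_separator {N : ℕ} {X Y : Finset U} {u v : U} (hYX : Y ⊆ X)
    (hsep : v ∉ component G Y u) (hYu : ∀ y ∈ Y, HasNeighborIn G (component G Y u) y)
    (hYv : ∀ y ∈ Y, HasNeighborIn G (component G Y v) y)
    (h₁ : HasCliqueTree (torso G ↑(X.filter (· ∈ component G Y u) ∪ Y))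
      (X.filter (· ∈ component G Y u) ∪ Y) N)
    (h₂ : HasCliqueTree (torso G ↑(X.filter (· ∉ component G Y u)))
      (X.filter (· ∉ component G Y u)) N) :
    HasCliqueTree (torso G X) X N := by
  have hX₁ : X.filter (· ∈ component G Y u) ∪ Y ⊆ X :=
    Finset.union_subset (Finset.filter_subset _ _) hYX
  have hX₂ : X.filter (· ∉ component G Y u) ⊆ X := Finset.filter_subset _ _
  have hanti := anticomplete_component hsep
  refine h₁.glue h₂ hX₁ hX₂ Finset.subset_union_right (fun y hy => ?_) (fun x hx₁ hx₂ => ?_)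
    (isClique_torso (preconnectedOn_component G Y v) ?_ hYv)
    (isClique_torso (preconnectedOn_component G Y u) ?_ hYu) fun K hKX hK => ?_
  · exact Finset.mem_filter.2 ⟨hYX hy, notMem_component hy⟩
  · refine (Finset.mem_union.1 hx₁).resolve_left fun hx => ?_
    exact (Finset.mem_filter.1 hx₂).2 (Finset.mem_filter.1 hx).2
  · refine disjoint_left.2 fun b hbv hb => ?_
    rcases Finset.mem_union.1 hb with hbu | hbY
    · exact (hanti b (Finset.mem_filter.1 hbu).2 b hbv).ne rfl
    · exact notMem_component hbY hbv
  · exact disjoint_left.2 fun a hau ha => (Finset.mem_filter.1 ha).2 hau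
  · have hle {Z : Finset U} (hZ : Z ⊆ X) : (torso G Z).IsClique K :=
      hK.mono (torso_anti (Finset.coe_subset.2 hZ))
    exact (subset_or_subset_of_isClique_torso hYX hKX hK).imp (⟨·, hle hX₁⟩) (⟨·, hle hX₂⟩)

theorem HasSmallAttachments.hasCliqueTree_torso (hG : G.CliqueFree 3)
    (hR : SeparatorsSmallerThan G R) {X : Finset U} (hX : HasSmallAttachments G X R) :
    HasCliqueTree (torso G X) X (3 * R * (3 * R + 1)) := by
  classical
  induction X using Finset.strongInduction with
  | H X ih =>
    by_cases hc : (torso G X).IsClique X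
    · exact hasCliqueTree_of_card_le _ (card_le_of_isClique_torso hG hR hX hc)
    obtain ⟨u, hu, v, hv, huv, hnadj⟩ :
        ∃ u ∈ X, ∃ v ∈ X, u ≠ v ∧ ¬ (torso G X).Adj u v := by
      simpa [IsClique, Set.Pairwise] using hc
    obtain ⟨Y, hYX, huY, hvY, hsep, hYu, hYv⟩ := exists_minimal_separator huv hnadj
    have hYR : Y.card < R := hR (preconnectedOn_component G Y u) (preconnectedOn_component G Y v)
      (anticomplete_component hsep) hYu hYv
    refine hasCliqueTree_torso_of_minimal_separator hYX hsep hYu hYv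
      (ih _ ?_ (hX.filter_mem_component_union hYX hYR))
      (ih _ ?_ (hX.filter_notMem_component hYX hYR))
    · refine (Finset.ssubset_iff_of_subset
        (Finset.union_subset (Finset.filter_subset _ _) hYX)).2 ⟨v, hv, ?_⟩
      simp [hsep, hvY]
    · refine (Finset.ssubset_iff_of_subset (Finset.filter_subset _ _)).2 ⟨u, hu, ?_⟩
      simp [mem_component_self (Finset.mem_coe.not.2 huY)]

theorem treewidth_le_of_separatorsSmallerThan [Finite U] (hG : G.CliqueFree 3)
    (hR : SeparatorsSmallerThan G R) : treewidth G ≤ 3 * R * (3 * R + 1) - 1 := by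
  have := Fintype.ofFinite U
  have univ_hasSmallAttachments : HasSmallAttachments G Finset.univ R := by
    intro D C _ hD _ hCD
    have hD_empty : D = ∅ := by simpa using hD
    have hC_empty : C = ∅ := Finset.eq_empty_of_forall_notMem fun c hc =>
      (hD_empty ▸ (hCD c hc).nonempty).ne_empty rfl
    simpa [hC_empty] using hR.pos
  exact (univ_hasSmallAttachments.hasCliqueTree_torso hG hR).treewidth_le (le_torso G _)

end Main

end ThetaFree

/-- For `k ≥ 1`, every (theta, triangle, `S_{k,k,k}`)-free graph has
treewidth at most `2·R(3, 4k-1)³ - 1`. -/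
theorem statement14 (G : SimpleGraph V) (k : ℕ) (hk : 1 ≤ k)
    (hTheta : ¬ContainsTheta G) (hTri : G.CliqueFree 3) (hS : ¬ContainsSpider G k) :
    treewidth G ≤ 2 * (ramseyNumber 3 (4 * k - 1)) ^ 3 - 1 := by
  have five_le : 5 ≤ ramseyNumber 3 (4 * k - 1) := by
    have := ThetaFree.two_mul_le_of_ramseyProp_three
      (ThetaFree.ramseyProp_ramseyNumber_three (4 * k - 1))
    omega
  have small_separators : ThetaFree.SeparatorsSmallerThan G (ramseyNumber 3 (4 * k - 1)) :=
    ThetaFree.separatorsSmallerThan_ramseyNumber hTheta hTri hk hS (by omega)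
  generalize ramseyNumber 3 (4 * k - 1) = R at five_le small_separators ⊢
  calc treewidth G ≤ 3 * R * (3 * R + 1) - 1 :=
        ThetaFree.treewidth_le_of_separatorsSmallerThan hTri small_separators
    _ ≤ 2 * R ^ 3 - 1 :=
        Nat.sub_le_sub_right
          (by nlinarith [Nat.mul_le_mul_left (R * R) five_le, Nat.mul_le_mul_left R five_le]) 1
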